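/- Let n be a positive integer and let D_n be a partition of ℝ into intervals that refines the lacunary partition Δ = {ε[2^k,2^{k+1})}, partitioning each ω ∈ Δ into at most n subintervals. Let m = Σ_{ω∈D_n} a_ω 1_ω for bounded coefficients a_ω. Then for all 1 < p < ∞ and 1 < q < ∞ with |1/p − 1/2| < 1/q, there is a constant C_{p,q}, independent of n and the partition, such that ‖A_m‖_{L^p(ℝ)→L^p(ℝ)} ≤ C_{p,q} n^{1/q} sup_{ω∈D_n} |a_ω|. -/

import Mathlib

open MeasureTheory Complex
open scoped ENNReal NNReal

/-- The Fourier transform `f̂(ξ) = ∫ f(x) e^{-i x ξ} dx`. -/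
noncomputable def ft (f : ℝ → ℂ) (ξ : ℝ) : ℂ :=
  ∫ x : ℝ, f x * Complex.exp (-(Complex.I * (x : ℂ) * (ξ : ℂ)))

/-- The Fourier multiplier operator `A_m f(x) = ∫ m(ξ) f̂(ξ) e^{i x ξ} dξ`. -/
noncomputable def multOp (m : ℝ → ℂ) (f : ℝ → ℂ) (x : ℝ) : ℂ :=
  ∫ ξ : ℝ, m ξ * ft f ξ * Complex.exp (Complex.I * (ξ : ℂ) * (x : ℂ))

/-- The left endpoint of the lacunary interval `ε[2^k, 2^{k+1})`. -/
noncomputable def lacLo (k : ℤ) (ε : Bool) : ℝ :=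
  if ε then (2:ℝ) ^ k else -(2:ℝ) ^ (k + 1)

/-- The right endpoint of the lacunary interval `ε[2^k, 2^{k+1})`. -/
noncomputable def lacHi (k : ℤ) (ε : Bool) : ℝ :=
  if ε then (2:ℝ) ^ (k + 1) else -(2:ℝ) ^ k

/-!
Write `n^(1/q)` as an interpolation between two endpoints. On `L²` the operator norm is at most
`sup |a|`, with no loss in `n`. For large `p` the loss is `n^(1/2)`: Littlewood–Paley separates the
lacunary blocks, Cauchy–Schwarz over the at most `n` intervals of a block costs `n^(1/2)`, and the
square function of the remaining frequency projections is bounded on `L^p`, `p > 2`, by Rubio de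
Francia's inequality. Interpolating gives `n^(1/q)` for every `1/q > 1/2 - 1/p`, and duality covers
`p < 2`.

To work with kernels that decay, each interval is replaced by a smooth Whitney decomposition into
dyadic pieces shrinking towards its endpoints, and only finitely many pieces are kept; all bounds
are uniform in the truncation, and Fatou's lemma recovers the step function. The square function
inequalities are proved by a pointwise bound for the dyadic sharp oscillation of the square
function by the maximal function of `|f|²`, followed by a good-`λ` inequality.
-/

namespace Lacunary

open scoped FourierTransform

/-! ### Dyadic maximal functions -/

/-- The dyadic interval `[j 2^k, (j+1) 2^k)`. -/
def dyadic (k j : ℤ) : Set ℝ := Set.Ico (j * (2 : ℝ) ^ k) ((j + 1) * (2 : ℝ) ^ k)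

/-- The union of a dyadic interval and its two neighbours of the same length. -/
def dyadicTriple (k j : ℤ) : Set ℝ := Set.Ico ((j - 1) * (2 : ℝ) ^ k) ((j + 2) * (2 : ℝ) ^ k)

/-- The position of the dyadic interval of length `2^k` containing `x`. -/
noncomputable def dyadicIndex (k : ℤ) (x : ℝ) : ℤ := ⌊x / (2 : ℝ) ^ k⌋

/-- The length `2^k` as an extended nonnegative real. -/
noncomputable def dyadicLen (k : ℤ) : ℝ≥0∞ := ENNReal.ofReal ((2 : ℝ) ^ k)

lemma dyadicLen_ne_zero (k : ℤ) : dyadicLen k ≠ 0 := by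
  simpa [dyadicLen] using zpow_pos two_pos k

lemma dyadicLen_ne_top (k : ℤ) : dyadicLen k ≠ ∞ := by simp [dyadicLen]

lemma dyadicLen_succ (k : ℤ) : dyadicLen (k + 1) = 2 * dyadicLen k := by
  rw [dyadicLen, dyadicLen, zpow_add_one₀ two_ne_zero, mul_comm, ENNReal.ofReal_mul (by norm_num),
    ENNReal.ofReal_ofNat]

lemma mem_dyadic {k j : ℤ} {x : ℝ} : x ∈ dyadic k j ↔ dyadicIndex k x = j := by
  rw [dyadicIndex, Int.floor_eq_iff, le_div_iff₀ (by positivity),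
    div_lt_iff₀ (by positivity)]
  rfl

lemma mem_dyadic_self (k : ℤ) (x : ℝ) : x ∈ dyadic k (dyadicIndex k x) := mem_dyadic.2 rfl

lemma dyadicIndex_congr {k k' : ℤ} (h : k ≤ k') {x y : ℝ}
    (hxy : dyadicIndex k x = dyadicIndex k y) : dyadicIndex k' x = dyadicIndex k' y := by
  obtain ⟨n, rfl⟩ := Int.le.dest h
  have key : ∀ z : ℝ, dyadicIndex (k + n) z = dyadicIndex k z / ((2 ^ n : ℕ) : ℤ) := by
    intro z
    rw [dyadicIndex, dyadicIndex, ← Int.floor_div_natCast, zpow_add₀ two_ne_zero, ← div_div]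
    simp
  rw [key, key, hxy]

lemma dyadic_subset {k k' : ℤ} (h : k ≤ k') {x : ℝ} {j : ℤ} (hx : x ∈ dyadic k j) :
    dyadic k j ⊆ dyadic k' (dyadicIndex k' x) := by
  intro y hy
  exact mem_dyadic.2 (dyadicIndex_congr h ((mem_dyadic.1 hy).trans (mem_dyadic.1 hx).symm))

lemma measurableSet_dyadic (k j : ℤ) : MeasurableSet (dyadic k j) := measurableSet_Ico

lemma measurableSet_dyadicTriple (k j : ℤ) : MeasurableSet (dyadicTriple k j) := measurableSet_Ico

lemma volume_dyadic (k j : ℤ) : volume (dyadic k j) = dyadicLen k := by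
  rw [dyadic, Real.volume_Ico, dyadicLen]; ring_nf

lemma volume_dyadicTriple (k j : ℤ) : volume (dyadicTriple k j) = 3 * dyadicLen k := by
  rw [dyadicTriple, Real.volume_Ico, dyadicLen, ← ENNReal.ofReal_ofNat,
    ← ENNReal.ofReal_mul (by norm_num)]
  ring_nf

lemma dyadic_subset_dyadicTriple (k j : ℤ) : dyadic k j ⊆ dyadicTriple k j := by
  have : (0 : ℝ) < 2 ^ k := by positivity
  apply Set.Ico_subset_Ico <;> nlinarith

lemma dyadicTriple_eq_union (k j : ℤ) :
    dyadicTriple k j = dyadic k (j - 1) ∪ dyadic k j ∪ dyadic k (j + 1) := by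
  have : (0 : ℝ) < 2 ^ k := by positivity
  unfold dyadic dyadicTriple
  push_cast
  rw [sub_add_cancel, Set.Ico_union_Ico_eq_Ico (by nlinarith) (by nlinarith),
    Set.Ico_union_Ico_eq_Ico (by nlinarith) (by nlinarith)]
  ring_nf

/-- The maximal function whose averages at scale `k` run over the set that the family `I` attaches
to the dyadic interval of length `2^k` around `x`. -/
noncomputable def scaleMax (I : ℤ → ℤ → Set ℝ) (Φ : ℝ → ℝ≥0∞) (x : ℝ) : ℝ≥0∞ :=
  ⨆ k : ℤ, (∫⁻ y in I k (dyadicIndex k x), Φ y) / dyadicLen k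

/-- The dyadic maximal function. -/
noncomputable abbrev dyadicMax : (ℝ → ℝ≥0∞) → ℝ → ℝ≥0∞ := scaleMax dyadic

/-- The maximal function over triples of dyadic intervals, normalised by the length of the middle
interval. -/
noncomputable abbrev tripleMax : (ℝ → ℝ≥0∞) → ℝ → ℝ≥0∞ := scaleMax dyadicTriple

section

variable {I : ℤ → ℤ → Set ℝ} {Φ : ℝ → ℝ≥0∞} {c : ℝ≥0∞} {x : ℝ}

@[fun_prop]
lemma measurable_dyadicIndex (k : ℤ) : Measurable (dyadicIndex k) :=
  Int.measurable_floor.comp (measurable_id.div_const _)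

@[fun_prop]
lemma measurable_scaleMax (I : ℤ → ℤ → Set ℝ) (Φ : ℝ → ℝ≥0∞) : Measurable (scaleMax I Φ) :=
  Measurable.iSup fun k => (measurable_from_top (f := fun j : ℤ =>
    (∫⁻ y in I k j, Φ y) / dyadicLen k)).comp (measurable_dyadicIndex k)

lemma scaleMax_mono {Ψ : ℝ → ℝ≥0∞} (h : Φ ≤ Ψ) : scaleMax I Φ ≤ scaleMax I Ψ :=
  fun _ => iSup_mono fun _ => ENNReal.div_le_div_right (lintegral_mono h) _

lemma lt_scaleMax :
    c < scaleMax I Φ x ↔ ∃ k, c * dyadicLen k < ∫⁻ y in I k (dyadicIndex k x), Φ y := by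
  simp only [scaleMax, lt_iSup_iff]
  exact exists_congr fun k =>
    ENNReal.lt_div_iff_mul_lt (.inl (dyadicLen_ne_zero k)) (.inl (dyadicLen_ne_top k))

lemma setLIntegral_div_le_scaleMax (I : ℤ → ℤ → Set ℝ) (Φ : ℝ → ℝ≥0∞) (k : ℤ) (x : ℝ) :
    (∫⁻ y in I k (dyadicIndex k x), Φ y) / dyadicLen k ≤ scaleMax I Φ x :=
  le_iSup (fun k : ℤ => (∫⁻ y in I k (dyadicIndex k x), Φ y) / dyadicLen k) k

lemma setLIntegral_le_scaleMax_mul (I : ℤ → ℤ → Set ℝ) (Φ : ℝ → ℝ≥0∞) (k : ℤ) (x : ℝ) :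
    ∫⁻ y in I k (dyadicIndex k x), Φ y ≤ scaleMax I Φ x * dyadicLen k := by
  rw [← ENNReal.div_le_iff (dyadicLen_ne_zero k) (dyadicLen_ne_top k)]
  exact setLIntegral_div_le_scaleMax I Φ k x

lemma dyadicMax_le_tripleMax (Φ : ℝ → ℝ≥0∞) (x : ℝ) : dyadicMax Φ x ≤ tripleMax Φ x :=
  iSup_mono fun k => ENNReal.div_le_div_right
    (lintegral_mono_set (dyadic_subset_dyadicTriple k _)) _

lemma le_dyadicMax (hΦ : Continuous Φ) (x : ℝ) : Φ x ≤ dyadicMax Φ x := by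
  refine le_of_forall_lt_imp_le_of_dense fun c hc => ?_
  obtain ⟨δ, hδ, hball⟩ := Metric.isOpen_iff.1 (isOpen_lt continuous_const hΦ) x hc
  obtain ⟨n, hn⟩ := exists_pow_lt_of_lt_one hδ (show (1 / 2 : ℝ) < 1 by norm_num)
  have hnδ : (2 : ℝ) ^ (-(n : ℤ)) < δ := by simpa [zpow_neg] using hn
  refine le_trans ?_ (setLIntegral_div_le_scaleMax dyadic Φ (-(n : ℤ)) x)
  rw [ENNReal.le_div_iff_mul_le (.inl (dyadicLen_ne_zero _)) (.inl (dyadicLen_ne_top _)),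
    ← volume_dyadic _ (dyadicIndex (-(n : ℤ)) x), ← setLIntegral_const]
  refine setLIntegral_mono' (measurableSet_dyadic _ _) fun y hy => (hball ?_ : c < Φ y).le
  have hx := mem_dyadic_self (-(n : ℤ)) x
  simp only [dyadic, Set.mem_Ico] at hx hy
  rw [Metric.mem_ball, Real.dist_eq, abs_lt]
  constructor <;> linarith

lemma dyadicMax_le_indicator_add (hΦ : Measurable Φ) (c : ℝ≥0∞) (x : ℝ) :
    dyadicMax Φ x ≤ dyadicMax ({y | c < Φ y}.indicator Φ) x + c := by
  refine iSup_le fun k => ?_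
  set Q := dyadic k (dyadicIndex k x)
  have hset : MeasurableSet {y | c < Φ y} := measurableSet_lt measurable_const hΦ
  have hQ : ∫⁻ y in Q, Φ y ≤ (∫⁻ y in Q, {y | c < Φ y}.indicator Φ y) + c * dyadicLen k := by
    rw [← volume_dyadic k (dyadicIndex k x), ← setLIntegral_const,
      ← lintegral_add_left (hΦ.indicator hset)]
    refine lintegral_mono fun y => ?_
    by_cases h : c < Φ y
    · simp [h]
    · simp [h, not_lt.1 h]
  calc _ ≤ ((∫⁻ y in Q, {y | c < Φ y}.indicator Φ y) + c * dyadicLen k) / dyadicLen k :=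
        ENNReal.div_le_div_right hQ _
    _ = (∫⁻ y in Q, {y | c < Φ y}.indicator Φ y) / dyadicLen k + c := by
        rw [ENNReal.add_div, ENNReal.mul_div_cancel_right (dyadicLen_ne_zero k)
          (dyadicLen_ne_top k)]
    _ ≤ _ := add_le_add_left (setLIntegral_div_le_scaleMax dyadic _ k x) c

/-- The maximal dyadic intervals on which the average of `Φ` exceeds `c`, as pairs of a scale and
a position. -/
def stoppingIntervals (Φ : ℝ → ℝ≥0∞) (c : ℝ≥0∞) : Set (ℤ × ℤ) :=
  {q | c * dyadicLen q.1 < ∫⁻ y in dyadic q.1 q.2, Φ y ∧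
    ∀ k > q.1, ∀ x ∈ dyadic q.1 q.2,
      ∫⁻ y in dyadic k (dyadicIndex k x), Φ y ≤ c * dyadicLen k}

lemma exists_nat_forall_mul_dyadicLen_lt (hc : c ≠ 0) {T : ℝ≥0∞} (hT : T ≠ ∞) :
    ∃ N : ℕ, ∀ k : ℤ, c * dyadicLen k < T → k ≤ N := by
  obtain ⟨m, -, hm⟩ := ENNReal.exists_nat_pos_mul_gt hc hT
  refine ⟨m, fun k hk => ?_⟩
  by_contra! hlt
  refine (hk.trans hm).not_ge ?_
  rw [mul_comm]
  gcongr
  calc (m : ℝ≥0∞) = ENNReal.ofReal m := (ENNReal.ofReal_natCast m).symm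
    _ ≤ dyadicLen k := ENNReal.ofReal_le_ofReal ?_
  calc (m : ℝ) ≤ 2 ^ m := by exact_mod_cast Nat.lt_two_pow_self.le
    _ ≤ 2 ^ k := by rw [← zpow_natCast]; exact zpow_le_zpow_right₀ one_le_two hlt.le

lemma exists_mem_stoppingIntervals (hc : c ≠ 0) (hΦ : ∫⁻ y, Φ y ≠ ∞) {k : ℤ}
    (h : c * dyadicLen k < ∫⁻ y in dyadic k (dyadicIndex k x), Φ y) :
    ∃ k', k ≤ k' ∧ (k', dyadicIndex k' x) ∈ stoppingIntervals Φ c := by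
  obtain ⟨N, hN⟩ := exists_nat_forall_mul_dyadicLen_lt hc hΦ
  obtain ⟨k', hk', hmax⟩ := Int.exists_greatest_of_bdd (P := fun z : ℤ =>
    c * dyadicLen z < ∫⁻ y in dyadic z (dyadicIndex z x), Φ y)
    ⟨N, fun z hz => hN z (hz.trans_le (setLIntegral_le_lintegral _ _))⟩ ⟨k, h⟩
  refine ⟨k', hmax k h, hk', fun z hz y hy => ?_⟩
  by_contra! hlt
  rw [dyadicIndex_congr hz.le (mem_dyadic.1 hy)] at hlt
  exact (hmax z hlt).not_gt hz

lemma setOf_lt_dyadicMax_eq_iUnion (hc : c ≠ 0) (hΦ : ∫⁻ y, Φ y ≠ ∞) :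
    {x | c < dyadicMax Φ x} = ⋃ q : stoppingIntervals Φ c, dyadic q.1.1 q.1.2 := by
  ext x
  simp only [Set.mem_ofPred_eq, Set.mem_iUnion]
  constructor
  · intro hx
    obtain ⟨k, hk⟩ := lt_scaleMax.1 hx
    obtain ⟨k', -, hk'⟩ := exists_mem_stoppingIntervals hc hΦ hk
    exact ⟨⟨_, hk'⟩, mem_dyadic_self _ _⟩
  · rintro ⟨⟨⟨k, j⟩, hq⟩, hx⟩
    refine lt_scaleMax.2 ⟨k, ?_⟩
    rw [mem_dyadic.1 hx]
    exact hq.1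

lemma pairwise_disjoint_stoppingIntervals (Φ : ℝ → ℝ≥0∞) (c : ℝ≥0∞) :
    Pairwise (Function.onFun Disjoint fun q : stoppingIntervals Φ c => dyadic q.1.1 q.1.2) := by
  rintro ⟨⟨k, j⟩, hq⟩ ⟨⟨k', j'⟩, hq'⟩ hne
  rw [Function.onFun, Set.disjoint_left]
  intro x hx hx'
  simp only at hx hx'
  have e1 := mem_dyadic.1 hx
  have e2 := mem_dyadic.1 hx'
  rcases lt_trichotomy k k' with h | h | h
  · have := hq.2 k' h x hx
    rw [e2] at this
    exact absurd hq'.1 (not_lt.2 this)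
  · subst h
    exact hne (by simp [← e1, ← e2])
  · have := hq'.2 k h x hx'
    rw [e1] at this
    exact absurd hq.1 (not_lt.2 this)

lemma volume_lt_dyadicMax (hc : c ≠ 0) (hΦ : ∫⁻ y, Φ y ≠ ∞) :
    volume {x | c < dyadicMax Φ x} = ∑' q : stoppingIntervals Φ c, dyadicLen q.1.1 := by
  rw [setOf_lt_dyadicMax_eq_iUnion hc hΦ, measure_iUnion (pairwise_disjoint_stoppingIntervals Φ c)
    fun q => measurableSet_dyadic _ _]
  simp only [volume_dyadic]

lemma volume_le_of_forall_stoppingIntervals {ε : ℝ≥0∞} (hc : c ≠ 0) (hΦ : ∫⁻ y, Φ y ≠ ∞)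
    {A : Set ℝ} (hA : A ⊆ {x | c < dyadicMax Φ x})
    (h : ∀ q ∈ stoppingIntervals Φ c, volume (A ∩ dyadic q.1 q.2) ≤ ε * dyadicLen q.1) :
    volume A ≤ ε * volume {x | c < dyadicMax Φ x} := by
  rw [volume_lt_dyadicMax hc hΦ, ← ENNReal.tsum_mul_left]
  rw [setOf_lt_dyadicMax_eq_iUnion hc hΦ] at hA
  calc volume A ≤ volume (⋃ q : stoppingIntervals Φ c, A ∩ dyadic q.1.1 q.1.2) := by
        rw [← Set.inter_iUnion]; exact measure_mono (Set.subset_inter le_rfl hA)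
    _ ≤ ∑' q : stoppingIntervals Φ c, volume (A ∩ dyadic q.1.1 q.1.2) := measure_iUnion_le _
    _ ≤ _ := ENNReal.tsum_le_tsum fun q => h q.1 q.2

lemma mul_volume_lt_dyadicMax_le (hc : c ≠ 0) (hΦ : ∫⁻ y, Φ y ≠ ∞) :
    c * volume {x | c < dyadicMax Φ x} ≤ ∫⁻ y, Φ y := by
  rw [volume_lt_dyadicMax hc hΦ, ← ENNReal.tsum_mul_left]
  calc ∑' q : stoppingIntervals Φ c, c * dyadicLen q.1.1
      ≤ ∑' q : stoppingIntervals Φ c, ∫⁻ y in dyadic q.1.1 q.1.2, Φ y :=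
        ENNReal.tsum_le_tsum fun q => q.2.1.le
    _ = ∫⁻ y in ⋃ q : stoppingIntervals Φ c, dyadic q.1.1 q.1.2, Φ y :=
        (lintegral_iUnion (fun q => measurableSet_dyadic _ _)
          (pairwise_disjoint_stoppingIntervals Φ c) _).symm
    _ ≤ _ := setLIntegral_le_lintegral _ _

lemma dyadic_subset_dyadicTriple_of_adjacent {k k' i j j' : ℤ} (hk : k ≤ k')
    (hi : i = j - 1 ∨ i = j ∨ i = j + 1)
    (hsub : dyadic k i ⊆ dyadic k' j') : dyadic k j ⊆ dyadicTriple k' j' := by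
  intro x hx
  have hp : (0 : ℝ) < 2 ^ k := by positivity
  have hle : (2 : ℝ) ^ k ≤ (2 : ℝ) ^ k' := zpow_le_zpow_right₀ one_le_two hk
  have hne : (i : ℝ) * 2 ^ k < (i + 1) * 2 ^ k := by nlinarith
  obtain ⟨hleft, hright⟩ := (Set.Ico_subset_Ico_iff hne).1 hsub
  obtain ⟨hxleft, hxright⟩ := hx
  rw [dyadicTriple, Set.mem_Ico]
  rcases hi with rfl | rfl | rfl <;> push_cast at * <;> constructor <;> nlinarith

lemma exists_adjacent_lt_setLIntegral {k j : ℤ}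
    (h : 3 * c * dyadicLen k < ∫⁻ y in dyadicTriple k j, Φ y) :
    ∃ i, (i = j - 1 ∨ i = j ∨ i = j + 1) ∧ c * dyadicLen k < ∫⁻ y in dyadic k i, Φ y := by
  by_contra! hcon
  have hleft := hcon (j - 1) (by simp)
  have hmid := hcon j (by simp)
  have hright := hcon (j + 1) (by simp)
  refine absurd h (not_lt.2 ?_)
  rw [dyadicTriple_eq_union]
  calc _ ≤ (∫⁻ y in dyadic k (j - 1), Φ y) + (∫⁻ y in dyadic k j, Φ y)
          + ∫⁻ y in dyadic k (j + 1), Φ y :=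
        (lintegral_union_le _ _ _).trans (add_le_add_left (lintegral_union_le _ _ _) _)
    _ ≤ c * dyadicLen k + c * dyadicLen k + c * dyadicLen k := by gcongr
    _ = 3 * c * dyadicLen k := by ring

lemma setOf_lt_tripleMax_subset_iUnion (hc : c ≠ 0) (hΦ : ∫⁻ y, Φ y ≠ ∞) :
    {x | 3 * c < tripleMax Φ x} ⊆ ⋃ q : stoppingIntervals Φ c, dyadicTriple q.1.1 q.1.2 := by
  intro x hx
  obtain ⟨k, hk⟩ := lt_scaleMax.1 hx
  obtain ⟨i, hi, hlt⟩ := exists_adjacent_lt_setLIntegral hk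
  have hmem : (i : ℝ) * 2 ^ k ∈ dyadic k i := by
    have : (0 : ℝ) < 2 ^ k := by positivity
    constructor <;> nlinarith
  rw [← mem_dyadic.1 hmem] at hlt
  obtain ⟨k', hk', hst⟩ := exists_mem_stoppingIntervals hc hΦ hlt
  exact Set.mem_iUnion.2 ⟨⟨_, hst⟩, dyadic_subset_dyadicTriple_of_adjacent hk' hi
    (dyadic_subset hk' hmem) (mem_dyadic_self k x)⟩

lemma volume_three_mul_lt_tripleMax_le (hc : c ≠ 0) (hΦ : ∫⁻ y, Φ y ≠ ∞) :
    volume {x | 3 * c < tripleMax Φ x} ≤ 3 * volume {x | c < dyadicMax Φ x} := by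
  calc _ ≤ volume (⋃ q : stoppingIntervals Φ c, dyadicTriple q.1.1 q.1.2) :=
        measure_mono (setOf_lt_tripleMax_subset_iUnion hc hΦ)
    _ ≤ ∑' q : stoppingIntervals Φ c, volume (dyadicTriple q.1.1 q.1.2) := measure_iUnion_le _
    _ = _ := by
      simp only [volume_dyadicTriple]
      rw [ENNReal.tsum_mul_left, volume_lt_dyadicMax hc hΦ]

end

/-! ### Layer cake formulas -/

section

variable {α β : Type*} [MeasurableSpace α] [MeasurableSpace β] {μ : Measure α} {φ : α → ℝ≥0∞}

lemma lintegral_mul_measure_prodMk_preimage [SFinite μ] (ν : Measure β) [SFinite ν]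
    {w : β → ℝ≥0∞} (hw : Measurable w) {S : Set (β × α)} (hS : MeasurableSet S) :
    ∫⁻ l, w l * μ (Prod.mk l ⁻¹' S) ∂ν = ∫⁻ x, ∫⁻ l in (fun l => (l, x)) ⁻¹' S, w l ∂ν ∂μ := by
  have hfiber : Measurable fun l => μ (Prod.mk l ⁻¹' S) := measurable_measure_prodMk_left hS
  calc ∫⁻ l, w l * μ (Prod.mk l ⁻¹' S) ∂ν = (ν.withDensity w).prod μ S := by
        rw [Measure.prod_apply hS, lintegral_withDensity_eq_lintegral_mul _ hw hfiber]
        rfl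
    _ = ∫⁻ x, ∫⁻ l in (fun l => (l, x)) ⁻¹' S, w l ∂ν ∂μ := by
        rw [Measure.prod_apply_symm hS]
        exact lintegral_congr fun x => withDensity_apply _ (measurable_prodMk_right hS)

lemma setLIntegral_rpow_Ioo {s a : ℝ} (hs : 0 < s) (ha : 0 ≤ a) :
    ∫⁻ l in Set.Ioo 0 a, ENNReal.ofReal (s * l ^ (s - 1)) = ENNReal.ofReal (a ^ s) := by
  have h_int : IntervalIntegrable (fun l : ℝ => s * l ^ (s - 1)) volume 0 a :=
    (intervalIntegral.intervalIntegrable_rpow' (by linarith)).const_mul s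
  rw [← ofReal_integral_eq_lintegral_ofReal]
  · rw [← integral_Ioc_eq_integral_Ioo, ← intervalIntegral.integral_of_le ha,
      intervalIntegral.integral_const_mul, integral_rpow (Or.inl (by linarith)), sub_add_cancel,
      Real.zero_rpow hs.ne', sub_zero, mul_div_cancel₀ _ hs.ne']
  · exact (intervalIntegrable_iff_integrableOn_Ioo_of_le ha).1 h_int
  · filter_upwards [ae_restrict_mem measurableSet_Ioo] with l hl
    exact mul_nonneg hs.le (Real.rpow_nonneg hl.1.le _)

lemma setLIntegral_rpow_ofReal_lt {s : ℝ} (hs : 0 < s) (t : ℝ≥0∞) :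
    ∫⁻ l in {l | ENNReal.ofReal l < t}, ENNReal.ofReal (s * l ^ (s - 1))
      ∂volume.restrict (Set.Ioi 0) = t ^ s := by
  have hmeas (t : ℝ≥0∞) : MeasurableSet {l | ENNReal.ofReal l < t} :=
    measurableSet_lt (by fun_prop) (by fun_prop)
  have of_real {a : ℝ} (ha : 0 ≤ a) : ∫⁻ l in {l | ENNReal.ofReal l < ENNReal.ofReal a},
      ENNReal.ofReal (s * l ^ (s - 1)) ∂volume.restrict (Set.Ioi 0) = ENNReal.ofReal (a ^ s) := by
    rw [Measure.restrict_restrict (hmeas _), ← setLIntegral_rpow_Ioo hs ha]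
    congr 2
    ext l
    refine and_comm.trans (and_congr_right fun hl => ?_)
    exact ENNReal.ofReal_lt_ofReal_iff_of_nonneg (Set.mem_Ioi.1 hl).le
  rcases eq_or_ne t ∞ with rfl | ht
  · rw [ENNReal.top_rpow_of_pos hs]
    refine ENNReal.eq_top_of_forall_nnreal_le fun r => ?_
    have hr := of_real (a := (r : ℝ) ^ s⁻¹) (by positivity)
    rw [Real.rpow_inv_rpow r.coe_nonneg hs.ne', ENNReal.ofReal_coe_nnreal] at hr
    rw [← hr]
    exact lintegral_mono_set fun l _ => ENNReal.ofReal_lt_top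
  · have ht' := of_real (ENNReal.toReal_nonneg (a := t))
    rwa [← ENNReal.ofReal_rpow_of_nonneg ENNReal.toReal_nonneg hs.le, ENNReal.ofReal_toReal ht]
      at ht'

lemma setLIntegral_rpow_le_ofReal_le {u : ℝ} (hu : u < 0) (t : ℝ≥0∞) :
    ∫⁻ l in {l | t ≤ ENNReal.ofReal l}, ENNReal.ofReal (-u * l ^ (u - 1))
      ∂volume.restrict (Set.Ioi 0) ≤ t ^ u := by
  rcases eq_or_ne t 0 with rfl | h0
  · simp [ENNReal.zero_rpow_of_neg hu]
  rcases eq_or_ne t ∞ with rfl | ht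
  · simp
  have ha : 0 < t.toReal := ENNReal.toReal_pos h0 ht
  have h_int : IntegrableOn (fun l : ℝ => -u * l ^ (u - 1)) (Set.Ioi t.toReal) :=
    (integrableOn_Ioi_rpow_of_lt (by linarith) ha).const_mul _
  calc _ ≤ ∫⁻ l in Set.Ici t.toReal, ENNReal.ofReal (-u * l ^ (u - 1)) := by
        rw [Measure.restrict_restrict (measurableSet_le (by fun_prop) (by fun_prop))]
        refine lintegral_mono_set fun l hl => ?_
        exact (ENNReal.le_ofReal_iff_toReal_le ht (Set.mem_Ioi.1 hl.2).le).1 hl.1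
    _ = ENNReal.ofReal (∫ l in Set.Ioi t.toReal, -u * l ^ (u - 1)) := by
        rw [← setLIntegral_congr Ioi_ae_eq_Ici, ← ofReal_integral_eq_lintegral_ofReal h_int]
        filter_upwards [ae_restrict_mem measurableSet_Ioi] with l hl
        exact mul_nonneg (by linarith) (Real.rpow_nonneg (ha.trans hl).le _)
    _ = t ^ u := by
        rw [integral_const_mul, integral_Ioi_rpow_of_lt (by linarith) ha, sub_add_cancel,
          show -u * (-t.toReal ^ u / u) = t.toReal ^ u by field_simp [hu.ne],
          ← ENNReal.ofReal_rpow_of_pos ha, ENNReal.ofReal_toReal ht]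

variable [SFinite μ]

lemma lintegral_rpow_eq_lintegral_measure_lt {s : ℝ} (hs : 0 < s) (hφ : Measurable φ) :
    ∫⁻ x, φ x ^ s ∂μ = ∫⁻ l in Set.Ioi (0 : ℝ), ENNReal.ofReal (s * l ^ (s - 1)) *
      μ {x | ENNReal.ofReal l < φ x} := by
  have hset : MeasurableSet {p : ℝ × α | ENNReal.ofReal p.1 < φ p.2} :=
    measurableSet_lt (by fun_prop) (by fun_prop)
  simp only [← setLIntegral_rpow_ofReal_lt hs]
  exact (lintegral_mul_measure_prodMk_preimage _ (by fun_prop) hset).symm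

lemma lintegral_measure_le_le_lintegral_rpow {u : ℝ} (hu : u < 0) (hφ : Measurable φ) :
    ∫⁻ l in Set.Ioi (0 : ℝ), ENNReal.ofReal (-u * l ^ (u - 1)) *
      μ {x | φ x ≤ ENNReal.ofReal l} ≤ ∫⁻ x, φ x ^ u ∂μ := by
  have hset : MeasurableSet {p : ℝ × α | φ p.2 ≤ ENNReal.ofReal p.1} :=
    measurableSet_le (by fun_prop) (by fun_prop)
  exact (lintegral_mul_measure_prodMk_preimage _ (by fun_prop) hset).trans_le
    (lintegral_mono fun x => setLIntegral_rpow_le_ofReal_le hu (φ x))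

lemma lintegral_mul_rpow_eq_lintegral_setLIntegral {s : ℝ} (hs : 0 < s) {H : α → ℝ≥0∞}
    (hH : Measurable H) (hφ : Measurable φ) :
    ∫⁻ x, H x * φ x ^ s ∂μ = ∫⁻ l in Set.Ioi (0 : ℝ), ENNReal.ofReal (s * l ^ (s - 1)) *
      ∫⁻ x in {x | ENNReal.ofReal l < φ x}, H x ∂μ := by
  have hlayer := lintegral_rpow_eq_lintegral_measure_lt (μ := μ.withDensity H) hs hφ
  rw [lintegral_withDensity_eq_lintegral_mul _ hH (by fun_prop)] at hlayer
  simpa only [withDensity_apply _ (measurableSet_lt measurable_const hφ), Pi.mul_apply]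
    using hlayer

lemma lintegral_setLIntegral_le_lintegral_mul_rpow {u : ℝ} (hu : u < 0) {H : α → ℝ≥0∞}
    (hH : Measurable H) (hφ : Measurable φ) :
    ∫⁻ l in Set.Ioi (0 : ℝ), ENNReal.ofReal (-u * l ^ (u - 1)) *
      ∫⁻ x in {x | φ x ≤ ENNReal.ofReal l}, H x ∂μ ≤ ∫⁻ x, H x * φ x ^ u ∂μ := by
  have hlayer := lintegral_measure_le_le_lintegral_rpow (μ := μ.withDensity H) hu hφ
  rw [lintegral_withDensity_eq_lintegral_mul _ hH (by fun_prop)] at hlayer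
  simpa only [withDensity_apply _ (measurableSet_le hφ measurable_const), Pi.mul_apply]
    using hlayer

end

section

variable {α : Type*} [MeasurableSpace α] {μ : Measure α} {M N G : α → ℝ≥0∞} {s : ℝ}

lemma measure_ofReal_lt_le {f : α → ℝ≥0∞} (hf : AEMeasurable f μ) {r l : ℝ} (hr : 0 < r)
    (hl : 0 < l) :
    μ {x | ENNReal.ofReal l < f x} ≤ ENNReal.ofReal (l ^ (-r)) * ∫⁻ x, f x ^ r ∂μ := by
  have hlr : 0 < l ^ r := by positivity
  rw [Real.rpow_neg hl.le, ENNReal.ofReal_inv_of_pos hlr, ← ENNReal.div_eq_inv_mul]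
  refine le_trans (measure_mono fun x hx => ?_)
    (meas_ge_le_lintegral_div (by fun_prop) (by simpa using hlr) ENNReal.ofReal_ne_top)
  simp only [Set.mem_ofPred_eq] at hx ⊢
  rw [← ENNReal.ofReal_rpow_of_pos hl]
  exact ENNReal.rpow_le_rpow hx.le hr.le

lemma lintegral_const_mul_rpow (hM : Measurable M) (hs : 0 ≤ s) (a : ℝ≥0∞) :
    ∫⁻ x, (a * M x) ^ s ∂μ = a ^ s * ∫⁻ x, M x ^ s ∂μ := by
  simp only [ENNReal.mul_rpow_of_nonneg _ _ hs]
  exact lintegral_const_mul _ (by fun_prop)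

variable [SFinite μ]

lemma lintegral_rpow_le_of_mul_measure_le (hs : 1 < s) (hM : Measurable M) (hG : Measurable G)
    {A : ℝ≥0} {b : ℝ≥0∞}
    (h : ∀ c : ℝ≥0∞, c ≠ 0 → c ≠ ∞ → c * μ {x | c < M x} ≤ A * ∫⁻ x in {x | c < b * G x}, G x ∂μ) :
    ∫⁻ x, M x ^ s ∂μ ≤ A * ENNReal.ofReal (s / (s - 1)) * b ^ (s - 1) * ∫⁻ x, G x ^ s ∂μ := by
  have hs1 : 0 < s - 1 := by linarith
  have hweak (l : ℝ) (hl : 0 < l) : μ {x | ENNReal.ofReal l < M x} ≤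
      ENNReal.ofReal l⁻¹ * (A * ∫⁻ x in {x | ENNReal.ofReal l < b * G x}, G x ∂μ) := by
    have hl0 : ENNReal.ofReal l ≠ 0 := by simpa using hl
    rw [ENNReal.ofReal_inv_of_pos hl, ← ENNReal.div_eq_inv_mul,
      ENNReal.le_div_iff_mul_le (.inl hl0) (.inl ENNReal.ofReal_ne_top), mul_comm]
    exact h _ hl0 ENNReal.ofReal_ne_top
  have hscale (l : ℝ) (hl : 0 < l) : ENNReal.ofReal (s * l ^ (s - 1)) * ENNReal.ofReal l⁻¹ =
      ENNReal.ofReal (s / (s - 1)) * ENNReal.ofReal ((s - 1) * l ^ (s - 1 - 1)) := by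
    rw [← ENNReal.ofReal_mul (by positivity), ← ENNReal.ofReal_mul (by positivity),
      Real.rpow_sub_one hl.ne' (s - 1)]
    congr 1
    field_simp
  have hpow (x : α) : G x * (b * G x) ^ (s - 1) = b ^ (s - 1) * G x ^ s := by
    rw [ENNReal.mul_rpow_of_nonneg _ _ hs1.le, mul_left_comm]
    nth_rewrite 1 [← ENNReal.rpow_one (G x)]
    rw [← ENNReal.rpow_add_of_nonneg _ _ zero_le_one hs1.le, add_sub_cancel]
  calc ∫⁻ x, M x ^ s ∂μ ≤ ∫⁻ l in Set.Ioi (0 : ℝ), A * ENNReal.ofReal (s / (s - 1)) *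
        (ENNReal.ofReal ((s - 1) * l ^ (s - 1 - 1)) *
          ∫⁻ x in {x | ENNReal.ofReal l < b * G x}, G x ∂μ) := by
        rw [lintegral_rpow_eq_lintegral_measure_lt (by linarith) hM]
        refine setLIntegral_mono' measurableSet_Ioi fun l hl => ?_
        refine (mul_le_mul_right (hweak l hl) _).trans_eq ?_
        rw [← mul_assoc, hscale l hl]
        ring
    _ = A * ENNReal.ofReal (s / (s - 1)) * ∫⁻ x, G x * (b * G x) ^ (s - 1) ∂μ := by
        rw [lintegral_const_mul' _ _ (by finiteness),
          lintegral_mul_rpow_eq_lintegral_setLIntegral hs1 hG (by fun_prop)]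
    _ = _ := by
        simp only [hpow]
        rw [lintegral_const_mul _ (by fun_prop), mul_assoc _ (b ^ (s - 1))]

lemma lintegral_rpow_le_add_of_good_lambda (hs : 0 < s) (hM : Measurable M) (hN : Measurable N)
    {a γ ε : ℝ≥0} (ha : a ≠ 0) (hγ : γ ≠ 0)
    (h : ∀ c : ℝ≥0∞, c ≠ 0 → c ≠ ∞ →
      μ {x | a * c < M x ∧ N x ≤ γ * c} ≤ ε * μ {x | c < M x}) :
    ∫⁻ x, M x ^ s ∂μ ≤
      a ^ s * ((γ : ℝ≥0∞)⁻¹ ^ s * ∫⁻ x, N x ^ s ∂μ + ε * ∫⁻ x, M x ^ s ∂μ) := by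
  have lt_inv_mul {a : ℝ≥0} (ha : a ≠ 0) {c t : ℝ≥0∞} : c < (a : ℝ≥0∞)⁻¹ * t ↔ a * c < t := by
    rw [← ENNReal.div_eq_inv_mul, ENNReal.lt_div_iff_mul_lt (by simp [ha]) (by simp), mul_comm]
  have hlevel (c : ℝ≥0∞) (hc : c ≠ 0) (hct : c ≠ ∞) : μ {x | c < (a : ℝ≥0∞)⁻¹ * M x} ≤
      μ {x | c < (γ : ℝ≥0∞)⁻¹ * N x} + ε * μ {x | c < M x} := by
    refine le_trans ?_ (add_le_add_right (h c hc hct) _)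
    refine (measure_mono fun x hx => ?_).trans (measure_union_le _ _)
    rcases le_or_gt (N x) (γ * c) with hx' | hx'
    · exact Or.inr ⟨(lt_inv_mul ha).1 hx, hx'⟩
    · exact Or.inl ((lt_inv_mul hγ).2 hx')
  have hlayer : ∫⁻ x, ((a : ℝ≥0∞)⁻¹ * M x) ^ s ∂μ ≤
      ∫⁻ x, ((γ : ℝ≥0∞)⁻¹ * N x) ^ s ∂μ + ε * ∫⁻ x, M x ^ s ∂μ := by
    rw [lintegral_rpow_eq_lintegral_measure_lt hs (hM.const_mul _),
      lintegral_rpow_eq_lintegral_measure_lt hs (hN.const_mul _),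
      lintegral_rpow_eq_lintegral_measure_lt hs hM, ← lintegral_const_mul' _ _ (by simp),
      ← lintegral_add_left']
    · refine setLIntegral_mono' measurableSet_Ioi fun l hl => ?_
      refine (mul_le_mul_right (hlevel _ (by simpa using hl) ENNReal.ofReal_ne_top) _).trans_eq ?_
      ring
    · have hanti : Antitone fun l => μ {x | ENNReal.ofReal l < (γ : ℝ≥0∞)⁻¹ * N x} :=
        fun l l' hll => measure_mono fun x hx => (ENNReal.ofReal_le_ofReal hll).trans_lt hx
      exact AEMeasurable.mul (by fun_prop) hanti.measurable.aemeasurable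
  rw [lintegral_const_mul_rpow hM hs.le, lintegral_const_mul_rpow hN hs.le,
    ENNReal.inv_rpow, ← ENNReal.div_eq_inv_mul] at hlayer
  exact (ENNReal.div_le_iff_le_mul (by simp [ha]) (.inl (by simp [ha]))).1 hlayer
    |>.trans_eq (mul_comm _ _)

lemma lintegral_rpow_le_of_good_lambda (hs : 0 < s) (hM : Measurable M) (hN : Measurable N)
    (hfin : ∫⁻ x, M x ^ s ∂μ ≠ ∞) {a γ ε : ℝ≥0} (ha : a ≠ 0) (hγ : γ ≠ 0)
    (hε : (a : ℝ≥0∞) ^ s * ε ≤ 2⁻¹)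
    (h : ∀ c : ℝ≥0∞, c ≠ 0 → c ≠ ∞ →
      μ {x | a * c < M x ∧ N x ≤ γ * c} ≤ ε * μ {x | c < M x}) :
    ∫⁻ x, M x ^ s ∂μ ≤ 2 * a ^ s * (γ : ℝ≥0∞)⁻¹ ^ s * ∫⁻ x, N x ^ s ∂μ := by
  set X := ∫⁻ x, M x ^ s ∂μ
  set Y := (γ : ℝ≥0∞)⁻¹ ^ s * ∫⁻ x, N x ^ s ∂μ with hY
  have hself : X / 2 + X / 2 ≤ a ^ s * Y + X / 2 := calc
    X / 2 + X / 2 = X := ENNReal.add_halves X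
    _ ≤ a ^ s * (Y + ε * X) := lintegral_rpow_le_add_of_good_lambda hs hM hN ha hγ h
    _ = a ^ s * Y + a ^ s * ε * X := by ring
    _ ≤ a ^ s * Y + 2⁻¹ * X := by gcongr
    _ = a ^ s * Y + X / 2 := by rw [← ENNReal.div_eq_inv_mul]
  calc X = 2 * (X / 2) := (ENNReal.mul_div_cancel (by simp) (by simp)).symm
    _ ≤ 2 * (a ^ s * Y) := by
        gcongr
        exact (ENNReal.add_le_add_iff_right (ENNReal.div_ne_top hfin (by simp))).1 hself
    _ = _ := by rw [hY]; ring

end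

/-! ### A good-`λ` inequality -/

section

variable {Φ G : ℝ → ℝ≥0∞} {s : ℝ}

lemma six_mul_volume_lt_tripleMax_le (hG : Measurable G) (hGi : ∫⁻ y, G y ≠ ∞) {c : ℝ≥0∞}
    (hc : c ≠ 0) :
    6 * c * volume {x | 6 * c < tripleMax G x} ≤ 18 * ∫⁻ x in {x | c < G x}, G x := by
  have hset : MeasurableSet {x | c < G x} := measurableSet_lt measurable_const hG
  set G' := {x | c < G x}.indicator G with hG'
  have hG'i : ∫⁻ x, G' x ≠ ∞ :=
    ne_top_of_le_ne_top hGi (lintegral_mono fun x => Set.indicator_le_self' (by simp) x)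
  have hsub : {x | 2 * c < dyadicMax G x} ⊆ {x | c < dyadicMax G' x} := fun x hx => by
    have hlt : 2 * c < dyadicMax G' x + c := hx.trans_le (dyadicMax_le_indicator_add hG c x)
    rw [two_mul] at hlt
    exact lt_of_add_lt_add_right hlt
  calc 6 * c * volume {x | 6 * c < tripleMax G x}
      = 6 * c * volume {x | 3 * (2 * c) < tripleMax G x} := by
        rw [← mul_assoc 3 2 c]; norm_num
    _ ≤ 6 * c * (3 * volume {x | c < dyadicMax G' x}) := by
        gcongr
        exact (volume_three_mul_lt_tripleMax_le (mul_ne_zero two_ne_zero hc) hGi).trans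
          (by gcongr)
    _ = 18 * (c * volume {x | c < dyadicMax G' x}) := by ring
    _ ≤ 18 * ∫⁻ x, G' x := by gcongr; exact mul_volume_lt_dyadicMax_le hc hG'i
    _ = _ := by rw [hG', lintegral_indicator hset]

lemma exists_lintegral_tripleMax_rpow_le (hs : 1 < s) :
    ∃ C : ℝ≥0∞, C ≠ ∞ ∧ ∀ G : ℝ → ℝ≥0∞, Measurable G → ∫⁻ y, G y ≠ ∞ →
      ∫⁻ x, tripleMax G x ^ s ≤ C * ∫⁻ x, G x ^ s := by
  have : 0 ≤ s - 1 := by linarith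
  refine ⟨(18 : ℝ≥0) * ENNReal.ofReal (s / (s - 1)) * 6 ^ (s - 1), by finiteness,
    fun G hG hGi => ?_⟩
  refine lintegral_rpow_le_of_mul_measure_le hs (by fun_prop) hG fun c hc _ => ?_
  have h6 : 6 * (c / 6) = c := ENNReal.mul_div_cancel (by simp) (by simp)
  have hlt (x : ℝ) : c < 6 * G x ↔ c / 6 < G x := by
    rw [ENNReal.div_lt_iff (by simp) (by simp), mul_comm]
  have hweak := six_mul_volume_lt_tripleMax_le hG hGi (c := c / 6)
    (ENNReal.div_ne_zero.2 ⟨hc, by simp⟩)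
  simpa only [h6, hlt, ENNReal.coe_ofNat] using hweak

lemma lintegral_dyadicMax_rpow_ne_top (hs : 1 < s) (hΦ : Measurable Φ) (hΦi : ∫⁻ x, Φ x ≠ ∞)
    {b : ℝ≥0} (hb : ∀ x, Φ x ≤ b) : ∫⁻ x, dyadicMax Φ x ^ s ≠ ∞ := by
  have hs1 : 0 ≤ s - 1 := by linarith
  obtain ⟨C, hC, hmax⟩ := exists_lintegral_tripleMax_rpow_le hs
  have hpow : ∫⁻ x, Φ x ^ s ≤ (b : ℝ≥0∞) ^ (s - 1) * ∫⁻ x, Φ x := by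
    rw [← lintegral_const_mul _ hΦ]
    refine lintegral_mono fun x => ?_
    calc Φ x ^ s = Φ x ^ (s - 1) * Φ x ^ (1 : ℝ) := by
          rw [← ENNReal.rpow_add_of_nonneg _ _ hs1 zero_le_one, sub_add_cancel]
      _ ≤ (b : ℝ≥0∞) ^ (s - 1) * Φ x := by rw [ENNReal.rpow_one]; gcongr; exact hb x
  refine ne_top_of_le_ne_top (b := C * ((b : ℝ≥0∞) ^ (s - 1) * ∫⁻ x, Φ x)) (by finiteness) ?_
  calc ∫⁻ x, dyadicMax Φ x ^ s ≤ ∫⁻ x, tripleMax Φ x ^ s :=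
        lintegral_mono fun x => by gcongr; exact dyadicMax_le_tripleMax Φ x
    _ ≤ C * ∫⁻ x, Φ x ^ s := hmax Φ hΦ hΦi
    _ ≤ _ := by gcongr

end

/-- Local control of `Φ` by `G` on the dyadic interval `Q` with indices `k, j`: up to a part `Φ₁`
whose integral is bounded by that of `G` on the triple of `Q`, `Φ` is dominated by a part `Φ₂`
which oscillates on `Q` by no more than the maximal function of `G`. -/
structure IsLocalSplitting (B : ℝ≥0) (Φ G : ℝ → ℝ≥0∞) (k j : ℤ) (Φ₁ Φ₂ : ℝ → ℝ≥0∞) : Prop where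
  measurable_left : Measurable Φ₁
  le_add : ∀ x, Φ x ≤ 2 * (Φ₁ x + Φ₂ x)
  right_le_add : ∀ x, Φ₂ x ≤ 2 * (Φ x + Φ₁ x)
  lintegral_left_le : ∫⁻ x, Φ₁ x ≤ B * ∫⁻ x in dyadicTriple k j, G x
  right_le : ∀ x ∈ dyadic k j, ∀ x' ∈ dyadic k j, ∀ z ∈ dyadic k j,
    Φ₂ x ≤ 2 * Φ₂ x' + B * tripleMax G z

/-- `Φ` is locally controlled by `G` on every dyadic interval. -/
def LocallyControlled (B : ℝ≥0) (Φ G : ℝ → ℝ≥0∞) : Prop :=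
  ∀ k j : ℤ, ∃ Φ₁ Φ₂ : ℝ → ℝ≥0∞, IsLocalSplitting B Φ G k j Φ₁ Φ₂

section

variable {B : ℝ≥0} {Φ G Φ₁ Φ₂ : ℝ → ℝ≥0∞} {k j : ℤ} {γ c : ℝ≥0∞} {x z : ℝ}

lemma setLIntegral_le_of_mem_stoppingIntervals (hq : (k, j) ∈ stoppingIntervals Φ c)
    (hx : x ∈ dyadic k j) : ∫⁻ y in dyadic k j, Φ y ≤ 2 * (c * dyadicLen k) := by
  have hparent := hq.2 (k + 1) (by simp) x hx
  rw [dyadicLen_succ] at hparent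
  calc _ ≤ _ := lintegral_mono_set (dyadic_subset (by simp) hx)
    _ ≤ c * (2 * dyadicLen k) := hparent
    _ = _ := by ring

namespace IsLocalSplitting

lemma lintegral_left_le_of_tripleMax_le (h : IsLocalSplitting B Φ G k j Φ₁ Φ₂)
    (hz : z ∈ dyadic k j) (hzG : tripleMax G z ≤ γ * c) :
    ∫⁻ x, Φ₁ x ≤ B * γ * (c * dyadicLen k) := by
  have htriple := setLIntegral_le_scaleMax_mul dyadicTriple G k z
  rw [mem_dyadic.1 hz] at htriple
  calc ∫⁻ x, Φ₁ x ≤ B * (tripleMax G z * dyadicLen k) := h.lintegral_left_le.trans (by gcongr)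
    _ ≤ B * (γ * c * dyadicLen k) := by gcongr
    _ = _ := by ring

lemma right_le_nine_mul (h : IsLocalSplitting B Φ G k j Φ₁ Φ₂) (hΦ : Measurable Φ)
    (hγ : 5 * (B * γ) ≤ 1) (hq : (k, j) ∈ stoppingIntervals Φ c) (hz : z ∈ dyadic k j)
    (hzG : tripleMax G z ≤ γ * c) (hx : x ∈ dyadic k j) : Φ₂ x ≤ 9 * c := by
  have hm := h.measurable_left
  rw [← ENNReal.mul_le_mul_iff_left (dyadicLen_ne_zero k) (dyadicLen_ne_top k)]
  calc Φ₂ x * dyadicLen k = ∫⁻ _ in dyadic k j, Φ₂ x := by rw [setLIntegral_const, volume_dyadic]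
    _ ≤ ∫⁻ x' in dyadic k j, (4 * Φ x' + 4 * Φ₁ x' + B * γ * c) := by
        refine setLIntegral_mono' (measurableSet_dyadic k j) fun x' hx' => ?_
        calc Φ₂ x ≤ 2 * (2 * (Φ x' + Φ₁ x')) + B * (γ * c) := by
              refine (h.right_le x hx x' hx' z hz).trans ?_
              gcongr
              exact h.right_le_add x'
          _ = _ := by ring
    _ = 4 * (∫⁻ x' in dyadic k j, Φ x') + 4 * (∫⁻ x' in dyadic k j, Φ₁ x')
          + B * γ * c * dyadicLen k := by
        rw [lintegral_add_left (by fun_prop), lintegral_add_left (by fun_prop),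
          lintegral_const_mul _ hΦ, lintegral_const_mul _ hm, setLIntegral_const, volume_dyadic]
    _ ≤ 4 * (2 * (c * dyadicLen k)) + 4 * (B * γ * (c * dyadicLen k))
          + B * γ * c * dyadicLen k := by
        gcongr
        · exact setLIntegral_le_of_mem_stoppingIntervals hq hx
        · exact (setLIntegral_le_lintegral _ _).trans (h.lintegral_left_le_of_tripleMax_le hz hzG)
    _ = (8 + 5 * (B * γ)) * (c * dyadicLen k) := by ring
    _ ≤ (8 + 1) * (c * dyadicLen k) := by gcongr
    _ = _ := by ring

lemma lt_dyadicMax_left (h : IsLocalSplitting B Φ G k j Φ₁ Φ₂)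
    (hq : (k, j) ∈ stoppingIntervals Φ c) (hΦ₂ : ∀ y ∈ dyadic k j, Φ₂ y ≤ 9 * c)
    (hx : x ∈ dyadic k j) (hxΦ : 20 * c < dyadicMax Φ x) : c < dyadicMax Φ₁ x := by
  obtain ⟨k', hk'⟩ := lt_scaleMax.1 hxΦ
  have hkk : k' ≤ k := by
    by_contra! hlt
    refine absurd hk' (not_lt.2 ((hq.2 k' hlt x hx).trans ?_))
    gcongr
    exact le_mul_of_one_le_left' (by norm_num)
  have hsub := dyadic_subset hkk (mem_dyadic_self k' x)
  rw [mem_dyadic.1 hx] at hsub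
  refine lt_scaleMax.2 ⟨k', ?_⟩
  by_contra! hcon
  refine absurd hk' (not_lt.2 ?_)
  calc _ ≤ ∫⁻ y in dyadic k' (dyadicIndex k' x), (2 * Φ₁ y + 18 * c) := by
        refine setLIntegral_mono' (measurableSet_dyadic _ _) fun y hy => ?_
        calc Φ y ≤ 2 * (Φ₁ y + 9 * c) := (h.le_add y).trans (by gcongr; exact hΦ₂ y (hsub hy))
          _ = _ := by ring
    _ = 2 * (∫⁻ y in dyadic k' (dyadicIndex k' x), Φ₁ y) + 18 * c * dyadicLen k' := by
        rw [lintegral_add_right _ measurable_const, lintegral_const_mul _ h.measurable_left,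
          setLIntegral_const, volume_dyadic]
    _ ≤ 2 * (c * dyadicLen k') + 18 * c * dyadicLen k' := by gcongr
    _ = _ := by ring

end IsLocalSplitting

lemma LocallyControlled.volume_good_lambda_le (h : LocallyControlled B Φ G) (hΦ : Measurable Φ)
    (hΦi : ∫⁻ x, Φ x ≠ ∞) (hγ : 5 * (B * γ) ≤ 1) (hc : c ≠ 0) (hct : c ≠ ∞) :
    volume {x | 20 * c < dyadicMax Φ x ∧ tripleMax G x ≤ γ * c} ≤
      B * γ * volume {x | c < dyadicMax Φ x} := by
  refine volume_le_of_forall_stoppingIntervals hc hΦi (fun x hx => lt_of_le_of_lt ?_ hx.1) ?_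
  · exact le_mul_of_one_le_left' (by norm_num)
  rintro ⟨k, j⟩ hq
  rcases Set.eq_empty_or_nonempty
    ({x | 20 * c < dyadicMax Φ x ∧ tripleMax G x ≤ γ * c} ∩ dyadic k j) with he | ⟨z, hz, hzQ⟩
  · simp [he]
  obtain ⟨Φ₁, Φ₂, hsplit⟩ := h k j
  have hΦ₁ := hsplit.lintegral_left_le_of_tripleMax_le hzQ hz.2
  have hBγ : B * γ ≠ ∞ := fun htop => by simp [htop] at hγ
  have hfin : B * γ * (c * dyadicLen k) ≠ ∞ :=
    ENNReal.mul_ne_top hBγ (ENNReal.mul_ne_top hct (dyadicLen_ne_top k))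
  rw [← ENNReal.mul_le_mul_iff_right hc hct]
  calc _ ≤ c * volume {x | c < dyadicMax Φ₁ x} := by
        gcongr
        rintro x ⟨⟨hx, -⟩, hxQ⟩
        exact hsplit.lt_dyadicMax_left hq
          (fun y hy => hsplit.right_le_nine_mul hΦ hγ hq hzQ hz.2 hy) hxQ hx
    _ ≤ ∫⁻ x, Φ₁ x := mul_volume_lt_dyadicMax_le hc (ne_top_of_le_ne_top hfin hΦ₁)
    _ ≤ _ := hΦ₁.trans_eq (by ring)

end

theorem exists_lintegral_rpow_le_of_locallyControlled {s : ℝ} (hs : 1 < s) (B : ℝ≥0) :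
    ∃ C : ℝ≥0∞, C ≠ ∞ ∧ ∀ Φ G : ℝ → ℝ≥0∞, Continuous Φ → Measurable G → ∫⁻ x, Φ x ≠ ∞ →
      ∫⁻ x, G x ≠ ∞ → (∃ b : ℝ≥0, ∀ x, Φ x ≤ b) → LocallyControlled B Φ G →
      ∫⁻ x, Φ x ^ s ≤ C * ∫⁻ x, G x ^ s := by
  have hs0 : 0 < s := by linarith
  obtain ⟨C₀, hC₀, hmax⟩ := exists_lintegral_tripleMax_rpow_le hs
  obtain ⟨γ, hγ0, hγ⟩ := ENNReal.exists_nnreal_pos_mul_lt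
    (a := (20 : ℝ≥0∞) ^ s * (5 * B)) (b := 2⁻¹) (by finiteness) (by simp)
  have hε : (20 : ℝ≥0∞) ^ s * (B * γ) ≤ 2⁻¹ := le_trans
    (mul_le_mul_right (le_mul_of_one_le_left' (by norm_num : (1 : ℝ≥0∞) ≤ 5)) _)
    (hγ.le.trans_eq' (by ring))
  have hBγ : 5 * ((B : ℝ≥0∞) * γ) ≤ 1 := calc
    5 * ((B : ℝ≥0∞) * γ) ≤ 20 ^ s * (5 * (B * γ)) :=
      le_mul_of_one_le_left' (ENNReal.one_le_rpow (by norm_num) hs0)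
    _ = γ * (20 ^ s * (5 * B)) := by ring
    _ ≤ 1 := hγ.le.trans (by simp)
  refine ⟨2 * 20 ^ s * (γ : ℝ≥0∞)⁻¹ ^ s * C₀, by finiteness [hγ0.ne'], ?_⟩
  rintro Φ G hΦ hG hΦi hGi ⟨b, hb⟩ hloc
  calc ∫⁻ x, Φ x ^ s ≤ ∫⁻ x, dyadicMax Φ x ^ s :=
        lintegral_mono fun x => by gcongr; exact le_dyadicMax hΦ x
    _ ≤ 2 * 20 ^ s * (γ : ℝ≥0∞)⁻¹ ^ s * ∫⁻ x, tripleMax G x ^ s := by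
        refine lintegral_rpow_le_of_good_lambda (a := 20) (ε := B * γ) hs0 (by fun_prop)
          (by fun_prop) (lintegral_dyadicMax_rpow_ne_top hs hΦ.measurable hΦi hb) (by simp)
          hγ0.ne' (by simpa using hε) fun c hc hct => ?_
        simpa using hloc.volume_good_lambda_le hΦ.measurable hΦi hBγ hc hct
    _ ≤ 2 * 20 ^ s * (γ : ℝ≥0∞)⁻¹ ^ s * (C₀ * ∫⁻ x, G x ^ s) := by gcongr; exact hmax G hG hGi
    _ = _ := by ring

/-! ### Fourier transforms and multipliers on `L¹ ∩ L²` -/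

lemma eLpNorm_two_sq {α E : Type*} [MeasurableSpace α] [NormedAddCommGroup E] (f : α → E)
    (μ : Measure α) : eLpNorm f 2 μ ^ 2 = ∫⁻ x, ‖f x‖ₑ ^ 2 ∂μ := by
  simpa using eLpNorm_nnreal_pow_eq_lintegral (μ := μ) (f := f) (two_ne_zero (α := ℝ≥0))

section

variable {V E : Type*} [NormedAddCommGroup V] [InnerProductSpace ℝ V] [FiniteDimensional ℝ V]
  [MeasurableSpace V] [BorelSpace V]

lemma continuous_fourier [NormedAddCommGroup E] [NormedSpace ℂ E] {f : V → E}
    (hf : Integrable f) : Continuous (𝓕 f) :=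
  VectorFourier.fourierIntegral_continuous Real.continuous_fourierChar continuous_inner hf

variable [NormedAddCommGroup E] [InnerProductSpace ℂ E] [CompleteSpace E] {f : V → E}

lemma coeFn_fourier_toLp_two (hf : Integrable f) (hf2 : MemLp f 2) :
    (𝓕 (hf2.toLp f) : Lp E 2 (volume : Measure V)) =ᵐ[volume] 𝓕 f := by
  refine ae_eq_of_integral_contDiff_smul_eq ((Lp.memLp _).locallyIntegrable (by norm_num))
    (continuous_fourier hf).locallyIntegrable fun g hg hgs => ?_
  let φ : SchwartzMap V ℂ := HasCompactSupport.toSchwartzMap (f := fun x => (g x : ℂ))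
    (hgs.comp_left (g := fun x : ℝ => (x : ℂ)) (by simp)) (Complex.ofRealCLM.contDiff.comp hg)
  have hdistr := congrArg (fun u => u φ) (Lp.fourier_toTemperedDistribution_eq (hf2.toLp f))
  simp only [TemperedDistribution.fourier_apply, Lp.toTemperedDistribution_apply] at hdistr
  have hself : ∫ ξ, 𝓕 (⇑φ) ξ • f ξ = ∫ x, φ x • 𝓕 f x := by
    have := VectorFourier.integral_fourierIntegral_smul_eq_flip (L := innerₗ V) (μ := volume)
      (ν := volume) Real.continuous_fourierChar continuous_inner φ.integrable hf
    simpa only [flip_innerₗ] using! this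
  calc ∫ x, g x • 𝓕 (hf2.toLp f) x = ∫ x, φ x • 𝓕 (hf2.toLp f) x :=
        integral_congr_ae (.of_forall fun x => (Complex.coe_smul _ _).symm)
    _ = ∫ x, 𝓕 (⇑φ) x • f x := by
        refine hdistr.symm.trans (integral_congr_ae ?_)
        filter_upwards [hf2.coeFn_toLp] with x hx
        rw [hx, SchwartzMap.fourier_coe]
    _ = ∫ x, g x • 𝓕 f x := hself.trans
        (integral_congr_ae (.of_forall fun x => Complex.coe_smul _ _))

theorem eLpNorm_two_fourier (hf : Integrable f) (hf2 : MemLp f 2) :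
    eLpNorm (𝓕 f) 2 volume = eLpNorm f 2 volume := by
  have hnorm := Lp.norm_fourier_eq (hf2.toLp f)
  rw [Lp.norm_def, Lp.norm_def, ENNReal.toReal_eq_toReal_iff' (Lp.eLpNorm_ne_top _)
    (Lp.eLpNorm_ne_top _)] at hnorm
  rw [← eLpNorm_congr_ae (coeFn_fourier_toLp_two hf hf2), hnorm,
    eLpNorm_congr_ae hf2.coeFn_toLp]

end

/-- Measurable functions in `L¹ ∩ L²`. -/
structure MemL1L2 (f : ℝ → ℂ) : Prop where
  measurable : Measurable f
  integrable : Integrable f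
  memLp : MemLp f 2

namespace MemL1L2

variable {f : ℝ → ℂ}

lemma sq (hf : MemL1L2 f) : ∫⁻ x, ‖f x‖ₑ ^ 2 ≠ ∞ := by
  rw [← eLpNorm_two_sq]
  exact ENNReal.pow_ne_top hf.memLp.2.ne

lemma sum {ι : Type*} {s : Finset ι} {f : ι → ℝ → ℂ} (hf : ∀ i ∈ s, MemL1L2 (f i))
    (a : ι → ℂ) : MemL1L2 (fun x => ∑ i ∈ s, a i * f i x) where
  measurable := Finset.measurable_sum _ fun i hi => (hf i hi).measurable.const_mul _
  integrable := integrable_finsetSum _ fun i hi => (hf i hi).integrable.const_mul _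
  memLp := memLp_finsetSum _ fun i hi => (hf i hi).memLp.const_mul _

lemma indicator (hf : MemL1L2 f) {s : Set ℝ} (hs : MeasurableSet s) : MemL1L2 (s.indicator f) :=
  ⟨hf.measurable.indicator hs, hf.integrable.indicator hs, hf.memLp.indicator hs⟩

theorem lintegral_fourier_sq (hf : MemL1L2 f) :
    ∫⁻ ξ, ‖𝓕 f ξ‖ₑ ^ 2 = ∫⁻ x, ‖f x‖ₑ ^ 2 := by
  rw [← eLpNorm_two_sq, ← eLpNorm_two_sq, eLpNorm_two_fourier hf.integrable hf.memLp]

theorem lintegral_fourierInv_sq (hf : MemL1L2 f) :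
    ∫⁻ ξ, ‖𝓕⁻ f ξ‖ₑ ^ 2 = ∫⁻ x, ‖f x‖ₑ ^ 2 := by
  simp only [Real.fourierInv_eq_fourier_neg]
  rw [lintegral_neg_eq_self (fun x => ‖𝓕 f x‖ₑ ^ 2), hf.lintegral_fourier_sq]

end MemL1L2

/-- Smooth compactly supported Fourier multipliers. -/
structure IsSymbol (χ : ℝ → ℂ) : Prop where
  smooth : ContDiff ℝ ((⊤ : ℕ∞) : WithTop ℕ∞) χ
  compact : HasCompactSupport χ

/-- The Fourier multiplier operator with symbol `χ`. -/
noncomputable def symOp (χ f : ℝ → ℂ) : ℝ → ℂ := 𝓕⁻ (fun ξ => χ ξ * 𝓕 f ξ)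

lemma symOp_apply (χ f : ℝ → ℂ) (x : ℝ) :
    symOp χ f x = ∫ ξ : ℝ, cexp (2 * Real.pi * I * (ξ * x)) * (χ ξ * 𝓕 f ξ) := by
  rw [symOp, Real.fourierInv_eq']
  congr 1 with ξ
  rw [smul_eq_mul]
  congr 2
  simp
  ring

namespace IsSymbol

variable {χ f : ℝ → ℂ}

lemma continuous (hχ : IsSymbol χ) : Continuous χ := hχ.smooth.continuous

lemma comp_affine (hχ : IsSymbol χ) (a : ℝ) {r : ℝ} (hr : r ≠ 0) :
    IsSymbol (fun ξ => χ ((ξ - a) / r)) := by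
  refine ⟨hχ.smooth.comp (by fun_prop), ?_⟩
  have := hχ.compact.comp_homeomorph
    ((Homeomorph.subRight a).trans (Homeomorph.mulRight₀ r⁻¹ (inv_ne_zero hr)))
  exact this

lemma continuous_mul (hχ : IsSymbol χ) (hf : MemL1L2 f) : Continuous fun ξ => χ ξ * 𝓕 f ξ :=
  hχ.continuous.mul (continuous_fourier hf.integrable)

lemma hasCompactSupport_mul (hχ : IsSymbol χ) : HasCompactSupport fun ξ => χ ξ * 𝓕 f ξ :=
  hχ.compact.mul_right

lemma memL1L2_mul (hχ : IsSymbol χ) (hf : MemL1L2 f) : MemL1L2 fun ξ => χ ξ * 𝓕 f ξ :=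
  ⟨(hχ.continuous_mul hf).measurable,
    (hχ.continuous_mul hf).integrable_of_hasCompactSupport hχ.hasCompactSupport_mul,
    (hχ.continuous_mul hf).memLp_of_hasCompactSupport hχ.hasCompactSupport_mul⟩

end IsSymbol

section symOp

variable {χ ψ f g : ℝ → ℂ}

lemma continuous_symOp (hχ : IsSymbol χ) (hf : MemL1L2 f) : Continuous (symOp χ f) := by
  rw [symOp, Real.fourierInv_eq_fourier_comp_neg]
  exact continuous_fourier (hχ.memL1L2_mul hf).integrable.comp_neg

lemma lintegral_symOp_sq (hχ : IsSymbol χ) (hf : MemL1L2 f) :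
    ∫⁻ x, ‖symOp χ f x‖ₑ ^ 2 = ∫⁻ ξ, ‖χ ξ‖ₑ ^ 2 * ‖𝓕 f ξ‖ₑ ^ 2 := by
  rw [symOp, (hχ.memL1L2_mul hf).lintegral_fourierInv_sq]
  simp only [enorm_mul, mul_pow]

lemma exists_norm_symOp_le (χ f : ℝ → ℂ) :
    ∃ b : ℝ≥0, ∀ x, ‖symOp χ f x‖ₑ ≤ b := by
  refine ⟨(∫ ξ, ‖χ ξ * 𝓕 f ξ‖).toNNReal, fun x => ?_⟩
  rw [symOp, Real.fourierInv_eq_fourier_neg, ← ofReal_norm]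
  exact ENNReal.ofReal_le_ofReal (VectorFourier.norm_fourierIntegral_le_integral_norm _ _ _ _ _)

lemma integrable_symOp (hχ : IsSymbol χ) (hf : MemL1L2 f) : Integrable (symOp χ f) := by
  let φ : SchwartzMap ℝ ℂ := hχ.compact.toSchwartzMap hχ.smooth
  have hφ : ⇑φ = χ := rfl
  let κ : SchwartzMap ℝ ℂ := 𝓕⁻ φ
  have hκ : 𝓕 (⇑κ) = χ := by
    rw [← SchwartzMap.fourier_coe]
    simp [κ, hφ]
  have hconv : Integrable (convolution κ f (ContinuousLinearMap.mul ℂ ℂ) volume) :=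
    κ.integrable.integrable_convolution _ hf.integrable
  have hcont : Continuous (convolution κ f (ContinuousLinearMap.mul ℂ ℂ) volume) := by
    refine BddAbove.continuous_convolution_left_of_integrable _ ?_ κ.continuous hf.integrable
    refine ⟨SchwartzMap.seminorm ℝ 0 0 κ, ?_⟩
    rintro _ ⟨x, rfl⟩
    exact SchwartzMap.norm_le_seminorm ℝ κ x
  have hF : 𝓕 (convolution κ f (ContinuousLinearMap.mul ℂ ℂ) volume) = fun ξ => χ ξ * 𝓕 f ξ := by
    ext ξ
    rw [Real.fourier_mul_convolution_eq κ.integrable hf.integrable, hκ]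
  rw [symOp, ← hF, hcont.fourierInv_fourier_eq hconv]
  · exact hconv
  · rw [hF]
    exact (hχ.memL1L2_mul hf).integrable

lemma memL1L2_symOp (hχ : IsSymbol χ) (hf : MemL1L2 f) : MemL1L2 (symOp χ f) := by
  have hcont := continuous_symOp hχ hf
  refine ⟨hcont.measurable, integrable_symOp hχ hf, hcont.aestronglyMeasurable, ?_⟩
  refine (ENNReal.pow_lt_top_iff.1 ?_).resolve_right two_ne_zero
  rw [eLpNorm_two_sq, lt_top_iff_ne_top, symOp, (hχ.memL1L2_mul hf).lintegral_fourierInv_sq]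
  exact (hχ.memL1L2_mul hf).sq

lemma fourier_symOp (hχ : IsSymbol χ) (hf : MemL1L2 f) : 𝓕 (symOp χ f) = fun ξ => χ ξ * 𝓕 f ξ := by
  refine (hχ.continuous_mul hf).fourier_fourierInv_eq (hχ.memL1L2_mul hf).integrable ?_
  have h := (integrable_symOp hχ hf).comp_neg
  refine h.congr (Filter.Eventually.of_forall fun x => ?_)
  simp [symOp, Real.fourierInv_eq_fourier_neg]

lemma symOp_symOp (hχ : IsSymbol χ) (hf : MemL1L2 f) :
    symOp ψ (symOp χ f) = symOp (fun ξ => ψ ξ * χ ξ) f := by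
  rw [symOp, fourier_symOp hχ hf, symOp]
  simp only [mul_assoc]

lemma integrable_cexp_mul_symbol_mul_fourier (hχ : IsSymbol χ) (hf : MemL1L2 f) (x : ℝ) :
    Integrable fun ξ : ℝ => cexp (2 * Real.pi * I * (ξ * x)) * (χ ξ * 𝓕 f ξ) :=
  (Continuous.mul (by fun_prop) (hχ.continuous_mul hf)).integrable_of_hasCompactSupport
    hχ.hasCompactSupport_mul.mul_left

lemma symOp_sum_left {ι : Type*} {s : Finset ι} {χ : ι → ℝ → ℂ} (hχ : ∀ i ∈ s, IsSymbol (χ i))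
    (hf : MemL1L2 f) (a : ι → ℂ) (x : ℝ) :
    symOp (fun ξ => ∑ i ∈ s, a i * χ i ξ) f x = ∑ i ∈ s, a i * symOp (χ i) f x := by
  simp only [symOp_apply, ← integral_const_mul]
  rw [← integral_finsetSum]
  · congr 1 with ξ
    simp only [Finset.sum_mul, Finset.mul_sum]
    exact Finset.sum_congr rfl fun i _ => by ring
  · exact fun i hi => (integrable_cexp_mul_symbol_mul_fourier (hχ i hi) hf x).const_mul _

lemma fourier_sum {ι : Type*} {s : Finset ι} {f : ι → ℝ → ℂ} (hf : ∀ i ∈ s, Integrable (f i))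
    (a : ι → ℂ) (ξ : ℝ) : 𝓕 (fun x => ∑ i ∈ s, a i * f i x) ξ = ∑ i ∈ s, a i * 𝓕 (f i) ξ := by
  simp only [Real.fourier_eq, Finset.smul_sum, ← integral_const_mul]
  rw [integral_finsetSum]
  · simp only [mul_smul_comm]
  · intro i hi
    simp only [← mul_smul_comm]
    exact ((Real.fourierIntegral_convergent_iff ξ).2 (hf i hi)).const_mul _

lemma symOp_sum_right {ι : Type*} {s : Finset ι} {f : ι → ℝ → ℂ} (hχ : IsSymbol χ)
    (hf : ∀ i ∈ s, MemL1L2 (f i)) (a : ι → ℂ) (x : ℝ) :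
    symOp χ (fun x => ∑ i ∈ s, a i * f i x) x = ∑ i ∈ s, a i * symOp χ (f i) x := by
  simp only [symOp_apply, fourier_sum fun i hi => (hf i hi).integrable, ← integral_const_mul]
  rw [← integral_finsetSum]
  · congr 1 with ξ
    simp only [Finset.mul_sum]
    exact Finset.sum_congr rfl fun i _ => by ring
  · exact fun i hi => (integrable_cexp_mul_symbol_mul_fourier hχ (hf i hi) x).const_mul _

end symOp

/-! ### Square functions with controlled oscillation -/

lemma dyadicLen_add (k : ℤ) (m : ℕ) : dyadicLen (k + m) = 2 ^ m * dyadicLen k := by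
  induction m with
  | zero => simp
  | succ m ih => rw [Nat.cast_succ, ← add_assoc, dyadicLen_succ, ih, pow_succ']; ring

lemma le_abs_sub_of_notMem_dyadicTriple {k j : ℤ} {x y : ℝ} (hx : x ∈ dyadic k j)
    (hy : y ∉ dyadicTriple k j) : (2 : ℝ) ^ k ≤ |x - y| := by
  contrapose! hy
  simp only [dyadic, dyadicTriple, Set.mem_Ico] at *
  rw [abs_lt] at hy
  constructor <;> nlinarith

/-- The tail `∫ G(y) / |x - y|² dy` over the complement of the triple of a dyadic interval. -/
noncomputable def tail (k j : ℤ) (x : ℝ) (G : ℝ → ℝ≥0∞) : ℝ≥0∞ :=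
  ∫⁻ y in (dyadicTriple k j)ᶜ, G y / ENNReal.ofReal ((x - y) ^ 2)

section

variable {k j : ℤ} {x z : ℝ} {G : ℝ → ℝ≥0∞}

lemma tail_sum {κ : Type*} [Fintype κ] {G : κ → ℝ → ℝ≥0∞} (hG : ∀ l, Measurable (G l)) :
    tail k j x (fun y => ∑ l, G l y) = ∑ l, tail k j x (G l) := by
  simp only [tail, div_eq_mul_inv, Finset.sum_mul]
  exact lintegral_finsetSum _ fun l _ => by have := hG l; fun_prop

lemma exists_mem_dyadicTriple_of_notMem {y : ℝ} (hx : x ∈ dyadic k j) (hz : z ∈ dyadic k j)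
    (hy : y ∉ dyadicTriple k j) :
    ∃ m : ℕ, y ∈ dyadicTriple (k + m + 1) (dyadicIndex (k + m + 1) z) ∧
      dyadicLen (k + m) ^ 2 ≤ ENNReal.ofReal ((x - y) ^ 2) := by
  have hxy := le_abs_sub_of_notMem_dyadicTriple hx hy
  obtain ⟨n, hn, hn'⟩ := exists_mem_Ico_zpow (lt_of_lt_of_le (by positivity) hxy)
    (one_lt_two : (1 : ℝ) < 2)
  have hkn : k < n + 1 := (zpow_lt_zpow_iff_right₀ one_lt_two).1 (hxy.trans_lt hn')
  obtain ⟨m, rfl⟩ : ∃ m : ℕ, n = k + m := ⟨(n - k).toNat, by omega⟩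
  have hxz : x ∈ dyadic (k + m + 1) (dyadicIndex (k + m + 1) z) :=
    dyadic_subset (by omega) hz hx
  refine ⟨m, ?_, ?_⟩
  · contrapose! hn'
    exact le_abs_sub_of_notMem_dyadicTriple hxz hn'
  · rw [dyadicLen, ← ENNReal.ofReal_pow (by positivity), ← sq_abs (x - y)]
    gcongr

lemma setLIntegral_inv_sq_mul_le (hG : Measurable G) (k : ℤ) (z : ℝ) :
    ∫⁻ y in dyadicTriple (k + 1) (dyadicIndex (k + 1) z), (dyadicLen k ^ 2)⁻¹ * G y ≤
      (dyadicLen k)⁻¹ * (2 * tripleMax G z) := by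
  rw [lintegral_const_mul _ hG]
  calc _ ≤ (dyadicLen k ^ 2)⁻¹ * (tripleMax G z * dyadicLen (k + 1)) := by
        gcongr
        exact setLIntegral_le_scaleMax_mul dyadicTriple G _ z
    _ = (dyadicLen k)⁻¹ * dyadicLen k * ((dyadicLen k)⁻¹ * (2 * tripleMax G z)) := by
        rw [dyadicLen_succ, ENNReal.inv_pow]
        ring
    _ = _ := by
        rw [ENNReal.inv_mul_cancel (dyadicLen_ne_zero k) (dyadicLen_ne_top k), one_mul]

lemma tail_le_tsum (hx : x ∈ dyadic k j) (hz : z ∈ dyadic k j) (hG : Measurable G) :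
    tail k j x G ≤ ∑' m : ℕ, (dyadicLen (k + m))⁻¹ * (2 * tripleMax G z) := by
  let T : ℕ → Set ℝ := fun m => dyadicTriple (k + m + 1) (dyadicIndex (k + m + 1) z)
  let u : ℕ → ℝ → ℝ≥0∞ := fun m => (T m).indicator fun y => (dyadicLen (k + m) ^ 2)⁻¹ * G y
  have hT : ∀ m, MeasurableSet (T m) := fun m => measurableSet_dyadicTriple _ _
  calc tail k j x G ≤ ∫⁻ y in (dyadicTriple k j)ᶜ, ∑' m, u m y := by
        refine setLIntegral_mono' (measurableSet_dyadicTriple k j).compl fun y hy => ?_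
        obtain ⟨m, hm, hle⟩ := exists_mem_dyadicTriple_of_notMem hx hz hy
        refine le_trans ?_ (ENNReal.le_tsum m)
        simp only [u, Set.indicator_of_mem (show y ∈ T m from hm)]
        rw [ENNReal.div_eq_inv_mul]
        gcongr
    _ ≤ ∫⁻ y, ∑' m, u m y := setLIntegral_le_lintegral _ _
    _ = ∑' m, ∫⁻ y, u m y :=
        lintegral_tsum fun m => ((hG.const_mul _).indicator (hT m)).aemeasurable
    _ ≤ _ := by
        gcongr with m
        rw [lintegral_indicator (hT m)]
        exact setLIntegral_inv_sq_mul_le hG (k + m) z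

lemma dyadicLen_mul_tail_le (hx : x ∈ dyadic k j) (hz : z ∈ dyadic k j) (hG : Measurable G) :
    dyadicLen k * tail k j x G ≤ 4 * tripleMax G z := by
  calc dyadicLen k * tail k j x G
      ≤ dyadicLen k * ∑' m : ℕ, (dyadicLen (k + m))⁻¹ * (2 * tripleMax G z) := by
        gcongr
        exact tail_le_tsum hx hz hG
    _ = ∑' m : ℕ, 2⁻¹ ^ m * (2 * tripleMax G z) := by
        rw [← ENNReal.tsum_mul_left]
        congr 1 with m
        rw [dyadicLen_add, ENNReal.mul_inv (by simp) (by simp), ENNReal.inv_pow,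
          mul_comm (2⁻¹ ^ m), mul_assoc,
          ENNReal.mul_inv_cancel_left (dyadicLen_ne_zero k) (dyadicLen_ne_top k)]
    _ = 4 * tripleMax G z := by
        rw [ENNReal.tsum_mul_right, ENNReal.tsum_geometric, ENNReal.one_sub_inv_two, inv_inv,
          ← mul_assoc]
        norm_num

end

lemma enorm_add_sq_le {E : Type*} [TopologicalSpace E] [ESeminormedAddMonoid E] (a b : E) :
    ‖a + b‖ₑ ^ 2 ≤ 2 * (‖a‖ₑ ^ 2 + ‖b‖ₑ ^ 2) := by
  refine (pow_le_pow_left' (enorm_add_le a b) 2).trans ?_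
  have := ENNReal.rpow_add_le_mul_rpow_add_rpow ‖a‖ₑ ‖b‖ₑ one_le_two
  norm_num at this
  exact this

/-- The squared length of a finite family of functions. -/
noncomputable def sqSum {ι : Type*} [Fintype ι] (g : ι → ℝ → ℂ) (x : ℝ) : ℝ≥0∞ :=
  ∑ i, ‖g i x‖ₑ ^ 2

section

variable {ι : Type*} [Fintype ι]

lemma measurable_sqSum {g : ι → ℝ → ℂ} (hg : ∀ i, Measurable (g i)) : Measurable (sqSum g) :=
  Finset.measurable_sum _ fun i _ => (hg i).enorm.pow_const 2

lemma lintegral_sqSum {g : ι → ℝ → ℂ} (hg : ∀ i, Measurable (g i)) :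
    ∫⁻ x, sqSum g x = ∑ i, ∫⁻ x, ‖g i x‖ₑ ^ 2 :=
  lintegral_finsetSum _ fun i _ => (hg i).enorm.pow_const 2

lemma sqSum_add_le (g h : ι → ℝ → ℂ) (x : ℝ) :
    sqSum (fun i x => g i x + h i x) x ≤ 2 * (sqSum g x + sqSum h x) := by
  simp only [sqSum, ← Finset.sum_add_distrib, Finset.mul_sum]
  gcongr with i
  exact enorm_add_sq_le _ _

lemma sqSum_indicator (g : ι → ℝ → ℂ) (s : Set ℝ) :
    sqSum (fun i => s.indicator (g i)) = s.indicator (sqSum g) := by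
  ext x
  by_cases hx : x ∈ s <;> simp [sqSum, hx]

end

lemma norm_cexp_two_pi (t : ℝ) : ‖cexp (2 * Real.pi * I * t)‖ = 1 := by
  rw [show (2 * Real.pi * I * t : ℂ) = ((2 * Real.pi * t : ℝ) : ℂ) * I by push_cast; ring,
    Complex.norm_exp_ofReal_mul_I]

/-- The unimodular function `e^{-2π i a x}`. -/
noncomputable def phase (a x : ℝ) : ℂ := cexp (2 * Real.pi * I * (-(a * x)))

lemma enorm_phase (a x : ℝ) : ‖phase a x‖ₑ = 1 := by
  simpa [phase, ← ofReal_norm] using norm_cexp_two_pi (-(a * x))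

/-- Additive operators between finite families of functions that are bounded on `L²` and whose
components, demodulated by the frequencies `a`, oscillate little on any dyadic interval from the
triple of which the input stays away. -/
structure IsOscillationControlled {ι κ : Type*} [Fintype ι] [Fintype κ] (B : ℝ≥0) (a : ι → ℝ)
    (U : (κ → ℝ → ℂ) → ι → ℝ → ℂ) : Prop where
  add : ∀ g h, (∀ l, MemL1L2 (g l)) → (∀ l, MemL1L2 (h l)) →
    U (fun l x => g l x + h l x) = fun i x => U g i x + U h i x
  continuous : ∀ g, (∀ l, MemL1L2 (g l)) → ∀ i, Continuous (U g i)
  bounded : ∀ g, (∀ l, MemL1L2 (g l)) → ∀ i, ∃ b : ℝ≥0, ∀ x, ‖U g i x‖ₑ ≤ b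
  lintegral_le : ∀ g, (∀ l, MemL1L2 (g l)) →
    ∫⁻ x, sqSum (U g) x ≤ B * ∫⁻ x, sqSum g x
  oscillation_le : ∀ k j g, (∀ l, MemL1L2 (g l)) → (∀ l, ∀ y ∈ dyadicTriple k j, g l y = 0) →
    ∀ x ∈ dyadic k j, ∀ x' ∈ dyadic k j,
      ∑ i, ‖phase (a i) x * U g i x - phase (a i) x' * U g i x'‖ₑ ^ 2 ≤
        B * (dyadicLen k * (tail k j x (sqSum g) + tail k j x' (sqSum g)))

namespace IsOscillationControlled

variable {ι κ : Type*} [Fintype ι] [Fintype κ] {B : ℝ≥0} {a : ι → ℝ}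
  {U : (κ → ℝ → ℂ) → ι → ℝ → ℂ} {g : κ → ℝ → ℂ} {k j : ℤ}

lemma sqSum_le (hU : IsOscillationControlled B a U) (hg : ∀ l, MemL1L2 (g l))
    (hg0 : ∀ l, ∀ y ∈ dyadicTriple k j, g l y = 0) {x x' z : ℝ} (hx : x ∈ dyadic k j)
    (hx' : x' ∈ dyadic k j) (hz : z ∈ dyadic k j) :
    sqSum (U g) x ≤ 2 * sqSum (U g) x' + ((16 * B : ℝ≥0) : ℝ≥0∞) * tripleMax (sqSum g) z := by
  have hgm := measurable_sqSum fun l => (hg l).measurable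
  calc sqSum (U g) x = ∑ i, ‖phase (a i) x' * U g i x' +
          (phase (a i) x * U g i x - phase (a i) x' * U g i x')‖ₑ ^ 2 := by
        simp only [add_sub_cancel, enorm_mul, enorm_phase, one_mul, sqSum]
    _ ≤ ∑ i, 2 * (‖phase (a i) x' * U g i x'‖ₑ ^ 2 +
          ‖phase (a i) x * U g i x - phase (a i) x' * U g i x'‖ₑ ^ 2) := by
        gcongr
        exact enorm_add_sq_le _ _
    _ = 2 * sqSum (U g) x' +
          2 * ∑ i, ‖phase (a i) x * U g i x - phase (a i) x' * U g i x'‖ₑ ^ 2 := by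
        simp only [← Finset.mul_sum, Finset.sum_add_distrib, mul_add, enorm_mul, enorm_phase,
          one_mul, sqSum]
    _ ≤ 2 * sqSum (U g) x' +
          2 * (B * (4 * tripleMax (sqSum g) z + 4 * tripleMax (sqSum g) z)) := by
        grw [hU.oscillation_le k j g hg hg0 x hx x' hx', mul_add (dyadicLen k),
          dyadicLen_mul_tail_le hx hz hgm, dyadicLen_mul_tail_le hx' hz hgm]
    _ = _ := by push_cast; ring

lemma isLocalSplitting (hU : IsOscillationControlled B a U) (hg : ∀ l, MemL1L2 (g l)) (k j : ℤ) :
    IsLocalSplitting (16 * B) (sqSum (U g)) (sqSum g) k j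
      (sqSum (U fun l => (dyadicTriple k j).indicator (g l)))
      (sqSum (U fun l => (dyadicTriple k j)ᶜ.indicator (g l))) := by
  have hT := measurableSet_dyadicTriple k j
  set g₁ : κ → ℝ → ℂ := fun l => (dyadicTriple k j).indicator (g l) with hg₁_def
  set g₂ : κ → ℝ → ℂ := fun l => (dyadicTriple k j)ᶜ.indicator (g l) with hg₂_def
  have hg₁ : ∀ l, MemL1L2 (g₁ l) := fun l => (hg l).indicator hT
  have hg₂ : ∀ l, MemL1L2 (g₂ l) := fun l => (hg l).indicator hT.compl
  have hsplit : U g = fun i x => U g₁ i x + U g₂ i x := by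
    rw [← hU.add g₁ g₂ hg₁ hg₂]
    congr 1 with l x
    exact (congrFun (Set.indicator_self_add_compl _ (g l)) x).symm
  refine ⟨measurable_sqSum fun i => (hU.continuous g₁ hg₁ i).measurable, fun x => ?_,
    fun x => ?_, ?_, fun x hx x' hx' z hz => ?_⟩
  · rw [hsplit]
    exact sqSum_add_le _ _ x
  · have := sqSum_add_le (U g) (fun i x => -U g₁ i x) x
    simpa only [hsplit, add_neg_cancel_comm, sqSum, enorm_neg] using this
  · refine (hU.lintegral_le g₁ hg₁).trans ?_
    rw [hg₁_def, sqSum_indicator, lintegral_indicator hT, ENNReal.coe_mul]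
    gcongr
    exact le_mul_of_one_le_left' (by norm_num)
  · refine (hU.sqSum_le hg₂ (fun l y hy => by simp [hg₂_def, hy]) hx hx' hz).trans ?_
    gcongr
    rw [hg₂_def, sqSum_indicator]
    exact scaleMax_mono (Set.indicator_le_self _ _) z

lemma locallyControlled (hU : IsOscillationControlled B a U) (hg : ∀ l, MemL1L2 (g l)) :
    LocallyControlled (16 * B) (sqSum (U g)) (sqSum g) :=
  fun k j => ⟨_, _, hU.isLocalSplitting hg k j⟩

end IsOscillationControlled

theorem exists_lintegral_sqSum_rpow_le {s : ℝ} (hs : 1 < s) (B : ℝ≥0) :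
    ∃ C : ℝ≥0∞, C ≠ ∞ ∧ ∀ (ι κ : Type) [Fintype ι] [Fintype κ] (a : ι → ℝ)
      (U : (κ → ℝ → ℂ) → ι → ℝ → ℂ), IsOscillationControlled B a U →
      ∀ g, (∀ l, MemL1L2 (g l)) → ∫⁻ x, sqSum (U g) x ^ s ≤ C * ∫⁻ x, sqSum g x ^ s := by
  obtain ⟨C, hC, h⟩ := exists_lintegral_rpow_le_of_locallyControlled hs (16 * B)
  refine ⟨C, hC, fun ι κ _ _ a U hU g hg => ?_⟩
  have hgm : ∀ l, Measurable (g l) := fun l => (hg l).measurable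
  have hgi : ∫⁻ x, sqSum g x ≠ ∞ := by
    rw [lintegral_sqSum hgm]
    exact ENNReal.sum_ne_top.2 fun l _ => (hg l).sq
  refine h _ _ ?_ (measurable_sqSum hgm) ?_ hgi ?_ (hU.locallyControlled hg)
  · exact continuous_finsetSum _ fun i _ =>
      (ENNReal.continuous_pow 2).comp (hU.continuous g hg i).enorm
  · exact ne_top_of_le_ne_top (by finiteness) (hU.lintegral_le g hg)
  · choose b hb using hU.bounded g hg
    refine ⟨∑ i, b i ^ 2, fun x => ?_⟩
    push_cast
    exact Finset.sum_le_sum fun i _ => pow_le_pow_left' (hb i x) 2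

/-! ### Oscillation of dilated multipliers away from the support -/

lemma lintegral_comp_affine {K : ℝ → ℝ≥0∞} (hK : Measurable K) (a : ℝ) {r : ℝ} (hr : r ≠ 0) :
    ∫⁻ ξ, K ((ξ - a) / r) = ENNReal.ofReal |r| * ∫⁻ u, K u := by
  rw [lintegral_sub_right_eq_self (fun ξ => K (ξ / r)) a]
  have hmap := Real.map_volume_mul_left (inv_ne_zero hr)
  rw [inv_inv] at hmap
  simp only [div_eq_inv_mul]
  rw [← lintegral_map hK (by fun_prop), hmap, lintegral_smul_measure, smul_eq_mul]

lemma enorm_integral_sq_le {α E : Type*} [MeasurableSpace α] {μ : Measure α}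
    [NormedAddCommGroup E] [NormedSpace ℝ E] {h : α → E} {K H : α → ℝ≥0∞}
    (hK : AEMeasurable K μ) (hH : AEMeasurable H μ) (hle : ∀ ξ, ‖h ξ‖ₑ ≤ K ξ * H ξ) :
    ‖∫ ξ, h ξ ∂μ‖ₑ ^ 2 ≤ (∫⁻ ξ, K ξ ^ 2 ∂μ) * ∫⁻ ξ, H ξ ^ 2 ∂μ := by
  have hCS : ‖∫ ξ, h ξ ∂μ‖ₑ ≤ (∫⁻ ξ, K ξ ^ (2 : ℝ) ∂μ) ^ (1 / (2 : ℝ)) *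
      (∫⁻ ξ, H ξ ^ (2 : ℝ) ∂μ) ^ (1 / (2 : ℝ)) :=
    calc _ ≤ ∫⁻ ξ, ‖h ξ‖ₑ ∂μ := enorm_integral_le_lintegral_enorm _
      _ ≤ ∫⁻ ξ, (K * H) ξ ∂μ := lintegral_mono hle
      _ ≤ _ := ENNReal.lintegral_mul_le_Lp_mul_Lq _ Real.HolderConjugate.two_two hK hH
  calc _ ≤ _ := pow_le_pow_left' hCS 2
    _ = _ := by
      rw [mul_pow, ← ENNReal.rpow_mul_natCast, ← ENNReal.rpow_mul_natCast]
      norm_num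

/-- The function `f(y) / (x - y)`. -/
noncomputable def quot (x : ℝ) (f : ℝ → ℂ) (y : ℝ) : ℂ := f y / ((x - y : ℝ) : ℂ)

section

variable {k j : ℤ} {x : ℝ} {f : ℝ → ℂ}

lemma norm_quot_le (hf0 : ∀ y ∈ dyadicTriple k j, f y = 0) (hx : x ∈ dyadic k j) (y : ℝ) :
    ‖quot x f y‖ ≤ ‖((((2 : ℝ) ^ k)⁻¹ : ℝ) : ℂ) * f y‖ := by
  by_cases hy : y ∈ dyadicTriple k j
  · simp [quot, hf0 y hy]
  · rw [quot, norm_div, norm_mul, Complex.norm_real, Complex.norm_real, Real.norm_eq_abs,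
      Real.norm_eq_abs, div_eq_inv_mul, abs_of_pos (show (0 : ℝ) < ((2 : ℝ) ^ k)⁻¹ by positivity)]
    gcongr
    exact le_abs_sub_of_notMem_dyadicTriple hx hy

lemma memL1L2_quot (hf : MemL1L2 f) (hf0 : ∀ y ∈ dyadicTriple k j, f y = 0)
    (hx : x ∈ dyadic k j) : MemL1L2 (quot x f) := by
  have hm : Measurable (quot x f) := hf.measurable.div (by fun_prop)
  exact ⟨hm, (hf.integrable.const_mul _).mono hm.aestronglyMeasurable
    (.of_forall (norm_quot_le hf0 hx)), (hf.memLp.const_mul _).mono hm.aestronglyMeasurable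
    (.of_forall (norm_quot_le hf0 hx))⟩

lemma lintegral_quot_sq_le (hf0 : ∀ y ∈ dyadicTriple k j, f y = 0) (hx : x ∈ dyadic k j) :
    ∫⁻ y, ‖quot x f y‖ₑ ^ 2 ≤ tail k j x (fun y => ‖f y‖ₑ ^ 2) := by
  rw [tail, ← lintegral_indicator (measurableSet_dyadicTriple k j).compl]
  refine lintegral_mono fun y => ?_
  by_cases hy : y ∈ dyadicTriple k j
  · simp [quot, hf0 y hy]
  · have hxy : 0 < |x - y| :=
      lt_of_lt_of_le (by positivity) (le_abs_sub_of_notMem_dyadicTriple hx hy)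
    rw [Set.indicator_of_mem (Set.mem_compl hy)]
    simp only [quot]
    rw [← ofReal_norm, ← ofReal_norm, norm_div, Complex.norm_real, Real.norm_eq_abs,
      ENNReal.ofReal_div_of_pos hxy, div_eq_mul_inv, mul_pow, ← ENNReal.inv_pow,
      ← ENNReal.ofReal_pow hxy.le, sq_abs, div_eq_mul_inv]

lemma sub_mul_quot (hf0 : ∀ y ∈ dyadicTriple k j, f y = 0) (hx : x ∈ dyadic k j) (y : ℝ) :
    (x - y) * quot x f y = f y := by
  by_cases hy : y ∈ dyadicTriple k j
  · simp [quot, hf0 y hy]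
  · have hxy : x - y ≠ 0 := abs_pos.1
      (lt_of_lt_of_le (by positivity) (le_abs_sub_of_notMem_dyadicTriple hx hy))
    rw [quot, ← ofReal_sub, mul_div_cancel₀ _ (by exact_mod_cast hxy)]

end

lemma hasDerivAt_fourier_of_sub_mul {F f : ℝ → ℂ} (hF : Integrable F) (hf : Integrable f) {x : ℝ}
    (h : ∀ y : ℝ, (x - y) * F y = f y) (ξ : ℝ) :
    HasDerivAt (𝓕 F) (2 * Real.pi * I * (𝓕 f ξ - x * 𝓕 F ξ)) ξ := by
  have hyF : ∀ y : ℝ, y • F y = x * F y - f y := fun y => by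
    rw [← h y, Complex.real_smul]; ring
  have hderiv := Real.hasDerivAt_fourier hF
    (((hF.const_mul (x : ℂ)).sub hf).congr (.of_forall fun y => (hyF y).symm)) ξ
  have hlin := fourier_sum (s := Finset.univ) (f := fun b : Bool => cond b f F)
    (fun b _ => by cases b <;> assumption)
    (fun b => cond b (2 * Real.pi * I) (-(2 * Real.pi * I * x))) ξ
  simp only [Fintype.univ_bool, Finset.mem_singleton, Bool.true_eq_false, not_false_eq_true,
    Finset.sum_insert, Finset.sum_singleton, cond_true, cond_false] at hlin
  rw [mul_sub, ← mul_assoc, sub_eq_add_neg, ← neg_mul, ← hlin]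
  have hcongr : (fun y : ℝ => (-2 * Real.pi * I * y : ℂ) • F y) =
      fun y => 2 * Real.pi * I * f y + -(2 * Real.pi * I * x) * F y := by
    ext y
    rw [smul_eq_mul, ← h y]
    ring
  rwa [hcongr] at hderiv

lemma hasDerivAt_cexp_two_pi_mul (t ξ : ℝ) :
    HasDerivAt (fun ξ : ℝ => cexp (2 * Real.pi * I * (ξ * t)))
      (2 * Real.pi * I * t * cexp (2 * Real.pi * I * (ξ * t))) ξ := by
  have h := ((hasDerivAt_id (ξ : ℂ)).comp_ofReal.mul_const (t : ℂ)).const_mul (2 * Real.pi * I : ℂ)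
  simp only [id, one_mul] at h
  rw [mul_comm (2 * Real.pi * I * t : ℂ)]
  exact h.cexp

section

variable {k j : ℤ} {x : ℝ} {χ f F : ℝ → ℂ}

lemma IsSymbol.hasDerivAt (hχ : IsSymbol χ) (ξ : ℝ) : HasDerivAt χ (deriv χ ξ) ξ :=
  (hχ.smooth.differentiable (by simp) ξ).hasDerivAt

lemma IsSymbol.deriv (hχ : IsSymbol χ) : IsSymbol (deriv χ) :=
  ⟨hχ.smooth.iterate_deriv 1, hχ.compact.deriv⟩

/-- The Fourier transform of the function `y ↦ K(t - y) (x - y)`, where `K` is the kernel of the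
multiplier operator with symbol `χ`. -/
noncomputable def shiftedSymbol (χ : ℝ → ℂ) (x t ξ : ℝ) : ℂ :=
  (x - t) * χ ξ - (2 * Real.pi * I)⁻¹ * deriv χ ξ

lemma integrable_cexp_mul_shiftedSymbol_mul (hχ : IsSymbol χ) (hF : Integrable F) (t : ℝ) :
    Integrable fun ξ : ℝ => cexp (2 * Real.pi * I * (ξ * t)) * (shiftedSymbol χ x t ξ * 𝓕 F ξ) := by
  have := hχ.continuous
  have := hχ.deriv.continuous
  have := continuous_fourier hF
  unfold shiftedSymbol
  refine Continuous.integrable_of_hasCompactSupport (by fun_prop) ?_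
  exact (hχ.compact.mul_left.sub hχ.deriv.compact.mul_left).mul_right.mul_left

-- The difference of the two integrands is the derivative of `(2πi)⁻¹ e(ξ t) χ(ξ) 𝓕 F(ξ)`.
theorem symOp_eq_integral_shiftedSymbol (hχ : IsSymbol χ) (hF : MemL1L2 F) (hf : MemL1L2 f)
    (h : ∀ y : ℝ, (x - y) * F y = f y) (t : ℝ) :
    symOp χ f t = ∫ ξ : ℝ, cexp (2 * Real.pi * I * (ξ * t)) * (shiftedSymbol χ x t ξ * 𝓕 F ξ) := by
  have hI := integrable_cexp_mul_symbol_mul_fourier hχ hf t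
  have hJ := integrable_cexp_mul_shiftedSymbol_mul (x := x) hχ hF.integrable t
  have : (2 * Real.pi * I : ℂ) ≠ 0 := by simp [Real.pi_ne_zero]
  have hderiv : ∀ ξ : ℝ, HasDerivAt
      (fun ξ : ℝ => (2 * Real.pi * I)⁻¹ * (cexp (2 * Real.pi * I * (ξ * t)) * (χ ξ * 𝓕 F ξ)))
      (cexp (2 * Real.pi * I * (ξ * t)) * (χ ξ * 𝓕 f ξ) -
        cexp (2 * Real.pi * I * (ξ * t)) * (shiftedSymbol χ x t ξ * 𝓕 F ξ)) ξ := by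
    intro ξ
    refine (((hasDerivAt_cexp_two_pi_mul t ξ).mul ((hχ.hasDerivAt ξ).mul
      (hasDerivAt_fourier_of_sub_mul hF.integrable hf.integrable h ξ))).const_mul
      (2 * Real.pi * I : ℂ)⁻¹).congr_deriv ?_
    simp only [shiftedSymbol, Pi.mul_apply]
    field_simp
    ring
  rw [symOp_apply, ← sub_eq_zero, ← integral_sub hI hJ]
  exact integral_eq_zero_of_hasDerivAt_of_integrable hderiv (hI.sub hJ)
    ((integrable_cexp_mul_symbol_mul_fourier hχ hF t).const_mul _)

end

/-- The symbol `χ` moved to the frequency interval of base point `a` and (signed) length `r`. -/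
noncomputable def dil (χ : ℝ → ℂ) (a r : ℝ) (ξ : ℝ) : ℂ := χ ((ξ - a) / r)

/-- The weight controlling the kernel of a dilated symbol. -/
noncomputable def symWeight (χ : ℝ → ℂ) (u : ℝ) : ℝ := ‖deriv χ u‖ * (1 + |u|) + ‖χ u‖

/-- The squared `L²` norm of the weight of a symbol. -/
noncomputable def symCost (χ : ℝ → ℂ) : ℝ≥0∞ := ∫⁻ u, ENNReal.ofReal (symWeight χ u) ^ 2

/-- The frequencies seen by the dilated symbol. -/
def freqSet (χ : ℝ → ℂ) (a r : ℝ) : Set ℝ := (fun ξ => (ξ - a) / r) ⁻¹' tsupport χ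

/-- The part of the energy of `h` at the frequencies seen by the dilated symbol. -/
noncomputable def freqEnergy (χ : ℝ → ℂ) (a r : ℝ) (h : ℝ → ℂ) : ℝ≥0∞ :=
  ∫⁻ ξ in freqSet χ a r, ‖𝓕 h ξ‖ₑ ^ 2

section

variable {χ : ℝ → ℂ}

lemma IsSymbol.dil (hχ : IsSymbol χ) (a : ℝ) {r : ℝ} (hr : r ≠ 0) : IsSymbol (dil χ a r) :=
  hχ.comp_affine a hr

lemma deriv_dil (χ : ℝ → ℂ) (a r ξ : ℝ) : deriv (dil χ a r) ξ = deriv χ ((ξ - a) / r) / r := by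
  have hdil : dil χ a r = fun ξ => (fun η => χ (r⁻¹ * η)) (ξ - a) := by
    ext ξ
    rw [dil, div_eq_inv_mul]
  rw [hdil, deriv_comp_sub_const (f := fun η => χ (r⁻¹ * η)), deriv_comp_mul_left,
    Complex.real_smul, ofReal_inv, div_eq_inv_mul, div_eq_inv_mul]

lemma symWeight_nonneg (χ : ℝ → ℂ) (u : ℝ) : 0 ≤ symWeight χ u := by
  unfold symWeight; positivity

lemma norm_deriv_le_symWeight (χ : ℝ → ℂ) (u : ℝ) : ‖deriv χ u‖ ≤ symWeight χ u := by
  unfold symWeight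
  have := mul_nonneg (norm_nonneg (deriv χ u)) (abs_nonneg u)
  linarith [norm_nonneg (χ u)]

lemma symWeight_eq_zero {u : ℝ} (hu : u ∉ tsupport χ) : symWeight χ u = 0 := by
  have hderiv : deriv χ u = 0 :=
    image_eq_zero_of_notMem_tsupport fun h => hu (tsupport_deriv_subset h)
  simp [symWeight, image_eq_zero_of_notMem_tsupport hu, hderiv]

lemma IsSymbol.continuous_symWeight (hχ : IsSymbol χ) : Continuous (symWeight χ) := by
  have := hχ.deriv.continuous
  have := hχ.continuous
  unfold symWeight
  fun_prop

lemma IsSymbol.symCost_ne_top (hχ : IsSymbol χ) : symCost χ ≠ ∞ := by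
  have hmem := hχ.continuous_symWeight.memLp_of_hasCompactSupport (p := 2) (μ := volume)
    (.intro hχ.compact fun u hu => symWeight_eq_zero hu)
  have heq : symCost χ = eLpNorm (symWeight χ) 2 volume ^ 2 := by
    rw [eLpNorm_two_sq, symCost]
    simp only [← ofReal_norm, Real.norm_eq_abs, abs_of_nonneg (symWeight_nonneg χ _)]
  rw [heq]
  exact ENNReal.pow_ne_top hmem.2.ne

lemma measurableSet_freqSet (χ : ℝ → ℂ) (a r : ℝ) : MeasurableSet (freqSet χ a r) :=
  (show Measurable fun ξ : ℝ => (ξ - a) / r by fun_prop) (isClosed_tsupport χ).measurableSet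

lemma enorm_integral_sq_le_freqEnergy (hχ : IsSymbol χ) (a : ℝ) {r : ℝ} (hr : r ≠ 0)
    {F h : ℝ → ℂ} (hF : Integrable F) {c : ℝ} (hc : 0 ≤ c)
    (hle : ∀ ξ, ‖h ξ‖ ≤ c * symWeight χ ((ξ - a) / r) * ‖𝓕 F ξ‖) :
    ‖∫ ξ, h ξ‖ₑ ^ 2 ≤ ENNReal.ofReal (c ^ 2 * |r|) * symCost χ * freqEnergy χ a r F := by
  have := hχ.continuous_symWeight
  have hFm : Measurable fun ξ => ‖𝓕 F ξ‖ₑ := (continuous_fourier hF).measurable.enorm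
  have hpoint : ∀ ξ, ‖h ξ‖ₑ ≤ ENNReal.ofReal (c * symWeight χ ((ξ - a) / r)) *
      (freqSet χ a r).indicator (fun ξ => ‖𝓕 F ξ‖ₑ) ξ := fun ξ => by
    by_cases hξ : ξ ∈ freqSet χ a r
    · rw [Set.indicator_of_mem hξ, ← ofReal_norm, ← ofReal_norm,
        ← ENNReal.ofReal_mul (mul_nonneg hc (symWeight_nonneg _ _))]
      exact ENNReal.ofReal_le_ofReal (hle ξ)
    · have hzero := hle ξ
      rw [symWeight_eq_zero hξ, mul_zero, zero_mul, norm_le_zero_iff] at hzero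
      simp [hzero]
  have hweight : ∫⁻ ξ, ENNReal.ofReal (c * symWeight χ ((ξ - a) / r)) ^ 2 =
      ENNReal.ofReal (c ^ 2 * |r|) * symCost χ := by
    simp only [ENNReal.ofReal_mul hc, mul_pow]
    rw [lintegral_const_mul' _ _ (by finiteness), ENNReal.ofReal_mul (sq_nonneg c),
      ENNReal.ofReal_pow hc, mul_assoc,
      lintegral_comp_affine (K := fun u => ENNReal.ofReal (symWeight χ u) ^ 2) (by fun_prop) a hr,
      symCost]
  have henergy : ∫⁻ ξ, (freqSet χ a r).indicator (fun ξ => ‖𝓕 F ξ‖ₑ) ξ ^ 2 =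
      freqEnergy χ a r F := by
    rw [freqEnergy, ← lintegral_indicator (measurableSet_freqSet χ a r)]
    congr 1 with ξ
    by_cases hξ : ξ ∈ freqSet χ a r <;> simp [hξ]
  rw [← hweight, ← henergy]
  exact enorm_integral_sq_le (by fun_prop)
    (hFm.indicator (measurableSet_freqSet χ a r)).aemeasurable hpoint

end

lemma norm_cexp_two_pi_sub_le (s t : ℝ) :
    ‖cexp (2 * Real.pi * I * s) - cexp (2 * Real.pi * I * t)‖ ≤ 2 * Real.pi * |s - t| := by
  have h : cexp (2 * Real.pi * I * s) - cexp (2 * Real.pi * I * t) =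
      cexp (2 * Real.pi * I * t) * (cexp (I * (2 * Real.pi * (s - t) : ℝ)) - 1) := by
    rw [mul_sub, ← Complex.exp_add, mul_one]
    congr 2
    push_cast
    ring
  rw [h, norm_mul, norm_cexp_two_pi, one_mul]
  refine Real.norm_exp_I_mul_ofReal_sub_one_le.trans (le_of_eq ?_)
  rw [Real.norm_eq_abs, abs_mul, abs_of_pos Real.two_pi_pos]

lemma phase_mul_cexp (a t ξ : ℝ) : phase a t * cexp (2 * Real.pi * I * (ξ * t)) =
    cexp (2 * Real.pi * I * (((ξ - a) * t : ℝ) : ℂ)) := by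
  rw [phase, ← Complex.exp_add]
  congr 1
  push_cast
  ring

lemma norm_two_pi_I : ‖(2 * Real.pi * I : ℂ)‖ = 2 * Real.pi := by
  simp [abs_of_pos Real.pi_pos]

lemma norm_shiftedSymbol_dil_self_le (χ : ℝ → ℂ) (a r x ξ : ℝ) :
    ‖shiftedSymbol (dil χ a r) x x ξ‖ ≤ 1 / |r| * symWeight χ ((ξ - a) / r) := by
  have hpi : (2 * Real.pi)⁻¹ ≤ 1 := inv_le_one_of_one_le₀ (by linarith [Real.pi_gt_three])
  rw [shiftedSymbol, sub_self, zero_mul, zero_sub, norm_neg, norm_mul, norm_inv, norm_two_pi_I,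
    deriv_dil, norm_div, Complex.norm_real, Real.norm_eq_abs]
  calc _ ≤ 1 * (symWeight χ ((ξ - a) / r) / |r|) := by
        gcongr
        exact norm_deriv_le_symWeight _ _
    _ = _ := by ring

-- Where the kernel oscillates, `|ξ - a| = |r| |u|` is absorbed by the weight at `u = (ξ - a) / r`.
lemma norm_cexp_mul_shiftedSymbol_dil_sub_le (χ : ℝ → ℂ) (a : ℝ) {r : ℝ} (hr : r ≠ 0)
    (x x' ξ : ℝ) :
    ‖cexp (2 * Real.pi * I * (((ξ - a) * x : ℝ) : ℂ)) * shiftedSymbol (dil χ a r) x x ξ -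
      cexp (2 * Real.pi * I * (((ξ - a) * x' : ℝ) : ℂ)) * shiftedSymbol (dil χ a r) x x' ξ‖ ≤
      |x - x'| * symWeight χ ((ξ - a) / r) := by
  simp only [shiftedSymbol, deriv_dil]
  rw [show dil χ a r ξ = χ ((ξ - a) / r) from rfl]
  set u := (ξ - a) / r with hu
  set e := cexp (2 * Real.pi * I * (((ξ - a) * x : ℝ) : ℂ))
  set e' := cexp (2 * Real.pi * I * (((ξ - a) * x' : ℝ) : ℂ))
  have hsplit : e * ((x - x) * χ u - (2 * Real.pi * I)⁻¹ * (deriv χ u / r)) -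
      e' * ((x - x') * χ u - (2 * Real.pi * I)⁻¹ * (deriv χ u / r)) =
      (e' - e) * ((2 * Real.pi * I)⁻¹ * (deriv χ u / r)) - e' * (((x - x' : ℝ) : ℂ) * χ u) := by
    push_cast
    ring
  have hur : |ξ - a| = |u| * |r| := by rw [← abs_mul, hu, div_mul_cancel₀ _ hr]
  have hexp : ‖e' - e‖ ≤ 2 * Real.pi * (|u| * |r| * |x - x'|) := by
    refine (norm_cexp_two_pi_sub_le _ _).trans_eq ?_
    rw [← mul_sub, abs_mul, hur, abs_sub_comm]
  have : 0 < |r| := abs_pos.2 hr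
  rw [hsplit]
  calc _ ≤ ‖e' - e‖ * ((2 * Real.pi)⁻¹ * (‖deriv χ u‖ / |r|)) + |x - x'| * ‖χ u‖ := by
        refine (norm_sub_le _ _).trans_eq ?_
        rw [norm_mul, norm_mul, norm_mul e', norm_mul, norm_cexp_two_pi, norm_inv, norm_two_pi_I,
          norm_div, Complex.norm_real, Complex.norm_real, Real.norm_eq_abs, Real.norm_eq_abs,
          one_mul]
    _ ≤ 2 * Real.pi * (|u| * |r| * |x - x'|) * ((2 * Real.pi)⁻¹ * (‖deriv χ u‖ / |r|)) +
        |x - x'| * ‖χ u‖ := by gcongr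
    _ = |x - x'| * (‖deriv χ u‖ * |u| + ‖χ u‖) := by
      have := Real.pi_pos
      field_simp
    _ ≤ |x - x'| * symWeight χ u := by
      rw [symWeight]
      gcongr
      linarith

lemma abs_sub_le_of_mem_dyadic {k j : ℤ} {x x' : ℝ} (hx : x ∈ dyadic k j)
    (hx' : x' ∈ dyadic k j) : |x - x'| ≤ (2 : ℝ) ^ k := by
  simp only [dyadic, Set.mem_Ico] at hx hx'
  rw [abs_le]
  constructor <;> nlinarith

section

variable {χ f : ℝ → ℂ} {k j : ℤ} {x x' : ℝ}

lemma phase_mul_symOp_eq_integral (hχ : IsSymbol χ) (a : ℝ) (hf : MemL1L2 f)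
    (hf0 : ∀ y ∈ dyadicTriple k j, f y = 0) (hx : x ∈ dyadic k j) (t : ℝ) :
    phase a t * symOp χ f t = ∫ ξ : ℝ, cexp (2 * Real.pi * I * (((ξ - a) * t : ℝ) : ℂ)) *
      (shiftedSymbol χ x t ξ * 𝓕 (quot x f) ξ) := by
  rw [symOp_eq_integral_shiftedSymbol hχ (memL1L2_quot hf hf0 hx) hf (sub_mul_quot hf0 hx),
    ← integral_const_mul]
  simp only [← phase_mul_cexp, mul_assoc (phase a t)]

lemma enorm_phase_mul_symOp_sq_le (hχ : IsSymbol χ) (a : ℝ) {r : ℝ} (hr : r ≠ 0) (hf : MemL1L2 f)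
    (hf0 : ∀ y ∈ dyadicTriple k j, f y = 0) (hx : x ∈ dyadic k j) :
    ‖phase a x * symOp (dil χ a r) f x‖ₑ ^ 2 ≤
      ENNReal.ofReal (1 / |r|) * symCost χ * freqEnergy χ a r (quot x f) := by
  have : 0 < |r| := abs_pos.2 hr
  rw [phase_mul_symOp_eq_integral (hχ.dil a hr) a hf hf0 hx,
    show 1 / |r| = (1 / |r|) ^ 2 * |r| by field_simp]
  refine enorm_integral_sq_le_freqEnergy hχ a hr (memL1L2_quot hf hf0 hx).integrable
    (by positivity) fun ξ => ?_
  rw [norm_mul, norm_cexp_two_pi, one_mul, norm_mul]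
  gcongr
  exact norm_shiftedSymbol_dil_self_le χ a r x ξ

lemma enorm_phase_mul_symOp_sub_sq_le_of_sq (hχ : IsSymbol χ) (a : ℝ) {r : ℝ} (hr : r ≠ 0)
    (hf : MemL1L2 f) (hf0 : ∀ y ∈ dyadicTriple k j, f y = 0) (hx : x ∈ dyadic k j)
    (hx' : x' ∈ dyadic k j) :
    ‖phase a x * symOp (dil χ a r) f x - phase a x' * symOp (dil χ a r) f x'‖ₑ ^ 2 ≤
      ENNReal.ofReal (((2 : ℝ) ^ k) ^ 2 * |r|) * symCost χ * freqEnergy χ a r (quot x f) := by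
  have hF := (memL1L2_quot hf hf0 hx).integrable
  have hint : ∀ t : ℝ, Integrable fun ξ : ℝ => cexp (2 * Real.pi * I * (((ξ - a) * t : ℝ) : ℂ)) *
      (shiftedSymbol (dil χ a r) x t ξ * 𝓕 (quot x f) ξ) := fun t => by
    simp only [← phase_mul_cexp, mul_assoc (phase a t)]
    exact (integrable_cexp_mul_shiftedSymbol_mul (hχ.dil a hr) hF t).const_mul _
  rw [phase_mul_symOp_eq_integral (hχ.dil a hr) a hf hf0 hx,
    phase_mul_symOp_eq_integral (hχ.dil a hr) a hf hf0 hx, ← integral_sub (hint x) (hint x')]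
  refine enorm_integral_sq_le_freqEnergy hχ a hr hF (by positivity) fun ξ => ?_
  rw [← mul_assoc, ← mul_assoc, ← sub_mul, norm_mul]
  gcongr
  refine (norm_cexp_mul_shiftedSymbol_dil_sub_le χ a hr x x' ξ).trans ?_
  gcongr
  · exact symWeight_nonneg _ _
  · exact abs_sub_le_of_mem_dyadic hx hx'

theorem enorm_phase_mul_symOp_sub_sq_le (hχ : IsSymbol χ) (a : ℝ) {r : ℝ} (hr : r ≠ 0)
    (hf : MemL1L2 f) (hf0 : ∀ y ∈ dyadicTriple k j, f y = 0) (hx : x ∈ dyadic k j)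
    (hx' : x' ∈ dyadic k j) :
    ‖phase a x * symOp (dil χ a r) f x - phase a x' * symOp (dil χ a r) f x'‖ₑ ^ 2 ≤
      ENNReal.ofReal (min (1 / |r|) (((2 : ℝ) ^ k) ^ 2 * |r|)) * (2 * symCost χ) *
        (freqEnergy χ a r (quot x f) + freqEnergy χ a r (quot x' f)) := by
  rcases min_cases (1 / |r|) (((2 : ℝ) ^ k) ^ 2 * |r|) with h | h
  · rw [h.1, sub_eq_add_neg]
    refine (enorm_add_sq_le _ _).trans ?_
    rw [enorm_neg]
    grw [enorm_phase_mul_symOp_sq_le hχ a hr hf hf0 hx,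
      enorm_phase_mul_symOp_sq_le hχ a hr hf hf0 hx']
    exact le_of_eq (by ring)
  · rw [h.1]
    refine (enorm_phase_mul_symOp_sub_sq_le_of_sq hχ a hr hf hf0 hx hx').trans ?_
    refine mul_le_mul' (mul_le_mul' le_rfl ?_) le_self_add
    exact le_mul_of_one_le_left' one_le_two

end

/-! ### Smooth Littlewood–Paley–Rubio de Francia inequalities -/

lemma symOp_add_right {χ g h : ℝ → ℂ} (hχ : IsSymbol χ) (hg : MemL1L2 g) (hh : MemL1L2 h) (x : ℝ) :
    symOp χ (fun x => g x + h x) x = symOp χ g x + symOp χ h x := by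
  have := symOp_sum_right (s := (Finset.univ : Finset Bool)) (f := fun b => cond b g h) hχ
    (fun b _ => by cases b <;> assumption) (fun _ => 1) x
  simpa using this

lemma IsSymbol.exists_enorm_le {χ : ℝ → ℂ} (hχ : IsSymbol χ) : ∃ M : ℝ≥0, ∀ u, ‖χ u‖ₑ ≤ M := by
  obtain ⟨M, hM⟩ := hχ.compact.exists_bound_of_continuous hχ.continuous
  refine ⟨M.toNNReal, fun u => ?_⟩
  rw [← ofReal_norm]
  exact ENNReal.ofReal_le_ofReal (hM u)

lemma enorm_sum_sq_le_mul {W E : Type*} [TopologicalSpace E] [ESeminormedAddCommMonoid E]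
    (S : Finset W) {z : W → E} {α β : W → ℝ≥0∞} (h : ∀ d ∈ S, ‖z d‖ₑ ^ 2 ≤ α d * β d) :
    ‖∑ d ∈ S, z d‖ₑ ^ 2 ≤ (∑ d ∈ S, α d) * ∑ d ∈ S, β d := by
  have hsqrt : ∀ d ∈ S, ‖z d‖ₑ ≤ α d ^ (1 / (2 : ℝ)) * β d ^ (1 / (2 : ℝ)) := fun d hd => by
    rw [← ENNReal.mul_rpow_of_nonneg _ _ (by norm_num)]
    calc ‖z d‖ₑ = (‖z d‖ₑ ^ 2) ^ (1 / (2 : ℝ)) := by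
          rw [← ENNReal.rpow_natCast, ← ENNReal.rpow_mul]; norm_num
      _ ≤ _ := ENNReal.rpow_le_rpow (h d hd) (by norm_num)
  have hCS := ((enorm_sum_le S z).trans (Finset.sum_le_sum hsqrt)).trans
    (ENNReal.inner_le_Lp_mul_Lq S _ _ Real.HolderConjugate.two_two)
  refine (pow_le_pow_left' hCS 2).trans (le_of_eq ?_)
  rw [mul_pow, ← ENNReal.rpow_mul_natCast, ← ENNReal.rpow_mul_natCast]
  simp only [← ENNReal.rpow_mul]
  norm_num

/-- Every point lies in at most `N` members of a finite family of sets. -/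
def OverlapLE {W : Type*} [Fintype W] (S : W → Set ℝ) (N : ℕ) : Prop :=
  ∀ ξ, ∑ w, (S w).indicator (fun _ => (1 : ℝ≥0∞)) ξ ≤ N

section

variable {W : Type*} [Fintype W] {χ : ℝ → ℂ} {a r : W → ℝ} {N : ℕ}

lemma enorm_dil_pow_le {M : ℝ≥0} (hM : ∀ u, ‖χ u‖ₑ ≤ M) (a r ξ : ℝ) {k : ℕ} (hk : k ≠ 0) :
    ‖dil χ a r ξ‖ₑ ^ k ≤ M ^ k * (freqSet χ a r).indicator (fun _ => 1) ξ := by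
  by_cases hξ : ξ ∈ freqSet χ a r
  · rw [Set.indicator_of_mem hξ, mul_one]
    exact pow_le_pow_left' (hM _) k
  · have hzero : dil χ a r ξ = 0 := image_eq_zero_of_notMem_tsupport (f := χ) hξ
    simp [hzero, hk]

lemma OverlapLE.sum_enorm_dil_pow_le (hN : OverlapLE (fun w => freqSet χ (a w) (r w)) N)
    {M : ℝ≥0} (hM : ∀ u, ‖χ u‖ₑ ≤ M) (ξ : ℝ) {k : ℕ} (hk : k ≠ 0) :
    ∑ w, ‖dil χ (a w) (r w) ξ‖ₑ ^ k ≤ M ^ k * N := by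
  refine (Finset.sum_le_sum fun w _ => enorm_dil_pow_le hM _ _ _ hk).trans ?_
  rw [← Finset.mul_sum]
  exact mul_le_mul' le_rfl (hN ξ)

lemma OverlapLE.sum_freqEnergy_le (hN : OverlapLE (fun w => freqSet χ (a w) (r w)) N)
    {h : ℝ → ℂ} (hh : Integrable h) :
    ∑ w, freqEnergy χ (a w) (r w) h ≤ N * ∫⁻ ξ, ‖𝓕 h ξ‖ₑ ^ 2 := by
  have hm : Measurable fun ξ => ‖𝓕 h ξ‖ₑ ^ 2 :=
    (continuous_fourier hh).measurable.enorm.pow_const 2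
  have henergy : ∀ w, freqEnergy χ (a w) (r w) h =
      ∫⁻ ξ, (freqSet χ (a w) (r w)).indicator (fun _ => (1 : ℝ≥0∞)) ξ * ‖𝓕 h ξ‖ₑ ^ 2 := fun w => by
    rw [freqEnergy, ← lintegral_indicator (measurableSet_freqSet _ _ _)]
    congr 1 with ξ
    by_cases hξ : ξ ∈ freqSet χ (a w) (r w) <;> simp [hξ]
  simp_rw [henergy]
  rw [← lintegral_finsetSum, ← lintegral_const_mul _ hm]
  swap
  · exact fun w _ => (measurable_const.indicator (measurableSet_freqSet _ _ _)).mul hm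
  refine lintegral_mono fun ξ => ?_
  rw [← Finset.sum_mul]
  exact mul_le_mul' (hN ξ) le_rfl

lemma lintegral_sqSum_symOp_le {χ : W → ℝ → ℂ} (hχ : ∀ w, IsSymbol (χ w)) {K : ℝ≥0∞}
    (hK : ∀ ξ, ∑ w, ‖χ w ξ‖ₑ ^ 2 ≤ K) {f : ℝ → ℂ} (hf : MemL1L2 f) :
    ∫⁻ x, sqSum (fun w => symOp (χ w) f) x ≤ K * ∫⁻ x, ‖f x‖ₑ ^ 2 := by
  have hm : Measurable fun ξ => ‖𝓕 f ξ‖ₑ ^ 2 :=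
    (continuous_fourier hf.integrable).measurable.enorm.pow_const 2
  rw [lintegral_sqSum fun w => (continuous_symOp (hχ w) hf).measurable]
  simp_rw [lintegral_symOp_sq (hχ _) hf]
  rw [← lintegral_finsetSum, ← hf.lintegral_fourier_sq, ← lintegral_const_mul _ hm]
  swap
  · exact fun w _ => ((hχ w).continuous.measurable.enorm.pow_const 2).mul hm
  refine lintegral_mono fun ξ => ?_
  rw [← Finset.sum_mul]
  exact mul_le_mul' (hK ξ) le_rfl

lemma lintegral_enorm_sum_symOp_sq_le {χ : W → ℝ → ℂ} (hχ : ∀ w, IsSymbol (χ w)) {K : ℝ≥0∞}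
    (hK : ∀ ξ, ∑ w, ‖χ w ξ‖ₑ ^ 2 ≤ K) {g : W → ℝ → ℂ} (hg : ∀ w, MemL1L2 (g w)) :
    ∫⁻ x, ‖∑ w, symOp (χ w) (g w) x‖ₑ ^ 2 ≤ K * ∫⁻ x, sqSum g x := by
  have hm : ∀ w, Measurable fun ξ => ‖𝓕 (g w) ξ‖ₑ ^ 2 := fun w =>
    (continuous_fourier (hg w).integrable).measurable.enorm.pow_const 2
  have hmem : ∀ w ∈ Finset.univ, MemL1L2 (symOp (χ w) (g w)) := fun w _ =>
    memL1L2_symOp (hχ w) (hg w)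
  have hsum := MemL1L2.sum hmem fun _ => 1
  have hfourier := fourier_sum (fun w hw => (hmem w hw).integrable) fun _ => 1
  simp only [one_mul] at hsum hfourier
  rw [← hsum.lintegral_fourier_sq, lintegral_sqSum fun w => (hg w).measurable]
  simp_rw [hfourier, fourier_symOp (hχ _) (hg _), ← (hg _).lintegral_fourier_sq]
  rw [← lintegral_finsetSum _ fun w _ => hm w,
    ← lintegral_const_mul _ (Finset.measurable_sum _ fun w _ => hm w)]
  refine lintegral_mono fun ξ => ?_
  refine (enorm_sum_sq_le_mul _ fun w _ => ?_).trans (mul_le_mul' (hK ξ) le_rfl)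
  rw [enorm_mul, mul_pow]

end

lemma min_inv_sq_mul_le {l ρ : ℝ} (hl : 0 < l) (hρ : 0 < ρ) : min (1 / ρ) (l ^ 2 * ρ) ≤ l := by
  rcases le_total (1 / ρ) l with h | h
  · exact (min_le_left _ _).trans h
  · refine (min_le_right _ _).trans ?_
    rw [le_div_iff₀ hρ] at h
    nlinarith

section

variable {W : Type*} [Fintype W] {χ : ℝ → ℂ} {a r : W → ℝ} {N : ℕ}

lemma OverlapLE.sum_enorm_phase_mul_symOp_sub_sq_le
    (hN : OverlapLE (fun w => freqSet χ (a w) (r w)) N) (hχ : IsSymbol χ) (hr : ∀ w, r w ≠ 0)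
    {f : ℝ → ℂ} (hf : MemL1L2 f) {k j : ℤ} (hf0 : ∀ y ∈ dyadicTriple k j, f y = 0) {x x' : ℝ}
    (hx : x ∈ dyadic k j) (hx' : x' ∈ dyadic k j) :
    ∑ w, ‖phase (a w) x * symOp (dil χ (a w) (r w)) f x -
        phase (a w) x' * symOp (dil χ (a w) (r w)) f x'‖ₑ ^ 2 ≤
      2 * symCost χ * N * (dyadicLen k *
        (tail k j x (fun y => ‖f y‖ₑ ^ 2) + tail k j x' (fun y => ‖f y‖ₑ ^ 2))) := by
  have henergy : ∀ t ∈ dyadic k j, ∑ w, freqEnergy χ (a w) (r w) (quot t f) ≤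
      N * tail k j t (fun y => ‖f y‖ₑ ^ 2) := fun t ht => by
    have hq := memL1L2_quot hf hf0 ht
    grw [hN.sum_freqEnergy_le hq.integrable, hq.lintegral_fourier_sq, lintegral_quot_sq_le hf0 ht]
  calc _ ≤ ∑ w, dyadicLen k * (2 * symCost χ) *
        (freqEnergy χ (a w) (r w) (quot x f) + freqEnergy χ (a w) (r w) (quot x' f)) := by
        gcongr with w
        refine (enorm_phase_mul_symOp_sub_sq_le hχ (a w) (hr w) hf hf0 hx hx').trans ?_
        gcongr
        exact ENNReal.ofReal_le_ofReal (min_inv_sq_mul_le (by positivity) (abs_pos.2 (hr w)))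
    _ ≤ dyadicLen k * (2 * symCost χ) * (N * tail k j x (fun y => ‖f y‖ₑ ^ 2) +
        N * tail k j x' (fun y => ‖f y‖ₑ ^ 2)) := by
        rw [← Finset.mul_sum, Finset.sum_add_distrib]
        grw [henergy x hx, henergy x' hx']
    _ = _ := by ring

lemma isOscillationControlled_symOp_dil (hN : OverlapLE (fun w => freqSet χ (a w) (r w)) N)
    (hχ : IsSymbol χ) (hr : ∀ w, r w ≠ 0) {M : ℝ≥0} (hM : ∀ u, ‖χ u‖ₑ ≤ M) :
    IsOscillationControlled (M ^ 2 * N + 2 * (symCost χ).toNNReal * N) a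
      fun (g : Unit → ℝ → ℂ) w => symOp (dil χ (a w) (r w)) (g ()) := by
  have hdil : ∀ w, IsSymbol (dil χ (a w) (r w)) := fun w => hχ.dil (a w) (hr w)
  have hsq : ∀ g : Unit → ℝ → ℂ, sqSum g = fun y => ‖g () y‖ₑ ^ 2 := fun g => by
    ext y
    simp only [sqSum, Finset.univ_unique, PUnit.default_eq_unit, Finset.sum_singleton]
  constructor
  · exact fun g h hg hh => funext₂ fun w x => symOp_add_right (hdil w) (hg ()) (hh ()) x
  · exact fun g hg w => continuous_symOp (hdil w) (hg ())
  · exact fun g _ w => exists_norm_symOp_le _ _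
  · intro g hg
    refine (lintegral_sqSum_symOp_le hdil (hN.sum_enorm_dil_pow_le hM · two_ne_zero)
      (hg ())).trans ?_
    rw [hsq]
    push_cast
    gcongr
    exact le_self_add
  · intro k j g hg hg0 x hx x' hx'
    refine (hN.sum_enorm_phase_mul_symOp_sub_sq_le hχ hr (hg ()) (hg0 ()) hx hx').trans ?_
    rw [hsq]
    push_cast
    rw [ENNReal.coe_toNNReal hχ.symCost_ne_top]
    gcongr
    exact le_add_self

end

theorem exists_rubioDeFrancia {χ : ℝ → ℂ} (hχ : IsSymbol χ) {s : ℝ} (hs : 1 < s) (N : ℕ) :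
    ∃ C : ℝ≥0∞, C ≠ ∞ ∧ ∀ (W : Type) [Fintype W] (a r : W → ℝ), (∀ w, r w ≠ 0) →
      OverlapLE (fun w => freqSet χ (a w) (r w)) N → ∀ f, MemL1L2 f →
      ∫⁻ x, sqSum (fun w => symOp (dil χ (a w) (r w)) f) x ^ s ≤ C * ∫⁻ x, (‖f x‖ₑ ^ 2) ^ s := by
  obtain ⟨M, hM⟩ := hχ.exists_enorm_le
  obtain ⟨C, hC, h⟩ := exists_lintegral_sqSum_rpow_le hs
    (M ^ 2 * N + 2 * (symCost χ).toNNReal * N)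
  refine ⟨C, hC, fun W _ a r hr hN f hf => ?_⟩
  simpa [sqSum] using h _ _ a _ (isOscillationControlled_symOp_dil hN hχ hr hM) (fun _ => f)
    fun _ => hf

lemma hasSum_half_pow_natAbs : HasSum (fun n : ℤ => (1 / 2 : ℝ) ^ n.natAbs) 3 := by
  have hnat : HasSum (fun n : ℕ => (1 / 2 : ℝ) ^ (n : ℤ).natAbs) 2 := by
    simpa only [Int.natAbs_natCast] using hasSum_geometric_two
  have hneg : HasSum (fun n : ℕ => (1 / 2 : ℝ) ^ (-((n : ℤ) + 1)).natAbs) 1 := by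
    have hpow : ∀ n : ℕ, (1 / 2 : ℝ) ^ (-((n : ℤ) + 1)).natAbs = 1 / 2 * (1 / 2) ^ n := fun n => by
      rw [Int.natAbs_neg, show ((n : ℤ) + 1).natAbs = n + 1 by lia, pow_succ']
    simp only [hpow]
    have h := hasSum_geometric_two.mul_left (1 / 2 : ℝ)
    rwa [show (1 / 2 * 2 : ℝ) = 1 by norm_num] at h
  rw [show (3 : ℝ) = 2 + 1 by norm_num]
  exact HasSum.of_nat_of_neg_add_one hnat hneg

lemma min_inv_self_le {c : ℝ} (hc : 1 / 2 ≤ c) (hc' : c ≤ 2) (n : ℤ) :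
    min (c * 2 ^ n)⁻¹ (c * 2 ^ n) ≤ 2 * (1 / 2) ^ n.natAbs := by
  have hc0 : 0 < c := by linarith
  obtain ⟨t, rfl | rfl⟩ := n.eq_nat_or_neg
  · refine (min_le_left _ _).trans ?_
    rw [zpow_natCast, Int.natAbs_natCast, mul_inv, one_div, inv_pow]
    gcongr
    rw [inv_le_comm₀ hc0 two_pos]
    linarith
  · refine (min_le_right _ _).trans ?_
    rw [zpow_neg, zpow_natCast, Int.natAbs_neg, Int.natAbs_natCast, one_div, inv_pow]
    gcongr

lemma sum_min_inv_sq_mul_le {D : Type*} [Fintype D] {e : D → ℤ} (he : Function.Injective e)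
    {l ρ : ℝ} (hl : 0 < l) (hρ : 0 < ρ) :
    ∑ d, min (1 / (ρ * 2 ^ e d)) (l ^ 2 * (ρ * 2 ^ e d)) ≤ 6 * l := by
  obtain ⟨m, hm, hm'⟩ := exists_mem_Ico_zpow (x := 1 / (l * ρ)) (y := 2) (by positivity)
    (by norm_num)
  rw [le_div_iff₀ (by positivity)] at hm
  rw [div_lt_iff₀ (by positivity), zpow_add_one₀ (by norm_num)] at hm'
  have hterm : ∀ d, min (1 / (ρ * 2 ^ e d)) (l ^ 2 * (ρ * 2 ^ e d)) ≤
      2 * l * (1 / 2) ^ (e d - m).natAbs := fun d => by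
    have hsplit : (2 : ℝ) ^ e d = 2 ^ m * 2 ^ (e d - m) := by
      rw [← zpow_add₀ two_ne_zero, add_sub_cancel]
    have hmin := min_inv_self_le (c := 2 ^ m * (l * ρ)) (by linarith) (by linarith) (e d - m)
    calc _ = l * min (2 ^ m * (l * ρ) * 2 ^ (e d - m))⁻¹ (2 ^ m * (l * ρ) * 2 ^ (e d - m)) := by
          rw [mul_min_of_nonneg _ _ hl.le, hsplit]
          congr 1 <;> field_simp
      _ ≤ l * (2 * (1 / 2) ^ (e d - m).natAbs) := by gcongr
      _ = _ := by ring
  have hinj : Function.Injective fun d => e d - m := fun d d' h => he (by simpa using h)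
  calc _ ≤ ∑ d, 2 * l * (1 / 2 : ℝ) ^ (e d - m).natAbs := Finset.sum_le_sum fun d _ => hterm d
    _ = 2 * l * ∑ d, (1 / 2 : ℝ) ^ (e d - m).natAbs := by rw [Finset.mul_sum]
    _ ≤ 2 * l * 3 := by
      gcongr
      rw [← hasSum_half_pow_natAbs.tsum_eq,
        ← tsum_fintype (L := .unconditional D) (fun d => (1 / 2 : ℝ) ^ (e d - m).natAbs)]
      exact tsum_comp_le_tsum_of_inj hasSum_half_pow_natAbs.summable (fun _ => by positivity) hinj
    _ = _ := by ring

section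

variable {D : Type*} [Fintype D] {e : D → ℤ} {ψ : ℝ → ℂ}

lemma enorm_phase_mul_sum_symOp_sub_sq_le (hψ : IsSymbol ψ) (he : Function.Injective e)
    (a : ℝ) {r : ℝ} (hr : r ≠ 0) {g : D → ℝ → ℂ} (hg : ∀ d, MemL1L2 (g d)) {k j : ℤ}
    (hg0 : ∀ d, ∀ y ∈ dyadicTriple k j, g d y = 0) {x x' : ℝ} (hx : x ∈ dyadic k j)
    (hx' : x' ∈ dyadic k j) :
    ‖phase a x * ∑ d, symOp (dil ψ a (r * 2 ^ e d)) (g d) x -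
        phase a x' * ∑ d, symOp (dil ψ a (r * 2 ^ e d)) (g d) x'‖ₑ ^ 2 ≤
      12 * symCost ψ * (dyadicLen k * (tail k j x (sqSum g) + tail k j x' (sqSum g))) := by
  have hfreq : ∀ d, ∀ t ∈ dyadic k j, freqEnergy ψ a (r * 2 ^ e d) (quot t (g d)) ≤
      tail k j t (fun y => ‖g d y‖ₑ ^ 2) := fun d t ht => by
    refine (setLIntegral_le_lintegral _ _).trans ?_
    rw [(memL1L2_quot (hg d) (hg0 d) ht).lintegral_fourier_sq]
    exact lintegral_quot_sq_le (hg0 d) ht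
  have hmin : ∑ d, ENNReal.ofReal (min (1 / |r * 2 ^ e d|) (((2 : ℝ) ^ k) ^ 2 * |r * 2 ^ e d|)) ≤
      6 * dyadicLen k := by
    have h2 : ∀ d, |(2 : ℝ) ^ e d| = 2 ^ e d := fun d => abs_of_pos (by positivity)
    simp only [abs_mul, h2]
    rw [← ENNReal.ofReal_sum_of_nonneg fun d _ => by positivity, dyadicLen,
      show (6 : ℝ≥0∞) = ENNReal.ofReal 6 by norm_num, ← ENNReal.ofReal_mul (by norm_num)]
    exact ENNReal.ofReal_le_ofReal (sum_min_inv_sq_mul_le he (by positivity) (abs_pos.2 hr))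
  have htail : ∀ t, tail k j t (sqSum g) = ∑ d, tail k j t (fun y => ‖g d y‖ₑ ^ 2) := fun t =>
    tail_sum fun d => (hg d).measurable.enorm.pow_const 2
  rw [Finset.mul_sum, Finset.mul_sum, ← Finset.sum_sub_distrib]
  refine (enorm_sum_sq_le_mul _
    (α := fun d => ENNReal.ofReal (min (1 / |r * 2 ^ e d|) (((2 : ℝ) ^ k) ^ 2 * |r * 2 ^ e d|)))
    (β := fun d => 2 * symCost ψ * (tail k j x (fun y => ‖g d y‖ₑ ^ 2) +
      tail k j x' (fun y => ‖g d y‖ₑ ^ 2))) fun d _ => ?_).trans ?_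
  · refine (enorm_phase_mul_symOp_sub_sq_le hψ a (mul_ne_zero hr (by positivity)) (hg d) (hg0 d)
      hx hx').trans ?_
    grw [hfreq d x hx, hfreq d x' hx', mul_assoc]
  · rw [← Finset.mul_sum, Finset.sum_add_distrib, ← htail, ← htail]
    grw [hmin]
    exact le_of_eq (by ring)

lemma isOscillationControlled_sum_symOp_dil {ι : Type*} [Fintype ι] {a r : ι → ℝ} {N : ℕ}
    (hN : ∀ i, OverlapLE (fun d => freqSet ψ (a i) (r i * 2 ^ e d)) N) (hψ : IsSymbol ψ)
    (he : Function.Injective e) (hr : ∀ i, r i ≠ 0) {M : ℝ≥0} (hM : ∀ u, ‖ψ u‖ₑ ≤ M) :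
    IsOscillationControlled (M ^ 2 * N + 12 * (symCost ψ).toNNReal) a
      fun (g : ι × D → ℝ → ℂ) i x => ∑ d, symOp (dil ψ (a i) (r i * 2 ^ e d)) (g (i, d)) x := by
  have hdil : ∀ i d, IsSymbol (dil ψ (a i) (r i * 2 ^ e d)) := fun i d =>
    hψ.dil _ (mul_ne_zero (hr i) (by positivity))
  have hcont : ∀ g : ι × D → ℝ → ℂ, (∀ l, MemL1L2 (g l)) → ∀ i,
      Continuous fun x => ∑ d, symOp (dil ψ (a i) (r i * 2 ^ e d)) (g (i, d)) x := fun g hg i =>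
    continuous_finsetSum _ fun d _ => continuous_symOp (hdil i d) (hg _)
  have hsq : ∀ g : ι × D → ℝ → ℂ, sqSum g = fun x => ∑ i, sqSum (fun d => g (i, d)) x := fun g =>
    funext fun x => Fintype.sum_prod_type _
  have hgm : ∀ g : ι × D → ℝ → ℂ, (∀ l, MemL1L2 (g l)) → ∀ i,
      Measurable (sqSum fun d => g (i, d)) := fun g hg i =>
    measurable_sqSum fun d => (hg (i, d)).measurable
  constructor
  · refine fun g h hg hh => funext₂ fun i x => ?_
    rw [← Finset.sum_add_distrib]
    exact Finset.sum_congr rfl fun d _ => symOp_add_right (hdil i d) (hg _) (hh _) x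
  · exact hcont
  · intro g _ i
    choose b hb using fun d => exists_norm_symOp_le (dil ψ (a i) (r i * 2 ^ e d)) (g (i, d))
    refine ⟨∑ d, b d, fun x => ?_⟩
    push_cast
    exact (enorm_sum_le _ _).trans (Finset.sum_le_sum fun d _ => hb d x)
  · intro g hg
    rw [lintegral_sqSum fun i => (hcont g hg i).measurable, hsq,
      lintegral_finsetSum _ fun i _ => hgm g hg i, Finset.mul_sum]
    gcongr with i
    refine (lintegral_enorm_sum_symOp_sq_le (hdil i)
      ((hN i).sum_enorm_dil_pow_le hM · two_ne_zero) fun d => hg (i, d)).trans ?_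
    push_cast
    gcongr
    exact le_self_add
  · intro k j g hg hg0 x hx x' hx'
    rw [hsq, tail_sum (hgm g hg), tail_sum (hgm g hg), ← Finset.sum_add_distrib, Finset.mul_sum,
      Finset.mul_sum]
    gcongr with i
    refine (enorm_phase_mul_sum_symOp_sub_sq_le hψ he (a i) (hr i) (fun d => hg (i, d))
      (fun d => hg0 (i, d)) hx hx').trans ?_
    push_cast
    rw [ENNReal.coe_toNNReal hψ.symCost_ne_top]
    gcongr
    exact le_add_self

end

theorem exists_lintegral_sqSum_sum_symOp_rpow_le {ψ : ℝ → ℂ} (hψ : IsSymbol ψ) {s : ℝ} (hs : 1 < s)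
    (N : ℕ) :
    ∃ C : ℝ≥0∞, C ≠ ∞ ∧ ∀ (ι D : Type) [Fintype ι] [Fintype D] (e : D → ℤ) (a r : ι → ℝ),
      Function.Injective e → (∀ i, r i ≠ 0) →
      (∀ i, OverlapLE (fun d => freqSet ψ (a i) (r i * 2 ^ e d)) N) →
      ∀ g : ι → D → ℝ → ℂ, (∀ i d, MemL1L2 (g i d)) →
        ∫⁻ x, sqSum (fun i x => ∑ d, symOp (dil ψ (a i) (r i * 2 ^ e d)) (g i d) x) x ^ s ≤
        C * ∫⁻ x, (∑ i, sqSum (g i) x) ^ s := by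
  obtain ⟨M, hM⟩ := hψ.exists_enorm_le
  obtain ⟨C, hC, h⟩ := exists_lintegral_sqSum_rpow_le hs (M ^ 2 * N + 12 * (symCost ψ).toNNReal)
  refine ⟨C, hC, fun ι D _ _ e a r he hr hN g hg => ?_⟩
  simpa only [sqSum, Fintype.sum_prod_type] using h _ _ a _
    (isOscillationControlled_sum_symOp_dil hN hψ he hr hM) (fun l => g l.1 l.2) fun l => hg l.1 l.2

/-! ### Smooth truncations of step multipliers -/

/-- A smooth step from `0` to `1`, across `[1/3, 2/3]`. -/
noncomputable def step (t : ℝ) : ℝ := Real.smoothTransition (3 * t - 1)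

lemma step_of_le {t : ℝ} (h : t ≤ 1 / 3) : step t = 0 :=
  Real.smoothTransition.zero_of_nonpos (by linarith)

lemma step_of_ge {t : ℝ} (h : 2 / 3 ≤ t) : step t = 1 :=
  Real.smoothTransition.one_of_one_le (by linarith)

lemma step_mem_Icc (t : ℝ) : step t ∈ Set.Icc 0 1 :=
  ⟨Real.smoothTransition.nonneg _, Real.smoothTransition.le_one _⟩

lemma step_add_step_one_sub (t : ℝ) : step t + step (1 - t) = 1 := by
  have hpos := (Real.smoothTransition.pos_denom (3 * t - 1)).ne'
  have hflip : 3 * (1 - t) - 1 = 1 - (3 * t - 1) := by ring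
  rw [step, step, hflip, Real.smoothTransition, Real.smoothTransition, sub_sub_cancel,
    add_comm (expNegInvGlue (1 - (3 * t - 1))), ← add_div, div_self hpos]

/-- The difference of two consecutive dyadic dilates of `step`. -/
noncomputable def bump (t : ℝ) : ℂ := ((step (2 * t) - step t : ℝ) : ℂ)

/-- A smooth compactly supported function equal to `1` on the support of `bump`. -/
noncomputable def fatBump (t : ℝ) : ℂ :=
  ((Real.smoothTransition (12 * t - 1) * Real.smoothTransition (2 - 3 / 2 * t) : ℝ) : ℂ)

lemma bump_eq_zero {t : ℝ} (h : t ∉ Set.Icc (1 / 6 : ℝ) (2 / 3)) : bump t = 0 := by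
  rw [Set.mem_Icc, not_and_or, not_le, not_le] at h
  rcases h with h | h
  · rw [bump, step_of_le (by linarith), step_of_le (by linarith), sub_zero, ofReal_zero]
  · rw [bump, step_of_ge (by linarith), step_of_ge (by linarith), sub_self, ofReal_zero]

lemma tsupport_bump_subset : tsupport bump ⊆ Set.Icc (1 / 6) (2 / 3) :=
  closure_minimal (fun _ ht => by_contra fun h => ht (bump_eq_zero h)) isClosed_Icc

lemma enorm_bump_le_one (t : ℝ) : ‖bump t‖ₑ ≤ 1 := by
  obtain ⟨h₀, h₁⟩ := step_mem_Icc t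
  obtain ⟨h₀', h₁'⟩ := step_mem_Icc (2 * t)
  rw [← ofReal_norm, bump, Complex.norm_real, ← ENNReal.ofReal_one, Real.norm_eq_abs]
  exact ENNReal.ofReal_le_ofReal (abs_le.2 ⟨by linarith, by linarith⟩)

lemma fatBump_eq_zero {t : ℝ} (h : t ∉ Set.Icc (1 / 12 : ℝ) (4 / 3)) : fatBump t = 0 := by
  rw [Set.mem_Icc, not_and_or, not_le, not_le] at h
  rcases h with h | h
  · rw [fatBump, Real.smoothTransition.zero_of_nonpos (by linarith), zero_mul, ofReal_zero]
  · rw [fatBump, Real.smoothTransition.zero_of_nonpos (x := 2 - 3 / 2 * t) (by linarith), mul_zero,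
      ofReal_zero]

lemma tsupport_fatBump_subset : tsupport fatBump ⊆ Set.Icc (1 / 12) (4 / 3) :=
  closure_minimal (fun _ ht => by_contra fun h => ht (fatBump_eq_zero h)) isClosed_Icc

lemma fatBump_eq_one {t : ℝ} (h : t ∈ Set.Icc (1 / 6 : ℝ) (2 / 3)) : fatBump t = 1 := by
  rw [fatBump, Real.smoothTransition.one_of_one_le (by linarith [h.1]),
    Real.smoothTransition.one_of_one_le (by linarith [h.2]), mul_one, ofReal_one]

lemma isSymbol_bump : IsSymbol bump := by
  have hstep : ∀ c : ℝ, ContDiff ℝ ((⊤ : ℕ∞) : WithTop ℕ∞) fun t : ℝ => step (c * t) := fun c =>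
    Real.smoothTransition.contDiff.comp (by fun_prop)
  refine ⟨ofRealCLM.contDiff.comp ((hstep 2).sub (by simpa only [one_mul] using hstep 1)), ?_⟩
  exact HasCompactSupport.intro isCompact_Icc fun t ht => bump_eq_zero ht

lemma isSymbol_fatBump : IsSymbol fatBump := by
  refine ⟨ofRealCLM.contDiff.comp ((Real.smoothTransition.contDiff.comp (by fun_prop)).mul
    (Real.smoothTransition.contDiff.comp (by fun_prop))), ?_⟩
  exact HasCompactSupport.intro isCompact_Icc fun t ht => fatBump_eq_zero ht

lemma sum_bump (W : ℕ) (t : ℝ) :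
    ∑ d : Fin W, bump (2 ^ (d : ℕ) * t) = ((step (2 ^ W * t) - step t : ℝ) : ℂ) := by
  have hbump : ∀ d, bump (2 ^ d * t) = (step (2 ^ (d + 1) * t) : ℂ) - step (2 ^ d * t) := by
    intro d
    rw [bump, pow_succ', mul_assoc, ofReal_sub]
  rw [Fin.sum_univ_eq_sum_range (fun d => bump (2 ^ d * t)) W,
    Finset.sum_congr rfl fun d _ => hbump d,
    Finset.sum_range_sub (fun d => (step (2 ^ d * t) : ℂ)), pow_zero, one_mul, ofReal_sub]

lemma card_le_of_zpow_mul_mem_Icc {T : Finset ℤ} {t lo hi : ℝ} {m : ℕ} (hlo : 0 < lo)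
    (hm : hi ≤ 2 ^ m * lo) (h : ∀ d ∈ T, (2 : ℝ) ^ d * t ∈ Set.Icc lo hi) : T.card ≤ m + 1 := by
  rcases T.eq_empty_or_nonempty with rfl | hT
  · simp
  set d₀ := T.min' hT
  obtain ⟨hlo₀, -⟩ := h d₀ (T.min'_mem hT)
  have hsub : T ⊆ Finset.Icc d₀ (d₀ + m) := fun d hd => by
    rw [Finset.mem_Icc]
    refine ⟨T.min'_le d hd, ?_⟩
    by_contra! hlt
    have hpow : (2 : ℝ) ^ m < 2 ^ (d - d₀) := by
      rw [← zpow_natCast]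
      exact zpow_lt_zpow_right₀ one_lt_two (by lia)
    have hsplit : (2 : ℝ) ^ d * t = 2 ^ (d - d₀) * (2 ^ d₀ * t) := by
      rw [← mul_assoc, ← zpow_add₀ two_ne_zero, sub_add_cancel]
    have hhi := (h d hd).2
    rw [hsplit] at hhi
    nlinarith [show (0 : ℝ) < 2 ^ m by positivity]
  refine (Finset.card_le_card hsub).trans ?_
  rw [Int.card_Icc]
  lia

lemma overlapLE_freqSet_mul_zpow {χ : ℝ → ℂ} {lo hi : ℝ} {m : ℕ} (hlo : 0 < lo)
    (hm : hi ≤ 2 ^ m * lo) (hχ : tsupport χ ⊆ Set.Icc lo hi) {D : Type*} [Fintype D] {e : D → ℤ}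
    (he : Function.Injective e) (a r : ℝ) :
    OverlapLE (fun d => freqSet χ a (r * 2 ^ e d)) (m + 1) := fun ξ => by
  classical
  have hinj : Function.Injective fun d => -e d := fun d d' h => he (neg_injective h)
  simp only [Set.indicator_apply, Finset.sum_boole]
  rw [← Finset.card_image_of_injective _ hinj, Nat.cast_le]
  refine card_le_of_zpow_mul_mem_Icc (t := (ξ - a) / r) hlo hm fun d hd => ?_
  obtain ⟨d', hd', rfl⟩ := Finset.mem_image.1 hd
  have hmem : (ξ - a) / (r * 2 ^ e d') ∈ Set.Icc lo hi := hχ (Finset.mem_filter.1 hd').2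
  rwa [← div_div, div_eq_inv_mul, ← zpow_neg] at hmem

/-- The endpoint of `(α, β)` from which the pieces on the given side are measured. -/
def endpt (α β : ℝ) (b : Bool) : ℝ := if b then α else β

/-- The length of `(α, β)`, with the sign that makes it point inwards from `endpt α β b`. -/
def signedLen (α β : ℝ) (b : Bool) : ℝ := if b then β - α else α - β

/-- The `d`-th piece, counted from one of the endpoints, of a smooth Whitney decomposition of the
indicator of `(α, β)`. -/
noncomputable def piece (α β : ℝ) (b : Bool) (d : ℕ) : ℝ → ℂ :=
  dil bump (endpt α β b) (signedLen α β b * 2 ^ (-(d : ℤ)))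

section

variable {α β : ℝ}

lemma signedLen_ne_zero (h : α < β) (b : Bool) : signedLen α β b ≠ 0 := by
  cases b <;> simp [signedLen, sub_eq_zero, h.ne, h.ne']

lemma div_signedLen_mul_zpow (x : ℝ) (b : Bool) (d : ℕ) :
    x / (signedLen α β b * 2 ^ (-(d : ℤ))) = 2 ^ d * (x / signedLen α β b) := by
  rw [zpow_neg, zpow_natCast, ← div_eq_mul_inv, div_div_eq_mul_div, mul_comm, mul_div_assoc]

lemma freqSet_bump_subset_Ioo (h : α < β) (b : Bool) (d : ℕ) :
    freqSet bump (endpt α β b) (signedLen α β b * 2 ^ (-(d : ℤ))) ⊆ Set.Ioo α β := by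
  intro ξ hξ
  have hpow : (1 : ℝ) ≤ 2 ^ d := one_le_pow₀ one_le_two
  obtain ⟨hlow, hhigh⟩ : (ξ - endpt α β b) / (signedLen α β b * 2 ^ (-(d : ℤ))) ∈ Set.Icc _ _ :=
    tsupport_bump_subset hξ
  rw [div_signedLen_mul_zpow] at hlow hhigh
  set t := (ξ - endpt α β b) / signedLen α β b with ht
  have ht₀ : 0 < t := by
    by_contra! hneg
    nlinarith
  have ht₁ : t < 1 := by nlinarith
  have hξt : ξ = endpt α β b + t * signedLen α β b := by
    rw [ht, div_mul_cancel₀ _ (signedLen_ne_zero h b), add_sub_cancel]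
  rw [hξt]
  cases b <;> simp only [endpt, signedLen, Set.mem_Ioo] <;> constructor <;> norm_num <;> nlinarith

lemma isSymbol_piece (h : α < β) (b : Bool) (d : ℕ) : IsSymbol (piece α β b d) :=
  isSymbol_bump.dil _ (mul_ne_zero (signedLen_ne_zero h b) (by positivity))

lemma piece_eq_zero (h : α < β) (b : Bool) (d : ℕ) {ξ : ℝ} (hξ : ξ ∉ Set.Ioo α β) :
    piece α β b d ξ = 0 :=
  image_eq_zero_of_notMem_tsupport (f := bump) fun hmem => hξ (freqSet_bump_subset_Ioo h b d hmem)

lemma piece_apply (b : Bool) (d : ℕ) (ξ : ℝ) :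
    piece α β b d ξ = bump (2 ^ d * ((ξ - endpt α β b) / signedLen α β b)) := by
  rw [piece, dil, div_signedLen_mul_zpow]

lemma dil_fatBump_mul_piece (b : Bool) (d : ℕ) (ξ : ℝ) :
    dil fatBump (endpt α β b) (signedLen α β b * 2 ^ (-(d : ℤ))) ξ * piece α β b d ξ =
      piece α β b d ξ := by
  by_cases h : (ξ - endpt α β b) / (signedLen α β b * 2 ^ (-(d : ℤ))) ∈
      Set.Icc (1 / 6 : ℝ) (2 / 3)
  · rw [dil, fatBump_eq_one h, one_mul]
  · have hzero : piece α β b d ξ = 0 := bump_eq_zero h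
    rw [hzero, mul_zero]

lemma tendsto_step_two_pow_mul_sub (t : ℝ) :
    Filter.Tendsto (fun W : ℕ => ((step (2 ^ W * t) - step t : ℝ) : ℂ)) Filter.atTop
      (nhds (((if 0 < t then 1 else 0) - step t : ℝ) : ℂ)) := by
  refine tendsto_const_nhds.congr' ?_
  split_ifs with h
  · have hlim : Filter.Tendsto (fun W : ℕ => (2 : ℝ) ^ W * t) Filter.atTop Filter.atTop :=
      (tendsto_pow_atTop_atTop_of_one_lt one_lt_two).atTop_mul_const h
    filter_upwards [hlim.eventually_ge_atTop (2 / 3)] with W hW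
    rw [step_of_ge hW]
  · refine Filter.Eventually.of_forall fun W => ?_
    have hle : (2 : ℝ) ^ W * t ≤ 0 := mul_nonpos_of_nonneg_of_nonpos (by positivity) (not_lt.1 h)
    simp only [step_of_le (hle.trans (by norm_num))]

lemma tendsto_sum_piece (h : α < β) (ξ : ℝ) :
    Filter.Tendsto (fun W : ℕ => ∑ b : Bool, ∑ d : Fin W, piece α β b d ξ) Filter.atTop
      (nhds ((Set.Ioo α β).indicator (fun _ => 1) ξ)) := by
  have hlen : 0 < β - α := sub_pos.2 h
  set t := (ξ - α) / (β - α) with ht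
  have htrue : (ξ - endpt α β true) / signedLen α β true = t := rfl
  have hfalse : (ξ - endpt α β false) / signedLen α β false = 1 - t := by
    change (ξ - β) / (α - β) = 1 - t
    rw [ht, one_sub_div hlen.ne', ← neg_sub β ξ, ← neg_sub β α, neg_div_neg_eq]
    congr 1
    ring
  simp only [Fintype.sum_bool, piece_apply, sum_bump, htrue, hfalse]
  convert (tendsto_step_two_pow_mul_sub t).add (tendsto_step_two_pow_mul_sub (1 - t)) using 2
  have hstep := step_add_step_one_sub t
  have hmem : ξ ∈ Set.Ioo α β ↔ 0 < t ∧ 0 < 1 - t := by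
    rw [ht, sub_pos, div_lt_one hlen, div_pos_iff_of_pos_right hlen, sub_pos,
      sub_lt_sub_iff_right, Set.mem_Ioo]
  rw [← ofReal_add, Set.indicator_apply, ← ofReal_one, ← ofReal_zero, ← apply_ite]
  congr 1
  simp only [hmem]
  split_ifs <;> grind

end

/-- Finitely many disjoint intervals `(lo v, hi v)`, at most `n` of them in each block. The blocks
are indexed by a side `b`, which fixes a unit of length, and a scale: `(lo v, hi v)` is contained in
the dilate of `[1/6, 2/3]` by `unit b * 2 ^ scale k`, where `block v = (b, k)`. -/
structure Layout (S V : Type) [Fintype S] [Fintype V] [DecidableEq S] (n : ℕ) where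
  scale : S → ℤ
  scale_injective : Function.Injective scale
  unit : Bool → ℝ
  unit_ne_zero : ∀ b, unit b ≠ 0
  block : V → Bool × S
  lo : V → ℝ
  hi : V → ℝ
  lo_lt_hi : ∀ v, lo v < hi v
  card_block_le : ∀ l, (Finset.univ.filter fun v => block v = l).card ≤ n
  overlapLE : OverlapLE (fun v => Set.Ioo (lo v) (hi v)) 1
  div_mem : ∀ v, ∀ ξ ∈ Set.Ioo (lo v) (hi v),
    ξ / (unit (block v).1 * 2 ^ scale (block v).2) ∈ Set.Icc (1 / 6 : ℝ) (2 / 3)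

lemma injective_neg_fin_coe {W : ℕ} : Function.Injective fun d : Fin W => -((d : ℕ) : ℤ) :=
  neg_injective.comp (Nat.cast_injective.comp Fin.val_injective)

namespace Layout

variable {S V : Type} [Fintype S] [Fintype V] [DecidableEq S] {n : ℕ} (L : Layout S V n) {W : ℕ}

/-- The centre of dilation of a piece: `part w = dil bump (center w) (width w)`. -/
def center (w : V × Bool × Fin W) : ℝ := endpt (L.lo w.1) (L.hi w.1) w.2.1

/-- The dilation factor of a piece: `part w = dil bump (center w) (width w)`. -/
noncomputable def width (w : V × Bool × Fin W) : ℝ :=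
  signedLen (L.lo w.1) (L.hi w.1) w.2.1 * 2 ^ (-((w.2.2 : ℕ) : ℤ))

/-- The first `W` Whitney pieces on both sides of all the intervals of a layout. -/
noncomputable def part (w : V × Bool × Fin W) : ℝ → ℂ :=
  piece (L.lo w.1) (L.hi w.1) w.2.1 w.2.2

/-- The smooth truncation of the step function with value `c v` on the interval `v`. -/
noncomputable def symbol (c : V → ℂ) (W : ℕ) (ξ : ℝ) : ℂ :=
  ∑ w : V × Bool × Fin W, c w.1 * L.part w ξ

lemma width_ne_zero (w : V × Bool × Fin W) : L.width w ≠ 0 :=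
  mul_ne_zero (signedLen_ne_zero (L.lo_lt_hi _) _) (by positivity)

lemma isSymbol_part (w : V × Bool × Fin W) : IsSymbol (L.part w) :=
  isSymbol_piece (L.lo_lt_hi _) _ _

lemma isSymbol_symbol (c : V → ℂ) (W : ℕ) : IsSymbol (L.symbol c W) := by
  refine ⟨ContDiff.sum fun w _ => contDiff_const.mul (L.isSymbol_part w).smooth, ?_⟩
  refine HasCompactSupport.intro (isCompact_iUnion fun w : V × Bool × Fin W =>
    (L.isSymbol_part w).compact) fun ξ hξ => Finset.sum_eq_zero fun w _ => ?_
  rw [image_eq_zero_of_notMem_tsupport fun h => hξ (Set.mem_iUnion.2 ⟨w, h⟩), mul_zero]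

lemma overlapLE_freqSet_part (W : ℕ) :
    OverlapLE (fun w : V × Bool × Fin W => freqSet bump (L.center w) (L.width w)) 6 := fun ξ => by
  simp only [Fintype.sum_prod_type, center, width]
  calc _ ≤ ∑ v, (Set.Ioo (L.lo v) (L.hi v)).indicator (fun _ => (1 : ℝ≥0∞)) ξ * 6 := by
        refine Finset.sum_le_sum fun v _ => ?_
        by_cases hξ : ξ ∈ Set.Ioo (L.lo v) (L.hi v)
        · rw [Set.indicator_of_mem hξ, one_mul]
          calc _ ≤ ∑ b : Bool, ((2 + 1 : ℕ) : ℝ≥0∞) := Finset.sum_le_sum fun b _ =>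
                overlapLE_freqSet_mul_zpow (by norm_num) (by norm_num) tsupport_bump_subset
                  injective_neg_fin_coe _ _ ξ
            _ = 6 := by rw [Fintype.sum_bool]; norm_num
        · refine le_of_eq_of_le (Finset.sum_eq_zero fun b _ => Finset.sum_eq_zero fun d _ => ?_)
            zero_le
          exact Set.indicator_of_notMem
            (fun h => hξ (freqSet_bump_subset_Ioo (L.lo_lt_hi v) b d h)) _
    _ ≤ (1 : ℕ) * 6 := by
        rw [← Finset.sum_mul]
        exact mul_le_mul' (L.overlapLE ξ) le_rfl
    _ = _ := by norm_num

lemma enorm_symbol_le {c : V → ℂ} {A : ℝ≥0∞} (hc : ∀ v, ‖c v‖ₑ ≤ A) (W : ℕ) (ξ : ℝ) :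
    ‖L.symbol c W ξ‖ₑ ≤ 6 * A := by
  have hpart : ∑ w : V × Bool × Fin W, ‖L.part w ξ‖ₑ ≤ 6 := by
    simpa only [pow_one, ENNReal.coe_one, one_mul, Nat.cast_ofNat] using!
      (L.overlapLE_freqSet_part W).sum_enorm_dil_pow_le (M := 1) enorm_bump_le_one ξ one_ne_zero
  calc _ ≤ ∑ w : V × Bool × Fin W, ‖c w.1 * L.part w ξ‖ₑ := enorm_sum_le _ _
    _ ≤ ∑ w : V × Bool × Fin W, A * ‖L.part w ξ‖ₑ := by
        gcongr with w
        rw [enorm_mul]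
        grw [hc]
    _ ≤ A * 6 := by
        rw [← Finset.mul_sum]
        grw [hpart]
    _ = _ := mul_comm _ _

lemma lintegral_symOp_symbol_sq_le {c : V → ℂ} {A : ℝ≥0∞} (hc : ∀ v, ‖c v‖ₑ ≤ A) (W : ℕ)
    {f : ℝ → ℂ} (hf : MemL1L2 f) :
    ∫⁻ x, ‖symOp (L.symbol c W) f x‖ₑ ^ 2 ≤ (6 * A) ^ 2 * ∫⁻ x, ‖f x‖ₑ ^ 2 := by
  rw [lintegral_symOp_sq (L.isSymbol_symbol c W) hf, ← hf.lintegral_fourier_sq,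
    ← lintegral_const_mul _ ((continuous_fourier hf.integrable).measurable.enorm.pow_const 2)]
  exact lintegral_mono fun ξ =>
    mul_le_mul' (pow_le_pow_left' (L.enorm_symbol_le hc W ξ) 2) le_rfl

end Layout

lemma symOp_symOp_eq_self {η χ f : ℝ → ℂ} (hχ : IsSymbol χ) (hf : MemL1L2 f)
    (h : ∀ ξ, η ξ * χ ξ = χ ξ) : symOp η (symOp χ f) = symOp χ f := by
  rw [symOp_symOp hχ hf]
  simp only [h]

lemma symOp_sum {ι : Type*} {s : Finset ι} {χ : ℝ → ℂ} {f : ι → ℝ → ℂ} (hχ : IsSymbol χ)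
    (hf : ∀ i ∈ s, MemL1L2 (f i)) (x : ℝ) :
    symOp χ (fun x => ∑ i ∈ s, f i x) x = ∑ i ∈ s, symOp χ (f i) x := by
  simpa only [one_mul] using symOp_sum_right hχ hf (fun _ => 1) x

namespace Layout

variable {S V : Type} [Fintype S] [Fintype V] [DecidableEq S] {n : ℕ} (L : Layout S V n)

/-- The sum of the first `W` pieces on one side of an interval, applied to `f`. -/
noncomputable def sideOp (W : ℕ) (f : ℝ → ℂ) (v : V × Bool) (x : ℝ) : ℂ :=
  ∑ d : Fin W, symOp (L.part (v.1, v.2, d)) f x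

/-- The two sides of all the intervals in a given block. -/
def sides (l : Bool × S) : Finset (V × Bool) := Finset.univ.filter fun v => L.block v.1 = l

/-- The part of `symOp (symbol c W) f` coming from the intervals in a given block. -/
noncomputable def blockOp (c : V → ℂ) (W : ℕ) (f : ℝ → ℂ) (b : Bool) (k : S) (x : ℝ) : ℂ :=
  ∑ v ∈ L.sides (b, k), c v.1 * L.sideOp W f v x

variable {c : V → ℂ} {W : ℕ} {f : ℝ → ℂ}

lemma card_sides_le (l : Bool × S) : (L.sides l).card ≤ 2 * n := by
  have hprod : L.sides l =
      (Finset.univ.filter fun v => L.block v = l) ×ˢ (Finset.univ : Finset Bool) := by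
    ext v
    simp [sides]
  rw [hprod, Finset.card_product, Finset.card_univ, Fintype.card_bool, mul_comm]
  exact Nat.mul_le_mul_left 2 (L.card_block_le l)

lemma memL1L2_symOp_part (hf : MemL1L2 f) (w : V × Bool × Fin W) :
    MemL1L2 (symOp (L.part w) f) :=
  memL1L2_symOp (L.isSymbol_part w) hf

lemma memL1L2_sideOp (hf : MemL1L2 f) (v : V × Bool) : MemL1L2 (L.sideOp W f v) := by
  simpa only [one_mul] using! MemL1L2.sum (s := Finset.univ)
    (fun (d : Fin W) _ => L.memL1L2_symOp_part hf (v.1, v.2, d)) fun _ => 1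

lemma memL1L2_blockOp (hf : MemL1L2 f) (b : Bool) (k : S) : MemL1L2 (L.blockOp c W f b k) :=
  MemL1L2.sum (fun v _ => L.memL1L2_sideOp hf v) _

lemma symOp_symbol_eq_sum_blockOp (hf : MemL1L2 f) (x : ℝ) :
    symOp (L.symbol c W) f x = ∑ b, ∑ k, L.blockOp c W f b k x := by
  have hsides : ∑ l : Bool × S, L.blockOp c W f l.1 l.2 x =
      ∑ v : V × Bool, c v.1 * L.sideOp W f v x :=
    Finset.sum_fiberwise (s := Finset.univ) (g := fun v : V × Bool => L.block v.1)
      (f := fun v => c v.1 * L.sideOp W f v x)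
  rw [← Fintype.sum_prod_type (f := fun l : Bool × S => L.blockOp c W f l.1 l.2 x), hsides]
  refine (symOp_sum_left (fun w _ => L.isSymbol_part (W := W) w) hf (fun w => c w.1) x).trans ?_
  simp only [Fintype.sum_prod_type, sideOp, Finset.mul_sum]

lemma enorm_symOp_symbol_sq_le (hf : MemL1L2 f) (x : ℝ) :
    ‖symOp (L.symbol c W) f x‖ₑ ^ 2 ≤ 2 * sqSum (fun b x => ∑ k, L.blockOp c W f b k x) x := by
  rw [L.symOp_symbol_eq_sum_blockOp hf, sqSum, Fintype.sum_bool, Fintype.sum_bool]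
  exact enorm_add_sq_le _ _

lemma dil_fatBump_mul_part {w : V × Bool × Fin W} {b : Bool} {k : S} (hw : L.block w.1 = (b, k))
    (ξ : ℝ) : dil fatBump 0 (L.unit b * 2 ^ L.scale k) ξ * L.part w ξ = L.part w ξ := by
  by_cases hξ : ξ ∈ Set.Ioo (L.lo w.1) (L.hi w.1)
  · have hmem := L.div_mem w.1 ξ hξ
    rw [hw] at hmem
    rw [dil, sub_zero, fatBump_eq_one hmem, one_mul]
  · have hzero : L.part w ξ = 0 := piece_eq_zero (L.lo_lt_hi _) _ _ hξ
    rw [hzero, mul_zero]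

lemma symOp_dil_fatBump_blockOp (hf : MemL1L2 f) (b : Bool) (k : S) (x : ℝ) :
    symOp (dil fatBump 0 (L.unit b * 2 ^ L.scale k)) (L.blockOp c W f b k) x =
      L.blockOp c W f b k x := by
  have hdil : IsSymbol (dil fatBump 0 (L.unit b * 2 ^ L.scale k)) :=
    isSymbol_fatBump.dil _ (mul_ne_zero (L.unit_ne_zero b) (by positivity))
  refine (symOp_sum_right hdil (fun v _ => L.memL1L2_sideOp hf v) _ x).trans
    (Finset.sum_congr rfl fun v hv => congrArg _ ?_)
  refine (symOp_sum hdil (fun d _ => L.memL1L2_symOp_part hf _) x).trans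
    (Finset.sum_congr rfl fun d _ => ?_)
  rw [symOp_symOp_eq_self (L.isSymbol_part _) hf
    (L.dil_fatBump_mul_part (Finset.mem_filter.1 hv).2)]

lemma sum_sqSum_blockOp_le {A : ℝ≥0∞} (hc : ∀ v, ‖c v‖ₑ ≤ A) (x : ℝ) :
    ∑ b, sqSum (L.blockOp c W f b) x ≤ 2 * (n * A ^ 2) * sqSum (L.sideOp W f) x := by
  have hcoeff : ∀ l, ∑ v ∈ L.sides l, ‖c v.1‖ₑ ^ 2 ≤ 2 * (n * A ^ 2) := fun l => by
    calc _ ≤ ∑ _ ∈ L.sides l, A ^ 2 := Finset.sum_le_sum fun _ _ => pow_le_pow_left' (hc _) 2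
      _ ≤ ((2 * n : ℕ) : ℝ≥0∞) * A ^ 2 := by
        rw [Finset.sum_const, nsmul_eq_mul]
        grw [L.card_sides_le l]
      _ = _ := by rw [Nat.cast_mul, Nat.cast_ofNat, mul_assoc]
  have hblock : ∀ l : Bool × S, ‖L.blockOp c W f l.1 l.2 x‖ₑ ^ 2 ≤
      2 * (n * A ^ 2) * ∑ v ∈ L.sides l, ‖L.sideOp W f v x‖ₑ ^ 2 := fun l => by
    refine (enorm_sum_sq_le_mul _ (α := fun v => ‖c v.1‖ₑ ^ 2)
      (β := fun v => ‖L.sideOp W f v x‖ₑ ^ 2) fun v _ => by rw [enorm_mul, mul_pow]).trans ?_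
    grw [hcoeff l]
  simp only [sqSum]
  rw [← Fintype.sum_prod_type (f := fun l : Bool × S => ‖L.blockOp c W f l.1 l.2 x‖ₑ ^ 2)]
  refine (Finset.sum_le_sum fun l _ => hblock l).trans (le_of_eq ?_)
  rw [← Finset.mul_sum]
  congr 1
  exact Finset.sum_fiberwise (s := Finset.univ) (g := fun v : V × Bool => L.block v.1)
    (f := fun v => ‖L.sideOp W f v x‖ₑ ^ 2)

end Layout

lemma overlapLE_freqSet_fatBump {D : Type*} [Fintype D] {e : D → ℤ} (he : Function.Injective e)
    (a r : ℝ) : OverlapLE (fun d => freqSet fatBump a (r * 2 ^ e d)) 5 :=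
  overlapLE_freqSet_mul_zpow (m := 4) (by norm_num) (by norm_num) tsupport_fatBump_subset he a r

theorem exists_lintegral_sqSum_sideOp_rpow_le {s : ℝ} (hs : 1 < s) :
    ∃ C : ℝ≥0∞, C ≠ ∞ ∧ ∀ (S V : Type) [Fintype S] [Fintype V] [DecidableEq S] (n : ℕ)
      (L : Layout S V n) (W : ℕ) (f : ℝ → ℂ), MemL1L2 f →
      ∫⁻ x, sqSum (L.sideOp W f) x ^ s ≤ C * ∫⁻ x, (‖f x‖ₑ ^ 2) ^ s := by
  obtain ⟨C₁, hC₁, hsynth⟩ := exists_lintegral_sqSum_sum_symOp_rpow_le isSymbol_fatBump hs 5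
  obtain ⟨C₂, hC₂, hrubio⟩ := exists_rubioDeFrancia isSymbol_bump hs 6
  refine ⟨C₁ * C₂, by finiteness, fun S V _ _ _ n L W f hf => ?_⟩
  have hself : ∀ (v : V × Bool) (d : Fin W),
      symOp (dil fatBump (endpt (L.lo v.1) (L.hi v.1) v.2)
        (signedLen (L.lo v.1) (L.hi v.1) v.2 * 2 ^ (-((d : ℕ) : ℤ))))
          (symOp (L.part (v.1, v.2, d)) f) = symOp (L.part (v.1, v.2, d)) f := fun v d =>
    symOp_symOp_eq_self (L.isSymbol_part _) hf (dil_fatBump_mul_piece v.2 d)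
  have hpieces : ∫⁻ x,
      (∑ v : V × Bool, sqSum (fun d : Fin W => symOp (L.part (v.1, v.2, d)) f) x) ^ s ≤
      C₂ * ∫⁻ x, (‖f x‖ₑ ^ 2) ^ s := by
    simpa only [sqSum, Fintype.sum_prod_type] using! hrubio (V × Bool × Fin W) L.center L.width
      L.width_ne_zero (L.overlapLE_freqSet_part W) f hf
  have hsides := hsynth (V × Bool) (Fin W) (fun d => -((d : ℕ) : ℤ))
    (fun v => endpt (L.lo v.1) (L.hi v.1) v.2) (fun v => signedLen (L.lo v.1) (L.hi v.1) v.2)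
    injective_neg_fin_coe (fun v => signedLen_ne_zero (L.lo_lt_hi _) _)
    (fun v => overlapLE_freqSet_fatBump injective_neg_fin_coe _ _)
    (fun v d => symOp (L.part (v.1, v.2, d)) f) fun v d => L.memL1L2_symOp_part hf _
  simp only [hself] at hsides
  grw [hpieces, ← mul_assoc] at hsides
  exact hsides

theorem exists_lintegral_sqSum_sum_blockOp_rpow_le {s : ℝ} (hs : 1 < s) :
    ∃ C : ℝ≥0∞, C ≠ ∞ ∧ ∀ (S V : Type) [Fintype S] [Fintype V] [DecidableEq S] (n : ℕ)
      (L : Layout S V n) (c : V → ℂ) (W : ℕ) (f : ℝ → ℂ), MemL1L2 f →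
      ∫⁻ x, sqSum (fun b x => ∑ k, L.blockOp c W f b k x) x ^ s ≤
        C * ∫⁻ x, (∑ b, sqSum (L.blockOp c W f b) x) ^ s := by
  obtain ⟨C, hC, hsynth⟩ := exists_lintegral_sqSum_sum_symOp_rpow_le isSymbol_fatBump hs 5
  refine ⟨C, hC, fun S V _ _ _ n L c W f hf => ?_⟩
  have hblocks := hsynth Bool S L.scale (fun _ => 0) L.unit L.scale_injective L.unit_ne_zero
    (fun b => overlapLE_freqSet_fatBump L.scale_injective _ _) (L.blockOp c W f)
    (L.memL1L2_blockOp hf)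
  simpa only [L.symOp_dil_fatBump_blockOp hf] using hblocks

theorem exists_lintegral_symOp_symbol_sq_rpow_le {s : ℝ} (hs : 1 < s) :
    ∃ C : ℝ≥0∞, C ≠ ∞ ∧ ∀ (S V : Type) [Fintype S] [Fintype V] [DecidableEq S] (n : ℕ)
      (L : Layout S V n) (c : V → ℂ) (A : ℝ≥0∞), A ≠ ∞ → (∀ v, ‖c v‖ₑ ≤ A) → ∀ (W : ℕ) (f : ℝ → ℂ),
      MemL1L2 f → ∫⁻ x, (‖symOp (L.symbol c W) f x‖ₑ ^ 2) ^ s ≤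
        C * (n * A ^ 2) ^ s * ∫⁻ x, (‖f x‖ₑ ^ 2) ^ s := by
  obtain ⟨C₁, hC₁, hblocks⟩ := exists_lintegral_sqSum_sum_blockOp_rpow_le hs
  obtain ⟨C₂, hC₂, hsides⟩ := exists_lintegral_sqSum_sideOp_rpow_le hs
  have hs₀ : 0 ≤ s := by linarith
  refine ⟨2 ^ s * (C₁ * (2 ^ s * C₂)), by finiteness, fun S V _ _ _ n L c A hA hc W f hf => ?_⟩
  calc _ ≤ ∫⁻ x, 2 ^ s * sqSum (fun b x => ∑ k, L.blockOp c W f b k x) x ^ s := by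
        refine lintegral_mono fun x => ?_
        rw [← ENNReal.mul_rpow_of_nonneg _ _ hs₀]
        exact ENNReal.rpow_le_rpow (L.enorm_symOp_symbol_sq_le hf x) hs₀
    _ = 2 ^ s * ∫⁻ x, sqSum (fun b x => ∑ k, L.blockOp c W f b k x) x ^ s :=
        lintegral_const_mul' _ _ (by finiteness)
    _ ≤ 2 ^ s * (C₁ * ∫⁻ x, (∑ b, sqSum (L.blockOp c W f b) x) ^ s) := by
        grw [hblocks S V n L c W f hf]
    _ ≤ 2 ^ s * (C₁ * ∫⁻ x, (2 * (n * A ^ 2)) ^ s * sqSum (L.sideOp W f) x ^ s) := by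
        gcongr with x
        rw [← ENNReal.mul_rpow_of_nonneg _ _ hs₀]
        exact ENNReal.rpow_le_rpow (L.sum_sqSum_blockOp_le hc x) hs₀
    _ = 2 ^ s * (C₁ * ((2 * (n * A ^ 2)) ^ s * ∫⁻ x, sqSum (L.sideOp W f) x ^ s)) := by
        rw [lintegral_const_mul' _ _ (by finiteness)]
    _ ≤ 2 ^ s * (C₁ * ((2 * (n * A ^ 2)) ^ s * (C₂ * ∫⁻ x, (‖f x‖ₑ ^ 2) ^ s))) := by
        grw [hsides S V n L W f hf]
    _ = _ := by
        rw [ENNReal.mul_rpow_of_nonneg 2 _ hs₀]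
        ring

/-! ### Interpolation -/

section Marcinkiewicz

variable {α β E F : Type*} [MeasurableSpace α] [MeasurableSpace β] [NormedAddCommGroup E]
  [NormedAddCommGroup F] {μ : Measure α} {ν : Measure β} {N : (α → E) → Prop}
  {T : (α → E) → β → F} {r p P : ℝ} {B D K : ℝ≥0∞} {f : α → E}

lemma measure_ofReal_lt_half_le (hr : 0 < r) (hP : 0 < P)
    (hind : ∀ f s, N f → MeasurableSet s → N (s.indicator f))
    (hmeas : ∀ f, N f → AEMeasurable (fun x => ‖T f x‖ₑ) ν)
    (hadd : ∀ f g, N f → N g → ∀ x, ‖T (f + g) x‖ₑ ≤ ‖T f x‖ₑ + ‖T g x‖ₑ)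
    (hB : ∀ f, N f → ∫⁻ x, ‖T f x‖ₑ ^ r ∂ν ≤ B * ∫⁻ x, ‖f x‖ₑ ^ r ∂μ)
    (hD : ∀ f, N f → ∫⁻ x, ‖T f x‖ₑ ^ P ∂ν ≤ D * ∫⁻ x, ‖f x‖ₑ ^ P ∂μ)
    (hf : N f) {S : Set α} (hS : MeasurableSet S) {l : ℝ} (hl : 0 < l) :
    ν {x | ENNReal.ofReal l < ‖T f x‖ₑ / 2} ≤
      ENNReal.ofReal (l ^ (-r)) * (B * ∫⁻ x in S, ‖f x‖ₑ ^ r ∂μ) +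
      ENNReal.ofReal (l ^ (-P)) * (D * ∫⁻ x in Sᶜ, ‖f x‖ₑ ^ P ∂μ) := by
  have hpiece {s : ℝ} (hs : 0 < s) {M : ℝ≥0∞}
      (hM : ∀ f, N f → ∫⁻ x, ‖T f x‖ₑ ^ s ∂ν ≤ M * ∫⁻ x, ‖f x‖ₑ ^ s ∂μ) {U : Set α}
      (hU : MeasurableSet U) : ν {x | ENNReal.ofReal l < ‖T (U.indicator f) x‖ₑ} ≤
        ENNReal.ofReal (l ^ (-s)) * (M * ∫⁻ x in U, ‖f x‖ₑ ^ s ∂μ) := by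
    have hpow : (fun x => ‖U.indicator f x‖ₑ ^ s) = U.indicator fun x => ‖f x‖ₑ ^ s := by
      ext x
      by_cases hx : x ∈ U <;> simp [hx, hs]
    grw [measure_ofReal_lt_le (hmeas _ (hind f U hf hU)) hs hl, hM _ (hind f U hf hU), hpow,
      lintegral_indicator hU]
  have hsub : {x | ENNReal.ofReal l < ‖T f x‖ₑ / 2} ⊆
      {x | ENNReal.ofReal l < ‖T (S.indicator f) x‖ₑ} ∪
        {x | ENNReal.ofReal l < ‖T (Sᶜ.indicator f) x‖ₑ} := by
    intro x hx
    by_contra! hle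
    simp only [Set.mem_union, Set.mem_ofPred_eq, not_or, not_lt] at hle hx
    refine hx.not_ge ?_
    rw [ENNReal.div_le_iff two_ne_zero ENNReal.ofNat_ne_top, mul_two,
      ← Set.indicator_self_add_compl S f]
    exact (hadd _ _ (hind f S hf hS) (hind f _ hf hS.compl) x).trans (add_le_add hle.1 hle.2)
  grw [measure_mono hsub, measure_union_le, hpiece hr hB hS, hpiece hP hD hS.compl]

variable [SFinite μ]

lemma ofReal_rpow_sub_one_mul_ofReal_rpow_neg {l : ℝ} (hl : 0 < l) (hp : 0 < p) {c d : ℝ}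
    (hd : 0 < d) (h : c = p - 1 - r) :
    ENNReal.ofReal (p * l ^ (p - 1)) * ENNReal.ofReal (l ^ (-r)) =
      ENNReal.ofReal (p / d) * ENNReal.ofReal (d * l ^ c) := by
  rw [← ENNReal.ofReal_mul (by positivity), ← ENNReal.ofReal_mul (by positivity), h,
    Real.rpow_sub hl (p - 1), Real.rpow_neg hl.le]
  congr 1
  field_simp

lemma lintegral_setLIntegral_lt_mul_eq (hr : 0 ≤ r) (hrp : r < p)
    (hf : Measurable fun x => ‖f x‖ₑ) :
    ∫⁻ l in Set.Ioi (0 : ℝ), ENNReal.ofReal ((p - r) * l ^ (p - r - 1)) *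
        ∫⁻ x in {x | ENNReal.ofReal l < ‖f x‖ₑ * K}, ‖f x‖ₑ ^ r ∂μ =
      K ^ (p - r) * ∫⁻ x, ‖f x‖ₑ ^ p ∂μ := by
  rw [← lintegral_mul_rpow_eq_lintegral_setLIntegral (sub_pos.2 hrp) (by fun_prop) (by fun_prop),
    ← lintegral_const_mul _ (by fun_prop)]
  congr 1 with x
  rw [ENNReal.mul_rpow_of_nonneg _ _ (sub_pos.2 hrp).le, ← mul_assoc,
    ← ENNReal.rpow_add_of_nonneg _ _ hr (sub_pos.2 hrp).le, add_sub_cancel, mul_comm]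

lemma lintegral_setLIntegral_le_mul_le (hp : 0 < p) (hpP : p < P) (hK : K ≠ 0)
    (hf : Measurable fun x => ‖f x‖ₑ) :
    ∫⁻ l in Set.Ioi (0 : ℝ), ENNReal.ofReal ((P - p) * l ^ (p - P - 1)) *
        ∫⁻ x in {x | ‖f x‖ₑ * K ≤ ENNReal.ofReal l}, ‖f x‖ₑ ^ P ∂μ ≤
      K ^ (p - P) * ∫⁻ x, ‖f x‖ₑ ^ p ∂μ := by
  have hpow (x : α) : ‖f x‖ₑ ^ P * (‖f x‖ₑ * K) ^ (p - P) = K ^ (p - P) * ‖f x‖ₑ ^ p := by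
    rcases eq_or_ne (f x) 0 with hx | hx
    · simp [hx, hp, hp.trans hpP]
    have hx : ‖f x‖ₑ ≠ 0 := enorm_ne_zero.2 hx
    rw [ENNReal.mul_rpow_of_ne_zero hx hK, ← mul_assoc, ← ENNReal.rpow_add _ _ hx enorm_ne_top,
      add_sub_cancel, mul_comm]
  have := lintegral_setLIntegral_le_lintegral_mul_rpow (μ := μ) (H := fun x => ‖f x‖ₑ ^ P)
    (sub_neg.2 hpP) (by fun_prop) (hf.mul_const K)
  simpa only [neg_sub, hpow, lintegral_const_mul _ (hf.pow_const p)] using this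

variable [SFinite ν]

-- The truncation height `K` is left free; it is optimized in terms of `n` below.
theorem lintegral_rpow_le_of_strongType (hr : 0 < r) (hrp : r < p) (hpP : p < P) (hK : K ≠ 0)
    (hBtop : B ≠ ∞) (hDtop : D ≠ ∞) (hfm : Measurable fun x => ‖f x‖ₑ)
    (hind : ∀ f s, N f → MeasurableSet s → N (s.indicator f))
    (hmeas : ∀ f, N f → Measurable fun x => ‖T f x‖ₑ)
    (hadd : ∀ f g, N f → N g → ∀ x, ‖T (f + g) x‖ₑ ≤ ‖T f x‖ₑ + ‖T g x‖ₑ)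
    (hB : ∀ f, N f → ∫⁻ x, ‖T f x‖ₑ ^ r ∂ν ≤ B * ∫⁻ x, ‖f x‖ₑ ^ r ∂μ)
    (hD : ∀ f, N f → ∫⁻ x, ‖T f x‖ₑ ^ P ∂ν ≤ D * ∫⁻ x, ‖f x‖ₑ ^ P ∂μ) (hf : N f) :
    ∫⁻ x, ‖T f x‖ₑ ^ p ∂ν ≤
      2 ^ p * (ENNReal.ofReal (p / (p - r)) * B * K ^ (p - r) +
        ENNReal.ofReal (p / (P - p)) * D * K ^ (p - P)) * ∫⁻ x, ‖f x‖ₑ ^ p ∂μ := by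
  have hp : 0 < p := hr.trans hrp
  have hlevel (l : ℝ) : MeasurableSet {x | ENNReal.ofReal l < ‖f x‖ₑ * K} :=
    measurableSet_lt measurable_const (hfm.mul_const K)
  have hcompl (l : ℝ) : {x | ENNReal.ofReal l < ‖f x‖ₑ * K}ᶜ =
      {x | ‖f x‖ₑ * K ≤ ENNReal.ofReal l} := by
    ext; simp
  have hanti : Antitone fun l => ∫⁻ x in {x | ENNReal.ofReal l < ‖f x‖ₑ * K}, ‖f x‖ₑ ^ r ∂μ :=
    fun l l' h => lintegral_mono_set fun x hx => (ENNReal.ofReal_le_ofReal h).trans_lt hx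
  have hhalf : ∫⁻ x, ‖T f x‖ₑ ^ p ∂ν = 2 ^ p * ∫⁻ x, (‖T f x‖ₑ / 2) ^ p ∂ν := by
    rw [← lintegral_const_mul_rpow ((hmeas f hf).div_const 2) hp.le]
    simp only [ENNReal.mul_div_cancel two_ne_zero ENNReal.ofNat_ne_top]
  rw [hhalf, lintegral_rpow_eq_lintegral_measure_lt hp ((hmeas f hf).div_const 2), mul_assoc]
  refine mul_le_mul_right ?_ _
  calc _ ≤ ∫⁻ l in Set.Ioi (0 : ℝ), (ENNReal.ofReal (p / (p - r)) * B *
          (ENNReal.ofReal ((p - r) * l ^ (p - r - 1)) *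
            ∫⁻ x in {x | ENNReal.ofReal l < ‖f x‖ₑ * K}, ‖f x‖ₑ ^ r ∂μ) +
          ENNReal.ofReal (p / (P - p)) * D * (ENNReal.ofReal ((P - p) * l ^ (p - P - 1)) *
            ∫⁻ x in {x | ‖f x‖ₑ * K ≤ ENNReal.ofReal l}, ‖f x‖ₑ ^ P ∂μ)) := by
        refine setLIntegral_mono' measurableSet_Ioi fun l (hl : 0 < l) => ?_
        grw [measure_ofReal_lt_half_le hr (hp.trans hpP) hind (fun f h => (hmeas f h).aemeasurable)
          hadd hB hD hf (hlevel l) hl, hcompl]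
        rw [mul_add, ← mul_assoc, ← mul_assoc (ENNReal.ofReal (p * l ^ (p - 1))),
          ofReal_rpow_sub_one_mul_ofReal_rpow_neg hl hp (sub_pos.2 hrp) (sub_right_comm p r 1),
          ofReal_rpow_sub_one_mul_ofReal_rpow_neg hl hp (sub_pos.2 hpP) (sub_right_comm p P 1),
          mul_mul_mul_comm, mul_mul_mul_comm (ENNReal.ofReal (p / (P - p)))]
    _ ≤ _ := by
        rw [lintegral_add_left (by have := hanti.measurable; fun_prop),
          lintegral_const_mul' _ _ (by finiteness), lintegral_const_mul' _ _ (by finiteness),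
          lintegral_setLIntegral_lt_mul_eq hr.le hrp hfm, add_mul]
        grw [lintegral_setLIntegral_le_mul_le hp hpP hK hfm]
        simp only [mul_assoc, le_refl]

end Marcinkiewicz

lemma exists_lt_mul_sub_two_le {p q : ℝ} (hp : 2 < p) (hpq : 1 / 2 - 1 / p < 1 / q) :
    ∃ P, p < P ∧ P / (2 * (P - 2)) * (p - 2) ≤ p / q := by
  have hgap : 0 < p / q - (p - 2) / 2 := by
    have := mul_lt_mul_of_pos_left hpq (show 0 < p by linarith)
    rw [mul_sub, mul_one_div_cancel (by linarith), mul_one_div, mul_one_div] at this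
    linarith
  obtain ⟨P, hP, hle⟩ : ∃ P, p < P ∧ 2 * (p / q) ≤ P * (p / q - (p - 2) / 2) := by
    refine ⟨max (p + 1) (2 * (p / q) / (p / q - (p - 2) / 2)), lt_max_of_lt_left (by linarith), ?_⟩
    rw [← div_le_iff₀ hgap]
    exact le_max_right _ _
  refine ⟨P, hP, ?_⟩
  rw [div_mul_eq_mul_div, div_le_iff₀ (by linarith)]
  linarith

lemma natCast_rpow_mul_truncation_rpow {n : ℕ} (hn : 0 < n) {p P : ℝ} (hP : 2 < P) :
    (n : ℝ≥0∞) ^ (P / 2) * ((n : ℝ≥0∞) ^ (P / (2 * (P - 2)))) ^ (p - P) =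
      ((n : ℝ≥0∞) ^ (P / (2 * (P - 2)))) ^ (p - 2) := by
  have hP2 : P - 2 ≠ 0 := by linarith
  rw [← ENNReal.rpow_mul, ← ENNReal.rpow_mul,
    ← ENNReal.rpow_add _ _ (by simpa using hn.ne') (ENNReal.natCast_ne_top n)]
  congr 1
  field_simp
  ring

theorem exists_lintegral_symOp_symbol_rpow_le_of_two_lt {p q : ℝ} (hp : 2 < p)
    (hpq : 1 / 2 - 1 / p < 1 / q) :
    ∃ C : ℝ≥0∞, C ≠ ∞ ∧ ∀ (S V : Type) [Fintype S] [Fintype V] [DecidableEq S] (n : ℕ)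
      (L : Layout S V n) (c : V → ℂ), 0 < n → (∀ v, ‖c v‖ₑ ≤ 1) → ∀ (W : ℕ) (f : ℝ → ℂ),
      MemL1L2 f → ∫⁻ x, ‖symOp (L.symbol c W) f x‖ₑ ^ p ≤
        C * (n : ℝ≥0∞) ^ (p / q) * ∫⁻ x, ‖f x‖ₑ ^ p := by
  obtain ⟨P, hP, hpP⟩ := exists_lt_mul_sub_two_le hp hpq
  obtain ⟨C, hC, hbound⟩ := exists_lintegral_symOp_symbol_sq_rpow_le (s := P / 2) (by linarith)
  have : 0 ≤ p := by linarith
  refine ⟨2 ^ p * (ENNReal.ofReal (p / (p - 2)) * 6 ^ 2 + ENNReal.ofReal (p / (P - p)) * C),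
    by finiteness, fun S V _ _ _ n L c hn hc W f hf => ?_⟩
  have hsq (z : ℂ) : (‖z‖ₑ ^ 2) ^ (P / 2) = ‖z‖ₑ ^ P := by
    rw [← ENNReal.rpow_natCast, ← ENNReal.rpow_mul, Nat.cast_ofNat,
      mul_div_cancel₀ P two_ne_zero]
  have hχ := L.isSymbol_symbol c W
  set K : ℝ≥0∞ := (n : ℝ≥0∞) ^ (P / (2 * (P - 2))) with hK
  have hKp : K ^ (p - 2) ≤ (n : ℝ≥0∞) ^ (p / q) := by
    rw [hK, ← ENNReal.rpow_mul]
    exact ENNReal.rpow_le_rpow_of_exponent_le (by exact_mod_cast hn) hpP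
  have hinterp := lintegral_rpow_le_of_strongType (N := MemL1L2) (T := symOp (L.symbol c W))
    (B := 6 ^ 2) (D := C * n ^ (P / 2)) (K := K) two_pos hp hP (by simp [hK, hn.ne'])
    (by finiteness) (by finiteness) hf.measurable.enorm (fun _ _ hg => hg.indicator)
    (fun g hg => (continuous_symOp hχ hg).measurable.enorm)
    (fun g h hg hh x => (congrArg _ (symOp_add_right hχ hg hh x)).trans_le (enorm_add_le _ _))
    (fun g hg => by simpa using L.lintegral_symOp_symbol_sq_le hc W hg)
    (fun g hg => by simpa [hsq] using hbound S V n L c 1 ENNReal.one_ne_top hc W g hg) hf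
  calc _ ≤ _ := hinterp
    _ = 2 ^ p * (ENNReal.ofReal (p / (p - 2)) * 6 ^ 2 * K ^ (p - 2) +
          ENNReal.ofReal (p / (P - p)) * C * (n ^ (P / 2) * K ^ (p - P))) *
            ∫⁻ x, ‖f x‖ₑ ^ p := by
        simp only [mul_assoc]
    _ = 2 ^ p * (ENNReal.ofReal (p / (p - 2)) * 6 ^ 2 + ENNReal.ofReal (p / (P - p)) * C) *
          K ^ (p - 2) * ∫⁻ x, ‖f x‖ₑ ^ p := by
        rw [natCast_rpow_mul_truncation_rpow hn (hp.trans hP), ← add_mul, ← mul_assoc]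
    _ ≤ _ := by grw [hKp]

/-! ### Duality -/

section DualTest

variable {α : Type*} [MeasurableSpace α] {μ : Measure α} {u : α → ℂ} {s : Set α} {p p' : ℝ}

lemma enorm_mul_norm_rpow_sub_two (hp : 1 < p) (z : ℂ) :
    ‖z * ((‖z‖ ^ (p - 2) : ℝ) : ℂ)‖ₑ = ‖z‖ₑ ^ (p - 1) := by
  rcases eq_or_ne z 0 with rfl | hz
  · simp [hp]
  have hz : 0 < ‖z‖ := norm_pos_iff.2 hz
  rw [← ofReal_norm, ← ofReal_norm, ENNReal.ofReal_rpow_of_pos hz, norm_mul, Complex.norm_real,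
    Real.norm_of_nonneg (by positivity), show p - 1 = 1 + (p - 2) by ring, Real.rpow_add hz,
    Real.rpow_one]

lemma mul_conj_mul_norm_rpow_sub_two (hp : p ≠ 0) (z : ℂ) :
    z * starRingEnd ℂ (z * ((‖z‖ ^ (p - 2) : ℝ) : ℂ)) = ((‖z‖ ^ p : ℝ) : ℂ) := by
  rcases eq_or_ne z 0 with rfl | hz
  · simp [hp]
  rw [map_mul, Complex.conj_ofReal, ← mul_assoc, Complex.mul_conj, ← Complex.ofReal_mul,
    Complex.normSq_eq_norm_sq, ← Real.rpow_natCast, ← Real.rpow_add (norm_pos_iff.2 hz)]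
  norm_num

/-- The function on `s` that extremizes Hölder's inequality against `u` in `L^p`. -/
noncomputable def dualTest (p : ℝ) (u : α → ℂ) (s : Set α) : α → ℂ :=
  s.indicator fun x => u x * ((‖u x‖ ^ (p - 2) : ℝ) : ℂ)

lemma measurable_dualTest (hu : Measurable u) (hs : MeasurableSet s) :
    Measurable (dualTest p u s) := by
  have : Measurable fun x => u x * ((‖u x‖ ^ (p - 2) : ℝ) : ℂ) := by fun_prop
  exact this.indicator hs

lemma memLp_restrict_of_enorm_le (hu : Measurable u) {b : ℝ≥0∞} (hb : b ≠ ∞)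
    (hle : ∀ x, ‖u x‖ₑ ≤ b) (hμ : μ s ≠ ∞) (r : ℝ≥0∞) : MemLp u r (μ.restrict s) :=
  have : IsFiniteMeasure (μ.restrict s) := ⟨by simpa using hμ.lt_top⟩
  .of_enorm_bound hu.aestronglyMeasurable hb (.of_forall hle)

lemma memLp_dualTest (hp : 1 < p) (hu : Measurable u) {b : ℝ≥0∞} (hb : b ≠ ∞)
    (hle : ∀ x, ‖u x‖ₑ ≤ b) (hs : MeasurableSet s) (hμ : μ s ≠ ∞) (r : ℝ≥0∞) :
    MemLp (dualTest p u s) r μ := by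
  have hp₁ : 0 ≤ p - 1 := by linarith
  refine (memLp_indicator_iff_restrict hs).2 (memLp_restrict_of_enorm_le (b := b ^ (p - 1))
    (by fun_prop) (by finiteness) (fun x => ?_) hμ r)
  rw [enorm_mul_norm_rpow_sub_two hp]
  exact ENNReal.rpow_le_rpow (hle x) hp₁

lemma lintegral_enorm_dualTest_rpow (hpp : p.HolderConjugate p') (hs : MeasurableSet s) :
    ∫⁻ x, ‖dualTest p u s x‖ₑ ^ p' ∂μ = ∫⁻ x in s, ‖u x‖ₑ ^ p ∂μ := by
  rw [← lintegral_indicator hs]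
  congr 1 with x
  by_cases hx : x ∈ s
  · rw [dualTest, Set.indicator_of_mem hx, Set.indicator_of_mem hx,
      enorm_mul_norm_rpow_sub_two hpp.lt, ← ENNReal.rpow_mul, hpp.sub_one_mul_conj]
  · simp [dualTest, hx, hpp.symm.pos]

lemma enorm_integral_mul_conj_dualTest (hp : 0 < p) (hs : MeasurableSet s)
    (hu : IntegrableOn (fun x => ‖u x‖ ^ p) s μ) :
    ‖∫ x, u x * starRingEnd ℂ (dualTest p u s x) ∂μ‖ₑ = ∫⁻ x in s, ‖u x‖ₑ ^ p ∂μ := by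
  have hprod : (fun x => u x * starRingEnd ℂ (dualTest p u s x)) =
      s.indicator fun x => ((‖u x‖ ^ p : ℝ) : ℂ) := by
    ext x
    by_cases hx : x ∈ s
    · rw [dualTest, Set.indicator_of_mem hx, Set.indicator_of_mem hx,
        mul_conj_mul_norm_rpow_sub_two hp.ne']
    · simp [dualTest, hx]
  have hnonneg (x : α) : 0 ≤ ‖u x‖ ^ p := by positivity
  rw [hprod, integral_indicator hs, integral_complex_ofReal, ← ofReal_norm, Complex.norm_real,
    Real.norm_of_nonneg (integral_nonneg hnonneg),
    ofReal_integral_eq_lintegral_ofReal hu (.of_forall hnonneg)]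
  simp only [← ENNReal.ofReal_rpow_of_nonneg (norm_nonneg _) hp.le, ofReal_norm]

lemma le_rpow_sub_one_mul_of_le (hpp : p.HolderConjugate p') {X Y D : ℝ≥0∞} (hX : X ≠ ∞)
    (h : X ≤ Y ^ (1 / p) * (D * X) ^ (1 / p')) : X ≤ D ^ (p - 1) * Y := by
  have hp := hpp.pos
  have hp' := hpp.symm.pos
  rcases eq_or_ne X 0 with rfl | hX₀
  · exact zero_le
  have hsum : 1 / p + 1 / p' = 1 := by simpa only [one_div] using hpp.inv_add_inv_eq_one
  have hcancel : X ^ (1 / p) ≤ Y ^ (1 / p) * D ^ (1 / p') := by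
    have h₀ : X ^ (1 / p') ≠ 0 := by simp [hX₀, hX]
    have ht : X ^ (1 / p') ≠ ∞ := by simp [hX₀, hX]
    rw [← ENNReal.mul_le_mul_iff_left h₀ ht, ← ENNReal.rpow_add _ _ hX₀ hX, hsum,
      ENNReal.rpow_one, mul_assoc, ← ENNReal.mul_rpow_of_nonneg _ _ (by positivity)]
    exact h
  have hexp : 1 / p' * p = p - 1 := by rw [← hpp.div_conj_eq_sub_one]; ring
  have hpow := ENNReal.rpow_le_rpow hcancel hp.le
  rwa [ENNReal.mul_rpow_of_nonneg _ _ hp.le, ← ENNReal.rpow_mul, ← ENNReal.rpow_mul,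
    ← ENNReal.rpow_mul, one_div_mul_cancel hp.ne', hexp, ENNReal.rpow_one, ENNReal.rpow_one,
    mul_comm] at hpow

end DualTest

section Adjoint

variable {χ f g : ℝ → ℂ}

lemma fourier_conj (u : ℝ → ℂ) (x : ℝ) :
    𝓕 (fun y => starRingEnd ℂ (u y)) x = starRingEnd ℂ (𝓕⁻ u x) := by
  rw [Real.fourier_eq', Real.fourierInv_eq', ← integral_conj]
  congr 1 with y
  simp only [smul_eq_mul, map_mul, ← Complex.exp_conj]
  congr 2
  simp [show (starRingEnd ℂ) 2 = 2 from Complex.conj_ofNat 2]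

lemma IsSymbol.conj (hχ : IsSymbol χ) : IsSymbol fun ξ => starRingEnd ℂ (χ ξ) :=
  ⟨Complex.conjCLE.contDiff.comp hχ.smooth, hχ.compact.comp_left (map_zero _)⟩

lemma MemL1L2.conj (hf : MemL1L2 f) : MemL1L2 fun x => starRingEnd ℂ (f x) where
  measurable := Complex.continuous_conj.measurable.comp hf.measurable
  integrable := Complex.conjCLE.integrable_comp_iff.2 hf.integrable
  memLp := hf.memLp.star

lemma integral_fourier_mul (hf : Integrable f) (hg : Integrable g) :
    ∫ ξ, 𝓕 f ξ * g ξ = ∫ x, f x * 𝓕 g x := by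
  simpa [flip_innerₗ] using! VectorFourier.integral_fourierIntegral_smul_eq_flip (L := innerₗ ℝ)
    (μ := volume) (ν := volume) Real.continuous_fourierChar (by fun_prop) hf hg

lemma integral_symOp_mul_conj (hχ : IsSymbol χ) (hf : MemL1L2 f) (hg : MemL1L2 g) :
    ∫ x, symOp χ f x * starRingEnd ℂ (g x) =
      ∫ x, f x * starRingEnd ℂ (symOp (fun ξ => starRingEnd ℂ (χ ξ)) g x) := by
  calc _ = ∫ x, 𝓕 (fun ξ => χ ξ * 𝓕 f ξ) x * starRingEnd ℂ (g (-x)) := by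
        rw [← integral_neg_eq_self]
        simp [symOp, Real.fourierInv_eq_fourier_neg]
    _ = ∫ ξ, χ ξ * 𝓕 f ξ * 𝓕 (fun x => starRingEnd ℂ (g (-x))) ξ :=
        integral_fourier_mul (hχ.memL1L2_mul hf).integrable hg.conj.integrable.comp_neg
    _ = ∫ ξ, 𝓕 f ξ * starRingEnd ℂ (starRingEnd ℂ (χ ξ) * 𝓕 g ξ) := by
        congr 1 with ξ
        rw [fourier_conj (fun x => g (-x)) ξ, Real.fourierInv_eq_fourier_comp_neg]
        simp only [neg_neg, map_mul, Complex.conj_conj]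
        ring
    _ = ∫ x, f x * 𝓕 (fun ξ => starRingEnd ℂ (starRingEnd ℂ (χ ξ) * 𝓕 g ξ)) x :=
        integral_fourier_mul hf.integrable (hχ.conj.memL1L2_mul hg).conj.integrable
    _ = _ := by simp only [fourier_conj, symOp]

variable {p p' : ℝ} {D : ℝ≥0∞}

lemma setLIntegral_symOp_rpow_le_of_conj (hpp : p.HolderConjugate p') (hχ : IsSymbol χ)
    (h : ∀ g, MemL1L2 g → ∫⁻ x, ‖symOp (fun ξ => starRingEnd ℂ (χ ξ)) g x‖ₑ ^ p' ≤
      D * ∫⁻ x, ‖g x‖ₑ ^ p') (hf : MemL1L2 f) {s : Set ℝ} (hs : MeasurableSet s)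
    (hvol : volume s ≠ ∞) :
    ∫⁻ x in s, ‖symOp χ f x‖ₑ ^ p ≤ D ^ (p - 1) * ∫⁻ x, ‖f x‖ₑ ^ p := by
  have hmeas := (continuous_symOp hχ hf).measurable
  obtain ⟨b, hb⟩ := exists_norm_symOp_le χ f
  set g := dualTest p (symOp χ f) s
  have hgmem (r : ℝ≥0∞) : MemLp g r := memLp_dualTest hpp.lt hmeas ENNReal.coe_ne_top hb hs hvol r
  have hg : MemL1L2 g :=
    ⟨measurable_dualTest hmeas hs, memLp_one_iff_integrable.1 (hgmem 1), hgmem 2⟩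
  have hLp : MemLp (symOp χ f) (ENNReal.ofReal p) (volume.restrict s) :=
    memLp_restrict_of_enorm_le hmeas ENNReal.coe_ne_top hb hvol _
  have hp : ENNReal.ofReal p ≠ 0 := by simpa using hpp.pos
  have hfin := lintegral_rpow_enorm_lt_top_of_eLpNorm_lt_top hp ENNReal.ofReal_ne_top hLp.2
  have hint := hLp.integrable_norm_rpow hp ENNReal.ofReal_ne_top
  rw [ENNReal.toReal_ofReal hpp.nonneg] at hfin hint
  refine le_rpow_sub_one_mul_of_le hpp hfin.ne ?_
  calc _ = ‖∫ x, f x * starRingEnd ℂ (symOp (fun ξ => starRingEnd ℂ (χ ξ)) g x)‖ₑ := by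
        rw [← integral_symOp_mul_conj hχ hf hg,
          enorm_integral_mul_conj_dualTest hpp.pos hs hint]
    _ ≤ ∫⁻ x, ‖f x‖ₑ * ‖symOp (fun ξ => starRingEnd ℂ (χ ξ)) g x‖ₑ := by
        refine (enorm_integral_le_lintegral_enorm _).trans_eq ?_
        simp only [enorm_mul, RCLike.enorm_conj]
    _ ≤ (∫⁻ x, ‖f x‖ₑ ^ p) ^ (1 / p) *
          (∫⁻ x, ‖symOp (fun ξ => starRingEnd ℂ (χ ξ)) g x‖ₑ ^ p') ^ (1 / p') :=
        ENNReal.lintegral_mul_le_Lp_mul_Lq volume hpp hf.measurable.enorm.aemeasurable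
          (continuous_symOp hχ.conj hg).measurable.enorm.aemeasurable
    _ ≤ _ := by
        have := hpp.symm.pos
        grw [h g hg, lintegral_enorm_dualTest_rpow hpp hs]

theorem lintegral_symOp_rpow_le_of_conj (hpp : p.HolderConjugate p') (hχ : IsSymbol χ)
    (h : ∀ g, MemL1L2 g → ∫⁻ x, ‖symOp (fun ξ => starRingEnd ℂ (χ ξ)) g x‖ₑ ^ p' ≤
      D * ∫⁻ x, ‖g x‖ₑ ^ p') (hf : MemL1L2 f) :
    ∫⁻ x, ‖symOp χ f x‖ₑ ^ p ≤ D ^ (p - 1) * ∫⁻ x, ‖f x‖ₑ ^ p := by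
  rw [← setLIntegral_univ, ← iUnion_spanningSets (volume : Measure ℝ),
    setLIntegral_iUnion_of_directed _ (monotone_spanningSets volume).directed_le]
  exact iSup_le fun i => setLIntegral_symOp_rpow_le_of_conj hpp hχ h hf
    (measurableSet_spanningSets volume i) (measure_spanningSets_lt_top volume i).ne

end Adjoint

lemma Layout.conj_symbol {S V : Type} [Fintype S] [Fintype V] [DecidableEq S] {n : ℕ}
    (L : Layout S V n) (c : V → ℂ) (W : ℕ) :
    (fun ξ => starRingEnd ℂ (L.symbol c W ξ)) = L.symbol (fun v => starRingEnd ℂ (c v)) W := by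
  ext ξ
  simp only [Layout.symbol, map_sum, map_mul]
  exact Finset.sum_congr rfl fun w _ => congrArg _ (Complex.conj_ofReal _)

theorem exists_lintegral_symOp_symbol_rpow_le {p q : ℝ} (hp : 1 < p)
    (hpq : |1 / p - 1 / 2| < 1 / q) :
    ∃ C : ℝ≥0∞, C ≠ ∞ ∧ ∀ (S V : Type) [Fintype S] [Fintype V] [DecidableEq S] (n : ℕ)
      (L : Layout S V n) (c : V → ℂ), 0 < n → (∀ v, ‖c v‖ₑ ≤ 1) → ∀ (W : ℕ) (f : ℝ → ℂ),
      MemL1L2 f → ∫⁻ x, ‖symOp (L.symbol c W) f x‖ₑ ^ p ≤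
        C * (n : ℝ≥0∞) ^ (p / q) * ∫⁻ x, ‖f x‖ₑ ^ p := by
  have hq : 0 < q := one_div_pos.1 ((abs_nonneg _).trans_lt hpq)
  rw [abs_lt] at hpq
  rcases lt_trichotomy p 2 with h2 | rfl | h2
  · have hp₁ : 0 < p - 1 := by linarith
    set p' := p / (p - 1) with hp'
    have hpp : p.HolderConjugate p' := Real.HolderConjugate.conjExponent hp
    have hinv : 1 / p + 1 / p' = 1 := by simpa only [one_div] using hpp.inv_add_inv_eq_one
    obtain ⟨C, hC, hbound⟩ := exists_lintegral_symOp_symbol_rpow_le_of_two_lt (p := p') (q := q)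
      (by rw [hp', lt_div_iff₀ hp₁]; linarith) (by linarith [hpq.2])
    refine ⟨C ^ (p - 1), by finiteness, fun S V _ _ _ n L c hn hc W f hf => ?_⟩
    have hexp : p / q = p' / q * (p - 1) := by rw [hp']; field_simp
    rw [hexp, ENNReal.rpow_mul, ← ENNReal.mul_rpow_of_nonneg _ _ hp₁.le]
    refine lintegral_symOp_rpow_le_of_conj hpp (L.isSymbol_symbol c W) (fun g hg => ?_) hf
    rw [L.conj_symbol]
    exact hbound S V n L _ hn (fun v => (RCLike.enorm_conj (c v)).trans_le (hc v)) W g hg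
  · refine ⟨6 ^ 2, by finiteness, fun S V _ _ _ n L c hn hc W f hf => ?_⟩
    have hn₁ : 1 ≤ (n : ℝ≥0∞) ^ (2 / q) :=
      ENNReal.one_le_rpow (by exact_mod_cast hn) (by positivity)
    grw [← hn₁]
    simpa using L.lintegral_symOp_symbol_sq_le hc W hf
  · obtain ⟨C, hC, hbound⟩ :=
      exists_lintegral_symOp_symbol_rpow_le_of_two_lt h2 (q := q) (by linarith [hpq.1])
    exact ⟨C, hC, hbound⟩

/-! ### Refinements of the lacunary partition -/

/-- The points `ξ k ε 0 ≤ ⋯ ≤ ξ k ε n` divide each lacunary interval `[lacLo k ε, lacHi k ε)` into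
`n` subintervals, some of which may be empty. -/
structure IsRefinement (n : ℕ) (ξ : ℤ → Bool → ℕ → ℝ) : Prop where
  zero : ∀ k ε, ξ k ε 0 = lacLo k ε
  last : ∀ k ε, ξ k ε n = lacHi k ε
  step_le : ∀ k ε, ∀ i < n, ξ k ε i ≤ ξ k ε (i + 1)

/-- The function `m` is constant on each of the intervals `[ξ k ε i, ξ k ε (i + 1))`, `i < n`. -/
def IsStepOn (n : ℕ) (ξ : ℤ → Bool → ℕ → ℝ) (m : ℝ → ℂ) : Prop :=
  ∀ k ε, ∀ i < n, ∀ x ∈ Set.Ico (ξ k ε i) (ξ k ε (i + 1)),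
    ∀ y ∈ Set.Ico (ξ k ε i) (ξ k ε (i + 1)), m x = m y

lemma lacLo_lt_lacHi (k : ℤ) (ε : Bool) : lacLo k ε < lacHi k ε := by
  cases ε <;> simp [lacLo, lacHi]

lemma ne_zero_of_mem_lac {k : ℤ} {ε : Bool} {y : ℝ} (hy : y ∈ Set.Ico (lacLo k ε) (lacHi k ε)) :
    y ≠ 0 := by
  have hpow : (0 : ℝ) < 2 ^ k := by positivity
  cases ε
  · exact (hy.2.trans (neg_lt_zero.2 hpow)).ne
  · exact (hpow.trans_le hy.1).ne'

lemma exists_mem_lac {y : ℝ} (hy : y ≠ 0) : ∃ k ε, y ∈ Set.Ico (lacLo k ε) (lacHi k ε) := by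
  rcases lt_or_gt_of_ne hy with hneg | hpos
  · obtain ⟨k, hlow, hhigh⟩ := exists_mem_Ioc_zpow (neg_pos.2 hneg) one_lt_two
    exact ⟨k, false, by simpa [lacLo] using neg_le.1 hhigh, by simpa [lacHi] using lt_neg.1 hlow⟩
  · obtain ⟨k, hk⟩ := exists_mem_Ico_zpow hpos one_lt_two
    exact ⟨k, true, by simpa [lacLo, lacHi] using hk⟩

lemma eq_of_mem_lac {k k' : ℤ} {ε ε' : Bool} {y : ℝ} (h : y ∈ Set.Ico (lacLo k ε) (lacHi k ε))
    (h' : y ∈ Set.Ico (lacLo k' ε') (lacHi k' ε')) : k = k' ∧ ε = ε' := by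
  have hle {a b : ℤ} (hab : (2 : ℝ) ^ a < 2 ^ (b + 1)) : a ≤ b :=
    Int.lt_add_one_iff.1 ((zpow_lt_zpow_iff_right₀ one_lt_two).1 hab)
  have hpow : (0 : ℝ) < 2 ^ k := by positivity
  have hpow' : (0 : ℝ) < 2 ^ k' := by positivity
  cases ε <;> cases ε' <;> simp only [lacLo, lacHi, Bool.false_eq_true, if_true, if_false,
    Set.mem_Ico] at h h'
  · exact ⟨le_antisymm (hle (by linarith)) (hle (by linarith)), rfl⟩
  · linarith
  · linarith
  · exact ⟨le_antisymm (hle (by linarith)) (hle (by linarith)), rfl⟩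

namespace IsRefinement

variable {n : ℕ} {ξ : ℤ → Bool → ℕ → ℝ} {k k' : ℤ} {ε ε' : Bool} {i i' j : ℕ} {y : ℝ}

lemma pos (h : IsRefinement n ξ) : 0 < n := by
  refine Nat.pos_of_ne_zero fun hn => (lacLo_lt_lacHi 0 true).ne ?_
  rw [← h.zero, ← h.last, hn]

lemma mono (h : IsRefinement n ξ) (hij : i ≤ j) (hj : j ≤ n) : ξ k ε i ≤ ξ k ε j := by
  induction j, hij using Nat.le_induction with
  | base => exact le_rfl
  | succ j _ ih => exact (ih (by omega)).trans (h.step_le k ε j (by omega))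

lemma mem_lac (h : IsRefinement n ξ) (hi : i < n)
    (hy : y ∈ Set.Ico (ξ k ε i) (ξ k ε (i + 1))) : y ∈ Set.Ico (lacLo k ε) (lacHi k ε) := by
  rw [← h.zero, ← h.last]
  exact ⟨(h.mono (Nat.zero_le i) hi.le).trans hy.1, hy.2.trans_le (h.mono hi le_rfl)⟩

lemma exists_mem_Ioo (h : IsRefinement n ξ) (hy : y ≠ 0) (hne : ∀ k ε i, y ≠ ξ k ε i) :
    ∃ k ε, ∃ i < n, y ∈ Set.Ioo (ξ k ε i) (ξ k ε (i + 1)) := by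
  classical
  obtain ⟨k, ε, hlow, hhigh⟩ := exists_mem_lac hy
  rw [← h.zero] at hlow
  rw [← h.last] at hhigh
  have hex : ∃ j, y < ξ k ε j := ⟨n, hhigh⟩
  obtain ⟨i, hi⟩ : ∃ i, Nat.find hex = i + 1 :=
    Nat.exists_eq_succ_of_ne_zero fun hzero =>
      (hzero ▸ Nat.find_spec hex : y < ξ k ε 0).not_ge hlow
  have hin : i + 1 ≤ n := hi ▸ Nat.find_min' hex hhigh
  have hle : ξ k ε i ≤ y := not_lt.1 (Nat.find_min hex (by omega))
  exact ⟨k, ε, i, hin, lt_of_le_of_ne hle (hne k ε i).symm, hi ▸ Nat.find_spec hex⟩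

lemma eq_of_mem (h : IsRefinement n ξ) (hi : i < n) (hi' : i' < n)
    (hy : y ∈ Set.Ico (ξ k ε i) (ξ k ε (i + 1)))
    (hy' : y ∈ Set.Ico (ξ k' ε' i') (ξ k' ε' (i' + 1))) : k = k' ∧ ε = ε' ∧ i = i' := by
  obtain ⟨rfl, rfl⟩ := eq_of_mem_lac (h.mem_lac hi hy) (h.mem_lac hi' hy')
  refine ⟨rfl, rfl, ?_⟩
  rcases lt_trichotomy i i' with hlt | heq | hlt
  · exact absurd (hy.2.trans_le (h.mono hlt hi'.le)) (not_lt.2 hy'.1)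
  · exact heq
  · exact absurd (hy'.2.trans_le (h.mono hlt hi.le)) (not_lt.2 hy.1)

end IsRefinement

/-- The nonempty cells of a refinement inside the lacunary intervals `ε[2^k, 2^(k+1))`,
`|k| ≤ K`. -/
abbrev Cell (n : ℕ) (ξ : ℤ → Bool → ℕ → ℝ) (K : ℕ) : Type :=
  {v : (Bool × Finset.Icc (-(K : ℤ)) K) × Fin n // ξ v.1.2 v.1.1 v.2 < ξ v.1.2 v.1.1 (v.2 + 1)}

namespace Cell

variable {n : ℕ} {ξ : ℤ → Bool → ℕ → ℝ} {K : ℕ}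

noncomputable instance : Fintype (Cell n ξ K) := Fintype.ofFinite _

/-- The left endpoint of a cell. -/
def left (v : Cell n ξ K) : ℝ := ξ v.1.1.2 v.1.1.1 v.1.2

/-- The right endpoint of a cell. -/
def right (v : Cell n ξ K) : ℝ := ξ v.1.1.2 v.1.1.1 (v.1.2 + 1)

lemma left_lt_right (v : Cell n ξ K) : left v < right v := v.2

lemma mem_lac (h : IsRefinement n ξ) (v : Cell n ξ K) {y : ℝ}
    (hy : y ∈ Set.Ico (left v) (right v)) :
    y ∈ Set.Ico (lacLo v.1.1.2 v.1.1.1) (lacHi v.1.1.2 v.1.1.1) :=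
  h.mem_lac v.1.2.2 hy

lemma eq_of_mem_Ioo (h : IsRefinement n ξ) {v v' : Cell n ξ K} {y : ℝ}
    (hy : y ∈ Set.Ioo (left v) (right v)) (hy' : y ∈ Set.Ioo (left v') (right v')) : v = v' := by
  obtain ⟨hk, hε, hi⟩ := h.eq_of_mem v.1.2.2 v'.1.2.2 (Set.Ioo_subset_Ico_self hy)
    (Set.Ioo_subset_Ico_self hy')
  exact Subtype.ext (Prod.ext (Prod.ext hε (Subtype.ext hk)) (Fin.ext hi))

lemma card_filter_le (l : Bool × Finset.Icc (-(K : ℤ)) K) :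
    (Finset.univ.filter fun v : Cell n ξ K => v.1.1 = l).card ≤ n := by
  refine (Finset.card_le_card_of_injOn (t := (Finset.univ : Finset (Fin n))) (fun v => v.1.2)
    (fun v _ => Finset.mem_univ _) fun v hv v' hv' hindex => ?_).trans_eq (Finset.card_fin n)
  simp only [Finset.coe_filter, Finset.mem_univ, true_and, Set.mem_ofPred_eq] at hv hv'
  exact Subtype.ext (Prod.ext (hv.trans hv'.symm) hindex)

end Cell

lemma overlapLE_one_of_eq {W : Type*} [Fintype W] {S : W → Set ℝ}
    (h : ∀ x v v', x ∈ S v → x ∈ S v' → v = v') : OverlapLE S 1 := fun x => by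
  rw [Nat.cast_one]
  by_cases hx : ∃ v, x ∈ S v
  · obtain ⟨v, hv⟩ := hx
    rw [Finset.sum_eq_single_of_mem v (Finset.mem_univ v) fun v' _ hne =>
      Set.indicator_of_notMem (fun hv' => hne (h x v' v hv' hv)) _]
    exact Set.indicator_le_self' (fun _ _ => zero_le) x
  · push Not at hx
    rw [Finset.sum_eq_zero fun v _ => Set.indicator_of_notMem (hx v) _]
    exact zero_le

lemma mem_Ioo_div_two_pi {a b x : ℝ} :
    x ∈ Set.Ioo (a / (2 * Real.pi)) (b / (2 * Real.pi)) ↔ 2 * Real.pi * x ∈ Set.Ioo a b := by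
  rw [Set.mem_Ioo, Set.mem_Ioo, div_lt_iff₀' Real.two_pi_pos, lt_div_iff₀' Real.two_pi_pos]

/-- The unit of length for the lacunary intervals with sign `ε`, in the frequency variable
`ξ / 2π`. The factor `3` places them inside dilates of `[1/6, 2/3]`. -/
noncomputable def lacUnit (ε : Bool) : ℝ := if ε then 3 / (2 * Real.pi) else -(3 / (2 * Real.pi))

lemma lacUnit_ne_zero (ε : Bool) : lacUnit ε ≠ 0 := by
  cases ε <;> simp [lacUnit, Real.pi_ne_zero]

lemma div_lacUnit_mem_Icc {k : ℤ} {ε : Bool} {x : ℝ}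
    (h : 2 * Real.pi * x ∈ Set.Ico (lacLo k ε) (lacHi k ε)) :
    x / (lacUnit ε * 2 ^ k) ∈ Set.Icc (1 / 6 : ℝ) (2 / 3) := by
  have hpow : (2 : ℝ) ^ (k + 1) = 2 ^ k * 2 := zpow_add_one₀ two_ne_zero k
  have hdiv {y : ℝ} (hlow : 2 ^ k ≤ y) (hhigh : y ≤ 2 ^ k * 2) :
      y / (3 * 2 ^ k) ∈ Set.Icc (1 / 6 : ℝ) (2 / 3) := by
    have hk : (0 : ℝ) < 2 ^ k := by positivity
    rw [Set.mem_Icc, le_div_iff₀ (by positivity), div_le_iff₀ (by positivity)]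
    constructor <;> linarith
  cases ε <;> simp only [lacLo, lacHi, lacUnit, Bool.false_eq_true, if_true, if_false, Set.mem_Ico,
    hpow] at h ⊢
  · convert hdiv (y := -(2 * Real.pi * x)) (by linarith) (by linarith) using 1
    field_simp
  · convert hdiv h.1 h.2.le using 1
    field_simp

/-- The layout of the cells of a refinement, in the frequency variable `ξ / 2π`. -/
noncomputable def IsRefinement.layout {n : ℕ} {ξ : ℤ → Bool → ℕ → ℝ} (h : IsRefinement n ξ)
    (K : ℕ) : Layout (Finset.Icc (-(K : ℤ)) K) (Cell n ξ K) n where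
  scale k := k
  scale_injective := Subtype.val_injective
  unit := lacUnit
  unit_ne_zero := lacUnit_ne_zero
  block v := v.1.1
  lo v := Cell.left v / (2 * Real.pi)
  hi v := Cell.right v / (2 * Real.pi)
  lo_lt_hi v := div_lt_div_of_pos_right (Cell.left_lt_right v) Real.two_pi_pos
  card_block_le := Cell.card_filter_le
  overlapLE := overlapLE_one_of_eq fun _ _ _ hv hv' =>
    Cell.eq_of_mem_Ioo h (mem_Ioo_div_two_pi.1 hv) (mem_Ioo_div_two_pi.1 hv')
  div_mem v _ hx :=
    div_lacUnit_mem_Icc (Cell.mem_lac h v (Set.Ioo_subset_Ico_self (mem_Ioo_div_two_pi.1 hx)))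

lemma Layout.symbol_eq_of_mem {S V : Type} [Fintype S] [Fintype V] [DecidableEq S] {n : ℕ}
    (L : Layout S V n) (c : V → ℂ) (W : ℕ) {v : V} {x : ℝ}
    (hv : ∀ v', x ∈ Set.Ioo (L.lo v') (L.hi v') → v' = v) :
    L.symbol c W x = c v * ∑ b : Bool, ∑ d : Fin W, piece (L.lo v) (L.hi v) b d x := by
  simp only [symbol, Fintype.sum_prod_type, part]
  rw [Fintype.sum_eq_single v]
  · simp only [Finset.mul_sum]
  · intro v' hne
    refine Finset.sum_eq_zero fun b _ => Finset.sum_eq_zero fun d _ => ?_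
    rw [piece_eq_zero (L.lo_lt_hi v') b d fun hx => hne (hv v' hx), mul_zero]

namespace IsRefinement

variable {n : ℕ} {ξ : ℤ → Bool → ℕ → ℝ} {m : ℝ → ℂ}

/-- The smooth truncations of a step function `m` on the cells of a refinement, in the frequency
variable `ξ / 2π`. -/
noncomputable def truncation (h : IsRefinement n ξ) (m : ℝ → ℂ) (K : ℕ) : ℝ → ℂ :=
  (h.layout K).symbol (fun v => m (Cell.left v)) K

lemma tendsto_truncation (h : IsRefinement n ξ) (hm : IsStepOn n ξ m) {x : ℝ} (hx : x ≠ 0)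
    (hne : ∀ k ε i, 2 * Real.pi * x ≠ ξ k ε i) :
    Filter.Tendsto (fun K : ℕ => h.truncation m K x) Filter.atTop
      (nhds (m (2 * Real.pi * x))) := by
  obtain ⟨k, ε, i, hi, hy⟩ := h.exists_mem_Ioo (mul_ne_zero Real.two_pi_pos.ne' hx) hne
  have hlt := hy.1.trans hy.2
  have hconst := hm k ε i hi _ ⟨le_rfl, hlt⟩ _ (Set.Ioo_subset_Ico_self hy)
  have hlim := (tendsto_sum_piece (div_lt_div_of_pos_right hlt Real.two_pi_pos) x).const_mul
    (m (ξ k ε i))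
  rw [Set.indicator_of_mem (mem_Ioo_div_two_pi.2 hy), mul_one, hconst] at hlim
  refine hlim.congr' ?_
  filter_upwards [Filter.eventually_ge_atTop k.natAbs] with K hK
  let v : Cell n ξ K := ⟨((ε, ⟨k, by rw [Finset.mem_Icc]; omega⟩), ⟨i, hi⟩), hlt⟩
  rw [truncation, Layout.symbol_eq_of_mem (h.layout K) _ K (v := v) fun v' hv' =>
    Cell.eq_of_mem_Ioo h (mem_Ioo_div_two_pi.1 hv') hy, ← hconst]
  rfl

lemma ae_tendsto_truncation (h : IsRefinement n ξ) (hm : IsStepOn n ξ m) :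
    ∀ᵐ x : ℝ, Filter.Tendsto (fun K : ℕ => h.truncation m K x) Filter.atTop
      (nhds (m (2 * Real.pi * x))) := by
  have hcount : (({0} : Set ℝ) ∪ Set.range fun t : ℤ × Bool × ℕ =>
      ξ t.1 t.2.1 t.2.2 / (2 * Real.pi)).Countable :=
    (Set.countable_singleton _).union (Set.countable_range _)
  filter_upwards [hcount.ae_notMem volume] with x hx
  refine h.tendsto_truncation hm (fun h₀ => hx (Or.inl h₀)) fun k ε i heq =>
    hx (Or.inr ⟨(k, ε, i), ?_⟩)
  rw [div_eq_iff Real.two_pi_pos.ne', ← heq, mul_comm]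

lemma enorm_left_le_one (h : IsRefinement n ξ) (hm : ∀ x ≠ 0, ‖m x‖ₑ ≤ 1) {K : ℕ}
    (v : Cell n ξ K) : ‖m (Cell.left v)‖ₑ ≤ 1 :=
  hm _ (ne_zero_of_mem_lac (Cell.mem_lac h v ⟨le_rfl, Cell.left_lt_right v⟩))

lemma isSymbol_truncation (h : IsRefinement n ξ) (m : ℝ → ℂ) (K : ℕ) :
    IsSymbol (h.truncation m K) :=
  Layout.isSymbol_symbol _ _ _

lemma enorm_truncation_le (h : IsRefinement n ξ) (hm : ∀ x ≠ 0, ‖m x‖ₑ ≤ 1) (K : ℕ) (x : ℝ) :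
    ‖h.truncation m K x‖ₑ ≤ 6 := by
  simpa only [mul_one] using! (h.layout K).enorm_symbol_le (h.enorm_left_le_one hm) K x

end IsRefinement

/-! ### Passage to the limit -/

lemma tendsto_symOp {σ : ℕ → ℝ → ℂ} {μ f : ℝ → ℂ} {B : ℝ≥0∞} (hB : B ≠ ∞)
    (hσ : ∀ K, AEStronglyMeasurable (σ K)) (hσB : ∀ K ξ, ‖σ K ξ‖ₑ ≤ B)
    (hlim : ∀ᵐ ξ : ℝ, Filter.Tendsto (fun K => σ K ξ) Filter.atTop (nhds (μ ξ)))
    (hf : Integrable (𝓕 f)) (x : ℝ) :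
    Filter.Tendsto (fun K => symOp (σ K) f x) Filter.atTop (nhds (symOp μ f x)) := by
  have hexp (ξ : ℝ) : ‖cexp (2 * Real.pi * I * (ξ * x))‖ = 1 := by
    rw [show (2 * Real.pi * I * (ξ * x) : ℂ) = (2 * Real.pi * (ξ * x) : ℝ) * I by push_cast; ring,
      Complex.norm_exp_ofReal_mul_I]
  have hnorm (K : ℕ) (ξ : ℝ) : ‖σ K ξ‖ ≤ B.toReal := by
    rw [← toReal_enorm]
    exact ENNReal.toReal_mono hB (hσB K ξ)
  simp_rw [symOp_apply]
  refine tendsto_integral_of_dominated_convergence (fun ξ => B.toReal * ‖𝓕 f ξ‖) (fun K => ?_)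
    (hf.norm.const_mul _) (fun K => .of_forall fun ξ => ?_) ?_
  · exact Continuous.aestronglyMeasurable (by fun_prop) |>.mul ((hσ K).mul hf.1)
  · rw [norm_mul, norm_mul, hexp, one_mul]
    exact mul_le_mul_of_nonneg_right (hnorm K ξ) (norm_nonneg _)
  · filter_upwards [hlim] with ξ hξ
    exact (hξ.mul_const _).const_mul _

lemma eLpNorm_le_of_lintegral_rpow_le {f g : ℝ → ℂ} {p s : ℝ} {C N : ℝ≥0∞} (hp : 0 < p)
    (h : ∫⁻ x, ‖g x‖ₑ ^ p ≤ C * N ^ (p / s) * ∫⁻ x, ‖f x‖ₑ ^ p) :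
    eLpNorm g (ENNReal.ofReal p) volume ≤
      C ^ (1 / p) * N ^ (1 / s) * eLpNorm f (ENNReal.ofReal p) volume := by
  have hp₀ : ENNReal.ofReal p ≠ 0 := by simpa using hp
  have hinv : 0 ≤ 1 / p := by positivity
  rw [eLpNorm_eq_lintegral_rpow_enorm_toReal hp₀ ENNReal.ofReal_ne_top,
    eLpNorm_eq_lintegral_rpow_enorm_toReal hp₀ ENNReal.ofReal_ne_top, ENNReal.toReal_ofReal hp.le]
  refine (ENNReal.rpow_le_rpow h hinv).trans_eq ?_
  rw [ENNReal.mul_rpow_of_nonneg _ _ hinv, ENNReal.mul_rpow_of_nonneg _ _ hinv, ← ENNReal.rpow_mul]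
  congr 3
  field_simp

theorem exists_eLpNorm_symOp_step_le {p q : ℝ} (hp : 1 < p) (hpq : |1 / p - 1 / 2| < 1 / q) :
    ∃ C : ℝ≥0∞, C ≠ ∞ ∧ ∀ {n : ℕ} {ξ : ℤ → Bool → ℕ → ℝ} {m f : ℝ → ℂ}, IsRefinement n ξ →
      IsStepOn n ξ m → (∀ x ≠ 0, ‖m x‖ₑ ≤ 1) → MemL1L2 f → Integrable (𝓕 f) →
      eLpNorm (symOp (fun η => m (2 * Real.pi * η)) f) (ENNReal.ofReal p) volume ≤
        C * (n : ℝ≥0∞) ^ (1 / q) * eLpNorm f (ENNReal.ofReal p) volume := by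
  have hp₀ : 0 < p := one_pos.trans hp
  obtain ⟨C, hC, hbound⟩ := exists_lintegral_symOp_symbol_rpow_le hp hpq
  refine ⟨C ^ (1 / p), by finiteness, fun {n ξ m f} href hstep hm hf hf' => ?_⟩
  have hsymbol := href.isSymbol_truncation m
  refine Lp.eLpNorm_le_of_ae_tendsto (u := Filter.atTop)
    (f := fun K => symOp (href.truncation m K) f) (.of_forall fun K => ?_)
    (fun K => (continuous_symOp (hsymbol K) hf).aestronglyMeasurable)
    (.of_forall (tendsto_symOp (by norm_num) (fun K => (hsymbol K).continuous.aestronglyMeasurable)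
      (href.enorm_truncation_le hm) (href.ae_tendsto_truncation hstep) hf'))
  exact eLpNorm_le_of_lintegral_rpow_le hp₀
    (hbound _ _ n _ _ href.pos (href.enorm_left_le_one hm) K f hf)

lemma ft_two_pi_mul (f : ℝ → ℂ) (η : ℝ) : ft f (2 * Real.pi * η) = 𝓕 f η := by
  rw [ft, Real.fourier_real_eq_integral_exp_smul]
  congr 1 with x
  rw [smul_eq_mul, mul_comm]
  congr 2
  push_cast
  ring

lemma multOp_eq_smul_symOp (m f : ℝ → ℂ) :
    multOp m f = (2 * Real.pi) • symOp (fun η => m (2 * Real.pi * η)) f := by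
  funext x
  have hscale := Measure.integral_comp_mul_left
    (fun ξ : ℝ => m ξ * ft f ξ * cexp (I * (ξ : ℂ) * (x : ℂ))) (2 * Real.pi)
  rw [abs_of_pos (inv_pos.2 Real.two_pi_pos), eq_inv_smul_iff₀ Real.two_pi_pos.ne'] at hscale
  rw [multOp, ← hscale, Pi.smul_apply, symOp_apply]
  congr 2 with η
  rw [ft_two_pi_mul, mul_comm]
  congr 2
  push_cast
  ring

lemma multOp_eq_smul_of_norm_le {m : ℝ → ℂ} {A : ℝ} (hA : ∀ x ≠ 0, ‖m x‖ ≤ A) (f : ℝ → ℂ) :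
    multOp m f = A • multOp (fun x => m x / A) f := by
  funext x
  rw [Pi.smul_apply, multOp, multOp, ← integral_smul]
  refine integral_congr_ae ?_
  filter_upwards [(Set.countable_singleton (0 : ℝ)).ae_notMem volume] with ξ hξ
  have hm : m ξ / A * A = m ξ := div_mul_cancel_of_imp fun hA₀ =>
    norm_le_zero_iff.1 ((hA ξ hξ).trans_eq (ofReal_eq_zero.1 hA₀))
  nth_rw 1 [← hm]
  rw [real_smul]
  ring

end Lacunary

theorem lacunary_refined_step_multiplier_general {p q : ℝ} (hp : 1 < p)
    (hpq : |1 / p - 1 / 2| < 1 / q) :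
    ∃ C : ℝ, 0 < C ∧ ∀ {n : ℕ} {ξ : ℤ → Bool → ℕ → ℝ} {m f : ℝ → ℂ} {A : ℝ},
      Lacunary.IsRefinement n ξ → Lacunary.IsStepOn n ξ m → (∀ x : ℝ, x ≠ 0 → ‖m x‖ ≤ A) →
      Lacunary.MemL1L2 f → Integrable (FourierTransform.fourier f) →
      eLpNorm (multOp m f) (ENNReal.ofReal p) volume ≤
        ENNReal.ofReal (C * (n : ℝ) ^ (1 / q) * A) * eLpNorm f (ENNReal.ofReal p) volume := by
  obtain ⟨C, hC, hbound⟩ := Lacunary.exists_eLpNorm_symOp_step_le hp hpq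
  obtain ⟨D, hD, hCD⟩ : ∃ D : ℝ, 0 < D ∧ C ≤ ENNReal.ofReal D :=
    ⟨C.toReal + 1, by positivity, (ENNReal.le_ofReal_iff_toReal_le hC (by positivity)).2 (by simp)⟩
  have hpi := Real.two_pi_pos
  have hq : 0 ≤ 1 / q := (abs_nonneg _).trans hpq.le
  refine ⟨2 * Real.pi * D, by positivity, fun {n ξ m f A} href hstep hA hf hf' => ?_⟩
  have hA₀ : 0 ≤ A := (norm_nonneg _).trans (hA 1 one_ne_zero)
  have hdiv (x : ℝ) (hx : x ≠ 0) : ‖m x / A‖ₑ ≤ 1 := by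
    rw [← ofReal_norm, norm_div, norm_real, Real.norm_of_nonneg hA₀, ENNReal.ofReal_le_one]
    exact div_le_one_of_le₀ (hA x hx) hA₀
  have hstep' : Lacunary.IsStepOn n ξ fun x => m x / A := fun k ε i hi x hx y hy =>
    congrArg (· / (A : ℂ)) (hstep k ε i hi x hx y hy)
  have hconst : ENNReal.ofReal (2 * Real.pi * D * (n : ℝ) ^ (1 / q) * A) =
      ENNReal.ofReal A * (ENNReal.ofReal (2 * Real.pi) *
        (ENNReal.ofReal D * (n : ℝ≥0∞) ^ (1 / q))) := by
    rw [← ENNReal.ofReal_natCast, ENNReal.ofReal_rpow_of_nonneg n.cast_nonneg hq,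
      ← ENNReal.ofReal_mul hD.le, ← ENNReal.ofReal_mul hpi.le, ← ENNReal.ofReal_mul hA₀]
    congr 1
    ring
  rw [Lacunary.multOp_eq_smul_of_norm_le hA, Lacunary.multOp_eq_smul_symOp, eLpNorm_const_smul,
    eLpNorm_const_smul, Real.enorm_of_nonneg hA₀, Real.enorm_of_nonneg hpi.le, hconst, mul_assoc,
    mul_assoc (ENNReal.ofReal (2 * Real.pi))]
  grw [hbound href hstep' hdiv hf hf', hCD]

/-- **The key decoupling estimate for step multipliers adapted to a refinement
`D_n` of the lacunary partition `Δ`.**  Suppose each lacunary interval `ε[2^k,2^{k+1})`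
is partitioned into at most `n` subintervals (with division points
`lacLo = ξ_0 ≤ ξ_1 ≤ ⋯ ≤ ξ_n = lacHi`) and `m` is constant on each subinterval, with
all its values bounded by `A`.  Then for `1 < p, q < ∞` with `|1/p − 1/2| < 1/q`,
`‖A_m f‖_p ≤ C_{p,q} n^{1/q} A ‖f‖_p` for Schwartz `f`, with `C_{p,q}` independent
of `n`, the partition, and the coefficients. -/
theorem lacunary_refined_step_multiplier (p q : ℝ) (hp : 1 < p) (hq : 1 < q)
    (hpq : |1/p - 1/2| < 1/q) :
    ∃ C : ℝ, 0 < C ∧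
      ∀ n : ℕ, 0 < n →
      ∀ m : ℝ → ℂ, Measurable m →
        (∀ (k : ℤ) (ε : Bool), ∃ ξ : ℕ → ℝ,
          ξ 0 = lacLo k ε ∧ ξ n = lacHi k ε ∧ (∀ i < n, ξ i ≤ ξ (i + 1)) ∧
          ∀ i < n, ∀ x ∈ Set.Ico (ξ i) (ξ (i + 1)), ∀ y ∈ Set.Ico (ξ i) (ξ (i + 1)),
            m x = m y) →
      ∀ A : ℝ, (∀ x : ℝ, x ≠ 0 → ‖m x‖ ≤ A) →
      ∀ f : SchwartzMap ℝ ℂ,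
        eLpNorm (multOp m (⇑f)) (ENNReal.ofReal p) volume
          ≤ ENNReal.ofReal (C * (n : ℝ) ^ (1/q) * A) *
              eLpNorm (⇑f) (ENNReal.ofReal p) volume := by
  obtain ⟨C, hC, hbound⟩ := lacunary_refined_step_multiplier_general hp hpq
  refine ⟨C, hC, fun n _ m _ hm A hA f => ?_⟩
  choose ξ hzero hlast hle hstep using hm
  exact hbound ⟨hzero, hlast, hle⟩ hstep hA ⟨f.continuous.measurable, f.integrable, f.memLp 2⟩
    (SchwartzMap.fourier_coe f ▸ (FourierTransform.fourier f).integrable)
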